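/- Let p ∈ (0,1) be fixed. For each n, let d(n) ∈ ℕ and α = α(n) ∈ ℝ^{d(n)} be a vector of nonnegative entries. If (‖α‖₂/‖α‖₃)⁶ / n³ → 0 as n → ∞, then the total variation distance between the distribution of the Erdős–Rényi random graph G(n,p) and the distribution of the anisotropic random geometric graph G(n,p,α) converges to 1. -/

import Mathlib

open MeasureTheory ProbabilityTheory Real Filter
open scoped Classical ENNReal NNReal

noncomputable section

/-- Euclidean inner product on `Fin d → ℝ`. -/
def dotp {d : ℕ} (x y : Fin d → ℝ) : ℝ := ∑ i, x i * y i

/-- The `q`-norm of a vector `α ∈ ℝ^d`. -/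
def nrm {d : ℕ} (q : ℕ) (α : Fin d → ℝ) : ℝ := (∑ i, α i ^ q) ^ ((1 : ℝ) / q)

/-- The centered Gaussian measure `N(0, D_α)` on `ℝ^d`, `D_α = diag α`. -/
def gaussPi (d : ℕ) (α : Fin d → ℝ) : Measure (Fin d → ℝ) :=
  Measure.pi fun i => gaussianReal 0 (Real.toNNReal (α i))

/-- The law of `n` i.i.d. samples from `N(0, D_α)`. -/
def sampleMeasure (n d : ℕ) (α : Fin d → ℝ) : Measure (Fin n → Fin d → ℝ) :=
  Measure.pi fun _ => gaussPi d α

/-- `t` is the `p`-th upper quantile of `⟨X₁, X₂⟩` for `X₁, X₂` i.i.d. `N(0, D_α)`. -/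
def IsThreshold (d : ℕ) (α : Fin d → ℝ) (p t : ℝ) : Prop :=
  ((gaussPi d α).prod (gaussPi d α)) {xy | t ≤ dotp xy.1 xy.2} = ENNReal.ofReal p

instance (n : ℕ) : MeasurableSpace (SimpleGraph (Fin n)) := ⊤

/-- The anisotropic random geometric graph `G(n, p, α)`, with threshold `t = t_{p,α}`. -/
def geomGraph (n d : ℕ) (α : Fin d → ℝ) (t : ℝ) : Measure (SimpleGraph (Fin n)) :=
  Measure.map (fun X => SimpleGraph.fromRel fun i j => t ≤ dotp (X i) (X j))
    (sampleMeasure n d α)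

/-- The Erdős–Rényi random graph `G(n, p)`. -/
def erGraph (n : ℕ) (p : ℝ) : Measure (SimpleGraph (Fin n)) :=
  Measure.map (fun x => SimpleGraph.fromRel fun i j => x s(i, j) ≤ p)
    (Measure.pi fun _ : Sym2 (Fin n) => volume.restrict (Set.Icc (0 : ℝ) 1))

/-- Total variation distance between two measures. -/
def tvDist {Ω : Type*} [MeasurableSpace Ω] (μ ν : Measure Ω) : ℝ :=
  ⨆ s : {s : Set Ω // MeasurableSet s}, |(μ s.1).toReal - (ν s.1).toReal|


/-- standard normal density -/
def phi (s : ℝ) : ℝ := (√(2 * π))⁻¹ * Real.exp (-s ^ 2 / 2)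

/-- standard normal upper tail -/
def Phib (s : ℝ) : ℝ := (gaussianReal 0 1).real (Set.Ici s)

lemma phi_eq_pdf (s : ℝ) : gaussianPDFReal 0 1 s = phi s := by
  simp [gaussianPDFReal, phi]

lemma phi_eq_pdf' : gaussianPDFReal 0 1 = phi := funext phi_eq_pdf

lemma phi_pos (s : ℝ) : 0 < phi s := by unfold phi; positivity

lemma inv_sqrt_two_pi_le : (√(2 * π))⁻¹ ≤ 1 := by
  apply inv_le_one_of_one_le₀
  rw [Real.one_le_sqrt]
  linarith [Real.pi_gt_three]

lemma phi_le_one (s : ℝ) : phi s ≤ 1 := by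
  unfold phi
  have h : Real.exp (-s ^ 2 / 2) ≤ 1 := by
    rw [Real.exp_le_one_iff]; nlinarith [sq_nonneg s]
  have := inv_sqrt_two_pi_le
  have h3 : 0 < (√(2 * π))⁻¹ := by positivity
  have h4 := Real.exp_pos (-s ^ 2 / 2)
  nlinarith

lemma phi_hasDerivAt (s : ℝ) : HasDerivAt phi (-s * phi s) s := by
  unfold phi
  have h : HasDerivAt (fun s : ℝ => -s ^ 2 / 2) (-s) s := by
    have := ((hasDerivAt_pow 2 s).neg).div_const 2
    convert! this using 1
    simp; ring
  convert! (h.exp).const_mul ((√(2 * π))⁻¹) using 1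
  ring

lemma abs_mul_phi_le (s : ℝ) : |s| * phi s ≤ 1 := by
  unfold phi
  have h1 : |s| ≤ Real.exp (s ^ 2 / 2) := by
    have := Real.add_one_le_exp (s ^ 2 / 2)
    have h2 : |s| ^ 2 = s ^ 2 := sq_abs s
    nlinarith [sq_nonneg (|s| - 1)]
  have h2 : |s| * Real.exp (-s ^ 2 / 2) ≤ 1 := by
    have : Real.exp (s ^ 2 / 2) * Real.exp (-s ^ 2 / 2) = 1 := by
      rw [← Real.exp_add]; ring_nf; simp
    calc _ ≤ Real.exp (s ^ 2 / 2) * Real.exp (-s ^ 2 / 2) := by gcongr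
      _ = 1 := this
  have h3 : 0 < (√(2 * π))⁻¹ := by positivity
  have h4 := inv_sqrt_two_pi_le
  have h5 : 0 ≤ |s| * Real.exp (-s ^ 2 / 2) := by positivity
  nlinarith

lemma phi_lip (a b : ℝ) : |phi a - phi b| ≤ |a - b| := by
  have := Convex.norm_image_sub_le_of_norm_hasDerivWithin_le (f := phi) (f' := fun s => -s * phi s)
    (s := Set.univ) (C := 1) (x := b) (y := a)
    (fun x _ => (phi_hasDerivAt x).hasDerivWithinAt)
    (fun x _ => by
      rw [Real.norm_eq_abs, abs_mul, abs_neg, abs_of_pos (phi_pos x)]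
      exact abs_mul_phi_le x) convex_univ (Set.mem_univ _) (Set.mem_univ _)
  simpa using this

lemma phi_continuous : Continuous phi := by
  unfold phi; fun_prop

lemma phi_integrable : Integrable phi := by
  rw [← phi_eq_pdf']; exact integrable_gaussianPDFReal 0 1

lemma Phib_eq (s : ℝ) : Phib s = ∫ x in Set.Ioi s, phi x := by
  unfold Phib
  rw [Measure.real, gaussianReal_apply_eq_integral _ one_ne_zero, ENNReal.toReal_ofReal,
    integral_Ici_eq_integral_Ioi, phi_eq_pdf']
  exact setIntegral_nonneg measurableSet_Ici (fun x _ => gaussianPDFReal_nonneg _ _ _)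

lemma Phib_sub (a b : ℝ) : Phib a - Phib b = ∫ x in a..b, phi x := by
  rw [Phib_eq, Phib_eq]
  exact (intervalIntegral.integral_Ioi_sub_Ioi' phi_integrable.integrableOn phi_integrable.integrableOn)

lemma Phib_lip (a b : ℝ) : |Phib a - Phib b| ≤ |a - b| := by
  rw [Phib_sub]
  have := intervalIntegral.norm_integral_le_of_norm_le_const (f := phi) (a := a) (b := b) (C := 1)
    (fun x _ => by rw [Real.norm_eq_abs, abs_of_pos (phi_pos x)]; exact phi_le_one x)
  rw [abs_sub_comm a b]
  simpa using this

lemma Phib_taylor (s u : ℝ) : |Phib (s - u) - Phib s - phi s * u| ≤ u ^ 2 := by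
  have h : Phib (s - u) - Phib s - phi s * u = ∫ x in (s - u)..s, (phi x - phi s) := by
    rw [Phib_sub, intervalIntegral.integral_sub
      (phi_continuous.intervalIntegrable _ _) (by simp)]
    simp; ring
  rw [h]
  have := intervalIntegral.norm_integral_le_of_norm_le_const (f := fun x => phi x - phi s)
    (a := s - u) (b := s) (C := |u|)
    (fun x hx => by
      refine (phi_lip x s).trans ?_
      rcases le_total 0 u with hu | hu
      · rw [Set.uIoc_of_le (by linarith)] at hx
        rw [abs_of_nonneg hu, abs_le]; constructor <;> linarith [hx.1, hx.2]
      · rw [Set.uIoc_of_ge (by linarith)] at hx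
        rw [abs_of_nonpos hu, abs_le]; constructor <;> linarith [hx.1, hx.2])
  rw [Real.norm_eq_abs] at this
  refine this.trans (le_of_eq ?_)
  rw [sub_sub_cancel, ← sq, sq_abs]

lemma Phib_nonneg (s : ℝ) : 0 ≤ Phib s := measureReal_nonneg
lemma Phib_le_one (s : ℝ) : Phib s ≤ 1 := measureReal_le_one

lemma gaussian_scale {σ : ℝ} :
    gaussianReal 0 (Real.toNNReal (σ ^ 2)) = (gaussianReal 0 1).map (fun x => σ * x) := by
  rw [gaussianReal_map_const_mul]
  congr 1
  · simp
  · rw [mul_one]; ext; simp [sq_nonneg]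

lemma gaussian_tail {σ : ℝ} (hσ : 0 < σ) (t : ℝ) :
    (gaussianReal 0 (Real.toNNReal (σ ^ 2))).real (Set.Ici t) = Phib (t / σ) := by
  rw [gaussian_scale, Measure.real, Measure.map_apply (by fun_prop) measurableSet_Ici]
  unfold Phib Measure.real
  congr 2
  ext x
  simp [div_le_iff₀' hσ]

lemma integral_Ici_phi (a : ℝ) : ∫ x in Set.Ici a, x ∂(gaussianReal 0 1) = phi a := by
  have h0 : Tendsto phi atTop (nhds 0) := by
    have h1 : Tendsto (fun s : ℝ => Real.exp (-s ^ 2 / 2)) atTop (nhds 0) := by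
      apply Real.tendsto_exp_atBot.comp
      have : Tendsto (fun s : ℝ => s ^ 2 / 2) atTop atTop :=
        (tendsto_pow_atTop two_ne_zero).atTop_div_const (by norm_num)
      refine (tendsto_neg_atTop_atBot.comp this).congr (fun x => ?_)
      simp; ring
    have := h1.const_mul ((√(2 * π))⁻¹)
    rw [mul_zero] at this
    exact this
  rw [← integral_indicator measurableSet_Ici, integral_gaussianReal_eq_integral_smul one_ne_zero,
    phi_eq_pdf']
  have hInt0 : Integrable (fun x : ℝ => x * phi x) := by
    have h := (memLp_id_gaussianReal (μ := 0) (v := 1) 1).integrable le_rfl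
    rw [gaussianReal_of_var_ne_zero _ one_ne_zero,
      integrable_withDensity_iff_integrable_smul' (measurable_gaussianPDF _ _)
        (ae_of_all _ fun _ ↦ gaussianPDF_lt_top)] at h
    refine h.congr (ae_of_all _ fun x => ?_)
    simp only [toReal_gaussianPDF, phi_eq_pdf, id, smul_eq_mul]
    ring
  have : (fun x => phi x • (Set.Ici a).indicator (fun x => x) x)
      = (Set.Ici a).indicator (fun x => x * phi x) := by
    ext x; by_cases hx : x ∈ Set.Ici a <;> simp [hx, mul_comm]
  rw [this, integral_indicator measurableSet_Ici, integral_Ici_eq_integral_Ioi]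
  have := integral_Ioi_of_hasDerivAt_of_tendsto' (f := fun x => - phi x) (f' := fun x => x * phi x)
    (a := a) (m := 0) (fun x _ => by
      have := (phi_hasDerivAt x).neg; convert! this using 1; ring) hInt0.integrableOn
      (by simpa using h0.neg)
  rw [this]; ring

lemma gaussian_first {σ : ℝ} (hσ : 0 < σ) (t : ℝ) :
    ∫ x, x * (Set.Ici t).indicator 1 x ∂(gaussianReal 0 (Real.toNNReal (σ ^ 2))) = σ * phi (t / σ) := by
  rw [gaussian_scale, integral_map (by fun_prop)
    (by
      apply Measurable.aestronglyMeasurable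
      exact measurable_id.mul (measurable_one.indicator measurableSet_Ici))]
  rw [← integral_Ici_phi, ← integral_indicator measurableSet_Ici, ← integral_const_mul]
  congr 1
  ext x
  simp only [Set.indicator, Set.mem_Ici, div_le_iff₀' hσ, Pi.one_apply]
  split_ifs <;> ring

lemma gaussian_integral_zero (v : ℝ≥0) : ∫ x, x ∂(gaussianReal 0 v) = 0 := integral_id_gaussianReal

lemma gaussian_memLp (v : ℝ≥0) (k : ℕ) : MemLp (fun x : ℝ => x) k (gaussianReal 0 v) := by
  have := memLp_id_gaussianReal (μ := 0) (v := v) k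
  exact_mod_cast this

lemma gaussian_integrable_pow (v : ℝ≥0) (k : ℕ) : Integrable (fun x : ℝ => x ^ k) (gaussianReal 0 v) := by
  rcases Nat.eq_zero_or_pos k with rfl | hk
  · simp
  have := (gaussian_memLp v k).integrable_norm_pow hk.ne'
  refine (integrable_norm_iff (by fun_prop)).1 ?_
  simpa using this

lemma gaussian_second (v : ℝ≥0) : ∫ x, x ^ 2 ∂(gaussianReal 0 v) = v := by
  have := variance_fun_id_gaussianReal (μ := 0) (v := v)
  rw [variance_eq_integral (by fun_prop), gaussian_integral_zero] at this
  simpa using this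

/-- fourth moment of standard gaussian -/
def kap : ℝ := ∫ x, x ^ 4 ∂(gaussianReal 0 1)

lemma kap_nonneg : 0 ≤ kap := integral_nonneg (fun x => by positivity)

lemma gaussian_fourth {v : ℝ} (hv : 0 ≤ v) :
    ∫ x, x ^ 4 ∂(gaussianReal 0 (Real.toNNReal v)) = kap * v ^ 2 := by
  have : v = (√v) ^ 2 := (Real.sq_sqrt hv).symm
  conv_lhs => rw [this]
  rw [gaussian_scale, integral_map (by fun_prop) (by fun_prop)]
  simp_rw [mul_pow]
  rw [integral_const_mul, mul_comm]
  unfold kap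
  congr 1
  calc √v ^ 4 = (√v ^ 2) ^ 2 := by ring
    _ = v ^ 2 := by rw [← this]

/-- the bilinear form of the covariance -/
def bil {d : ℕ} (α a b : Fin d → ℝ) : ℝ := ∑ i, α i * a i * b i

instance gaussPi_prob (d : ℕ) (α : Fin d → ℝ) : IsProbabilityMeasure (gaussPi d α) := by
  unfold gaussPi; infer_instance

lemma dotp_meas {d : ℕ} : Measurable (fun xy : (Fin d → ℝ) × (Fin d → ℝ) => dotp xy.1 xy.2) := by
  unfold dotp; fun_prop

lemma dotp_meas_right {d : ℕ} (a : Fin d → ℝ) : Measurable (dotp a) := by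
  unfold dotp; fun_prop

lemma dotp_comm {d : ℕ} (a b : Fin d → ℝ) : dotp a b = dotp b a := by
  unfold dotp; simp_rw [mul_comm]

lemma bil_comm {d : ℕ} (α a b : Fin d → ℝ) : bil α a b = bil α b a := by
  unfold bil; refine Finset.sum_congr rfl fun i _ => by ring

lemma gauss_id (d : ℕ) (α : Fin d → ℝ) :
    HasGaussianLaw (fun z : Fin d → ℝ => z) (gaussPi d α) := by
  have h : iIndepFun (fun (i : Fin d) (z : Fin d → ℝ) => z i) (gaussPi d α) :=
    iIndepFun_pi (X := fun _ x => x) (fun i => by fun_prop)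
  refine iIndepFun.hasGaussianLaw (X := fun (i : Fin d) (z : Fin d → ℝ) => z i) ?_ h
  intro i
  refine ⟨?_⟩
  have := (measurePreserving_eval (fun i => gaussianReal 0 (Real.toNNReal (α i))) i).map_eq
  have e : (gaussPi d α).map (fun z => z i) = gaussianReal 0 (Real.toNNReal (α i)) := this
  rw [e]
  infer_instance

/-- `dotp a` as a continuous linear map -/
def dotL {d : ℕ} (a : Fin d → ℝ) : (Fin d → ℝ) →L[ℝ] ℝ :=
  ∑ i, a i • ContinuousLinearMap.proj (R := ℝ) (φ := fun _ : Fin d => ℝ) i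

lemma dotL_apply {d : ℕ} (a z : Fin d → ℝ) : dotL a z = dotp a z := by
  simp [dotL, dotp]

lemma gauss_pair {d : ℕ} (α a b : Fin d → ℝ) :
    HasGaussianLaw (fun z => (dotp a z, dotp b z)) (gaussPi d α) := by
  have := (gauss_id d α).map_fun ((dotL a).prod (dotL b))
  simpa [dotL_apply] using this

lemma gauss_coord_mem {d : ℕ} (α : Fin d → ℝ) (i : Fin d) (k : ℕ) :
    MemLp (fun z : Fin d → ℝ => z i) k (gaussPi d α) :=
  (gaussian_memLp _ k).comp_measurePreserving
    (measurePreserving_eval (fun i => gaussianReal 0 (Real.toNNReal (α i))) i)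

lemma gauss_coord_integral {d : ℕ} (α : Fin d → ℝ) (i : Fin d) (f : ℝ → ℝ) (hf : Measurable f) :
    ∫ z, f (z i) ∂(gaussPi d α) = ∫ x, f x ∂(gaussianReal 0 (Real.toNNReal (α i))) := by
  have h := (measurePreserving_eval (fun i => gaussianReal 0 (Real.toNNReal (α i))) i)
  rw [← h.map_eq, integral_map (measurable_pi_apply i).aemeasurable hf.aestronglyMeasurable]
  rfl

lemma gauss_coord_integrable {d : ℕ} (α : Fin d → ℝ) (i : Fin d) (k : ℕ) :
    Integrable (fun z : Fin d → ℝ => z i ^ k) (gaussPi d α) :=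
  (measurePreserving_eval (fun i => gaussianReal 0 (Real.toNNReal (α i))) i).integrable_comp_of_integrable
    (gaussian_integrable_pow _ k)

lemma dotp_memLp {d : ℕ} (α a : Fin d → ℝ) : MemLp (dotp a) 2 (gaussPi d α) := by
  have : HasGaussianLaw (dotp a) (gaussPi d α) := (gauss_pair α a a).fst
  exact this.memLp_two

lemma dotp_integral {d : ℕ} (α a : Fin d → ℝ) : ∫ z, dotp a z ∂(gaussPi d α) = 0 := by
  unfold dotp
  rw [integral_finsetSum]
  · refine Finset.sum_eq_zero fun i _ => ?_
    rw [integral_const_mul, gauss_coord_integral α i (fun x => x) measurable_id,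
      gaussian_integral_zero, mul_zero]
  · intro i _
    simpa using (gauss_coord_integrable α i 1).const_mul (a i)

lemma dotp_cov {d : ℕ} (α : Fin d → ℝ) (hα : ∀ i, 0 ≤ α i) (a b : Fin d → ℝ) :
    cov[dotp a, dotp b; gaussPi d α] = bil α a b := by
  have hm : ∀ i, MemLp (fun z : Fin d → ℝ => z i) 2 (gaussPi d α) :=
    fun i => by exact_mod_cast gauss_coord_mem α i 2
  have h : iIndepFun (fun (i : Fin d) (z : Fin d → ℝ) => z i) (gaussPi d α) :=
    iIndepFun_pi (X := fun _ x => x) (fun i => by fun_prop)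
  unfold dotp
  rw [covariance_fun_sum_fun_sum (fun i => (hm i).const_mul _) (fun i => (hm i).const_mul _)]
  unfold bil
  refine Finset.sum_congr rfl fun i _ => ?_
  rw [Finset.sum_eq_single i]
  · rw [covariance_const_mul_left, covariance_const_mul_right]
    have h1 := covariance_self (X := fun z : Fin d → ℝ => z i) (μ := gaussPi d α)
      (measurable_pi_apply i).aemeasurable
    rw [h1, variance_eq_sub (hm i)]
    have e1 : ∫ z, ((fun z : Fin d → ℝ => z i) ^ 2) z ∂(gaussPi d α) = α i := by
      have := gauss_coord_integral α i (fun x => x ^ 2) (by fun_prop)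
      rw [gaussian_second] at this
      simpa [hα i] using this
    have e2 : ∫ z : Fin d → ℝ, z i ∂(gaussPi d α) = 0 := by
      rw [gauss_coord_integral α i (fun x => x) measurable_id, gaussian_integral_zero]
    rw [e1, e2]; ring
  · intro j _ hj
    rw [covariance_const_mul_left, covariance_const_mul_right,
      (h.indepFun hj.symm).covariance_eq_zero (hm i) (hm j)]
    ring
  · simp

lemma dotp_sq_integral {d : ℕ} (α : Fin d → ℝ) (hα : ∀ i, 0 ≤ α i) (a : Fin d → ℝ) :
    ∫ z, dotp a z ^ 2 ∂(gaussPi d α) = bil α a a := by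
  have h := dotp_cov α hα a a
  rw [covariance_self (dotp_meas_right a).aemeasurable, variance_eq_sub (dotp_memLp α a),
    dotp_integral] at h
  simpa using h

lemma dotp_law {d : ℕ} (α : Fin d → ℝ) (hα : ∀ i, 0 ≤ α i) (a : Fin d → ℝ) :
    (gaussPi d α).map (dotp a) = gaussianReal 0 (Real.toNNReal (bil α a a)) := by
  have : HasGaussianLaw (dotp a) (gaussPi d α) := (gauss_pair α a a).fst
  rw [this.map_eq_gaussianReal, dotp_integral,
    ← covariance_self (dotp_meas_right a).aemeasurable, dotp_cov α hα]

lemma dotp_indep {d : ℕ} (α : Fin d → ℝ) (hα : ∀ i, 0 ≤ α i) (a b : Fin d → ℝ)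
    (h : bil α a b = 0) : IndepFun (dotp a) (dotp b) (gaussPi d α) := by
  refine (gauss_pair α a b).indepFun_of_covariance_eq_zero ?_
  rw [dotp_cov α hα, h]

lemma bil_sub_smul {d : ℕ} (α a b : Fin d → ℝ) (l : ℝ) :
    bil α a (b - l • a) = bil α a b - l * bil α a a := by
  unfold bil
  rw [Finset.mul_sum, ← Finset.sum_sub_distrib]
  refine Finset.sum_congr rfl fun i _ => ?_
  simp; ring

lemma bil_sub_smul_self {d : ℕ} (α a b : Fin d → ℝ) (l : ℝ) :
    bil α (b - l • a) (b - l • a) = bil α b b - 2 * l * bil α a b + l ^ 2 * bil α a a := by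
  unfold bil
  rw [Finset.mul_sum, Finset.mul_sum, ← Finset.sum_sub_distrib, ← Finset.sum_add_distrib]
  refine Finset.sum_congr rfl fun i _ => ?_
  simp; ring

lemma dotp_sub_smul {d : ℕ} (a b z : Fin d → ℝ) (l : ℝ) :
    dotp (b - l • a) z = dotp b z - l * dotp a z := by
  unfold dotp
  rw [Finset.mul_sum, ← Finset.sum_sub_distrib]
  refine Finset.sum_congr rfl fun i _ => ?_
  simp; ring

/-- E[⟨b,z⟩ 1(⟨a,z⟩ ≥ t)] -/
lemma dotp_half {d : ℕ} (α : Fin d → ℝ) (hα : ∀ i, 0 ≤ α i) (a b : Fin d → ℝ) {σ : ℝ}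
    (hσ : 0 < σ) (hs : bil α a a = σ ^ 2) (t : ℝ) :
    ∫ z, dotp b z * (Set.Ici t).indicator 1 (dotp a z) ∂(gaussPi d α)
      = bil α a b / σ * phi (t / σ) := by
  set l := bil α a b / σ ^ 2
  have hl : bil α a (b - l • a) = 0 := by
    rw [bil_sub_smul, hs]; simp only [l]; field_simp; ring
  have hind := dotp_indep α hα a (b - l • a) hl
  have hme : Measurable (fun x : ℝ => (Set.Ici t).indicator (1 : ℝ → ℝ) x) :=
    measurable_one.indicator measurableSet_Ici
  have hind2 : IndepFun (fun z => dotp (b - l • a) z)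
      (fun z => (Set.Ici t).indicator (1 : ℝ → ℝ) (dotp a z)) (gaussPi d α) :=
    (hind.comp (φ := fun x : ℝ => (Set.Ici t).indicator (1 : ℝ → ℝ) x) (ψ := fun x => x)
      hme measurable_id).symm
  have hbd : ∀ x : ℝ, ‖(Set.Ici t).indicator (1 : ℝ → ℝ) x‖ ≤ 1 := fun x => by
    by_cases hx : x ∈ Set.Ici t <;> simp [hx]
  have hi : ∀ c : Fin d → ℝ, Integrable (fun z => dotp c z * (Set.Ici t).indicator (1 : ℝ → ℝ) (dotp a z))
      (gaussPi d α) := fun c => by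
    refine ((dotp_memLp α c).integrable (by norm_num)).mul_bdd (c := 1) ?_ ?_
    · exact (hme.comp (dotp_meas_right a)).aestronglyMeasurable
    · exact ae_of_all _ fun z => hbd _
  have e : ∀ z, dotp b z * (Set.Ici t).indicator (1 : ℝ → ℝ) (dotp a z)
      = dotp (b - l • a) z * (Set.Ici t).indicator (1 : ℝ → ℝ) (dotp a z)
        + l * (dotp a z * (Set.Ici t).indicator (1 : ℝ → ℝ) (dotp a z)) := fun z => by
    rw [dotp_sub_smul]; ring
  simp_rw [e]
  rw [integral_add (hi _) ((hi _).const_mul _), integral_const_mul]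
  rw [hind2.integral_fun_mul_eq_mul_integral (dotp_meas_right _).aestronglyMeasurable
    (hme.comp (dotp_meas_right a)).aestronglyMeasurable, dotp_integral, zero_mul, zero_add]
  have h2 := gaussian_first hσ t
  have hm3 : Measurable (fun x : ℝ => x * (Set.Ici t).indicator (1 : ℝ → ℝ) x) :=
    measurable_id.mul hme
  rw [← hs, ← dotp_law α hα a, integral_map (dotp_meas_right a).aemeasurable
    hm3.aestronglyMeasurable] at h2
  rw [h2]
  simp only [l]; field_simp

lemma dotp_joint {d : ℕ} (α : Fin d → ℝ) (hα : ∀ i, 0 ≤ α i) (a b : Fin d → ℝ) {σ s : ℝ}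
    (hσ : 0 < σ) (hs0 : 0 < s) (hs : bil α a a = σ ^ 2)
    (hr : s ^ 2 = bil α b b - (bil α a b) ^ 2 / σ ^ 2) (t : ℝ) :
    ∫ z, (Set.Ici t).indicator (1 : ℝ → ℝ) (dotp a z) * (Set.Ici t).indicator (1 : ℝ → ℝ) (dotp b z) ∂(gaussPi d α)
      = ∫ w, (Set.Ici t).indicator (1 : ℝ → ℝ) w * Phib ((t - bil α a b / σ ^ 2 * w) / s)
        ∂(gaussianReal 0 (Real.toNNReal (σ ^ 2))) := by
  set l := bil α a b / σ ^ 2 with hldef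
  have hl : bil α a (b - l • a) = 0 := by
    rw [bil_sub_smul, hs]; simp only [l]; field_simp; ring
  have hind := dotp_indep α hα a (b - l • a) hl
  have hme : Measurable (fun x : ℝ => (Set.Ici t).indicator (1 : ℝ → ℝ) x) :=
    measurable_one.indicator measurableSet_Ici
  have hbd : ∀ x : ℝ, ‖(Set.Ici t).indicator (1 : ℝ → ℝ) x‖ ≤ 1 := fun x => by
    by_cases hx : x ∈ Set.Ici t <;> simp [hx]
  have hmap := (indepFun_iff_map_prod_eq_prod_map_map (dotp_meas_right a).aemeasurable
    (dotp_meas_right (b - l • a)).aemeasurable).1 hind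
  rw [dotp_law α hα, dotp_law α hα, hs, bil_sub_smul_self, hs] at hmap
  have hv : bil α b b - 2 * l * bil α a b + l ^ 2 * σ ^ 2 = s ^ 2 := by
    rw [hr]; simp only [l]; field_simp; ring
  rw [hv] at hmap
  have hF : Measurable (fun q : ℝ × ℝ => (Set.Ici t).indicator (1 : ℝ → ℝ) q.1 *
      (Set.Ici t).indicator (1 : ℝ → ℝ) (q.2 + l * q.1)) :=
    (hme.comp measurable_fst).mul (hme.comp (by fun_prop))
  have e1 : ∫ z, (Set.Ici t).indicator (1 : ℝ → ℝ) (dotp a z) * (Set.Ici t).indicator (1 : ℝ → ℝ) (dotp b z) ∂(gaussPi d α)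
      = ∫ q, (Set.Ici t).indicator (1 : ℝ → ℝ) q.1 *
      (Set.Ici t).indicator (1 : ℝ → ℝ) (q.2 + l * q.1) ∂((gaussianReal 0 (Real.toNNReal (σ ^ 2))).prod
        (gaussianReal 0 (Real.toNNReal (s ^ 2)))) := by
    rw [← hmap, integral_map ((dotp_meas_right a).prodMk (dotp_meas_right _)).aemeasurable
      hF.aestronglyMeasurable]
    refine integral_congr_ae (ae_of_all _ fun z => ?_)
    simp only [dotp_sub_smul]
    ring_nf
  rw [e1, integral_prod]
  · refine integral_congr_ae (ae_of_all _ fun w => ?_)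
    simp only
    rw [integral_const_mul]
    congr 1
    have h4 := gaussian_tail hs0 (t - l * w)
    rw [← h4, ← integral_indicator_one measurableSet_Ici]
    refine integral_congr_ae (ae_of_all _ fun r => ?_)
    simp only [Set.indicator, Set.mem_Ici, Pi.one_apply, sub_le_iff_le_add]
  · refine Integrable.of_bound hF.aestronglyMeasurable 1 (ae_of_all _ fun q => ?_)
    rw [norm_mul]
    exact mul_le_one₀ (hbd _) (norm_nonneg _) (hbd _)

lemma dotp_single {d : ℕ} (α : Fin d → ℝ) (hα : ∀ i, 0 ≤ α i) (a : Fin d → ℝ) {σ : ℝ}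
    (hσ : 0 < σ) (hs : bil α a a = σ ^ 2) (t : ℝ) :
    ∫ z, (Set.Ici t).indicator (1 : ℝ → ℝ) (dotp a z) ∂(gaussPi d α) = Phib (t / σ) := by
  rw [← gaussian_tail hσ t, ← hs, ← dotp_law α hα a, ← integral_indicator_one measurableSet_Ici,
    integral_map (dotp_meas_right a).aemeasurable
      (measurable_one.indicator measurableSet_Ici).aestronglyMeasurable]

/-- centred adjacency kernel -/
def kern {d : ℕ} (p t : ℝ) (x y : Fin d → ℝ) : ℝ := (Set.Ici t).indicator (1 : ℝ → ℝ) (dotp x y) - p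

/-- two-step kernel -/
def hk {d : ℕ} (α : Fin d → ℝ) (p t : ℝ) (x y : Fin d → ℝ) : ℝ :=
  ∫ z, kern p t x z * kern p t y z ∂(gaussPi d α)

lemma ind_le (t w : ℝ) : (Set.Ici t).indicator (1 : ℝ → ℝ) w ≤ 1 := by
  by_cases hx : w ∈ Set.Ici t <;> simp [hx]
lemma ind_nonneg (t w : ℝ) : 0 ≤ (Set.Ici t).indicator (1 : ℝ → ℝ) w := by
  by_cases hx : w ∈ Set.Ici t <;> simp [hx]
lemma ind_meas (t : ℝ) : Measurable (fun x : ℝ => (Set.Ici t).indicator (1 : ℝ → ℝ) x) :=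
    measurable_one.indicator measurableSet_Ici

lemma abs_one_div_sub_le {s m : ℝ} (hm : 0 < m) (hs : m ≤ s) : |1 / s - 1| ≤ |s - 1| / m := by
  have h0 : 0 < s := hm.trans_le hs
  have : 1 / s - 1 = -(s - 1) / s := by field_simp; ring
  rw [this, abs_div, abs_neg, abs_of_pos h0]
  gcongr

lemma abs_sub_one_le_sq {s : ℝ} (hs : 0 ≤ s) : |s - 1| ≤ |s ^ 2 - 1| := by
  have : s ^ 2 - 1 = (s - 1) * (s + 1) := by ring
  rw [this, abs_mul, abs_of_pos (show 0 < s + 1 by linarith)]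
  nlinarith [abs_nonneg (s - 1)]

lemma abs_mul_le_sq (a b : ℝ) : |a| * |b| ≤ a ^ 2 + b ^ 2 := by
  rw [← sq_abs a, ← sq_abs b]
  nlinarith [sq_nonneg (|a| - |b|), sq_nonneg (|a|), sq_nonneg (|b|)]

lemma core_real (B σ τ s c t : ℝ) (hB : |t| ≤ B) (h1 : 1/2 ≤ σ) (h2 : σ ≤ 2) (h3 : 1/2 ≤ τ)
    (h4 : τ ≤ 2) (hc : |c| ≤ 1/8) (hs : 0 < s) (hr : s ^ 2 = τ ^ 2 - c ^ 2 / σ ^ 2) :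
    2/5 ≤ s ∧ |Phib (t / s) - Phib (t / τ)| ≤ 25 * B * c ^ 2 ∧
    |c / (σ ^ 2 * s)| ≤ 10 * |c| ∧
    |c| * |phi (t / s) / (σ ^ 2 * s) - phi t| ≤ (175 * B + 130) * (c ^ 2 + (σ - 1) ^ 2 + (τ - 1) ^ 2) := by
  have hB0 : 0 ≤ B := (abs_nonneg t).trans hB
  have hσ2 : 1/4 ≤ σ ^ 2 := by nlinarith
  have hσ4 : σ ^ 2 ≤ 4 := by nlinarith
  have hc2 : c ^ 2 ≤ 1/64 := by rw [← sq_abs]; nlinarith [abs_nonneg c]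
  have hcσ : c ^ 2 / σ ^ 2 ≤ 4 * c ^ 2 := by
    rw [div_le_iff₀ (by positivity)]; nlinarith [sq_nonneg c]
  have hcσ0 : 0 ≤ c ^ 2 / σ ^ 2 := by positivity
  have hs25 : 2/5 ≤ s := by nlinarith
  have hs2 : s ≤ 2 := by nlinarith
  refine ⟨hs25, ?_, ?_, ?_⟩
  · refine (Phib_lip _ _).trans ?_
    have e : t / s - t / τ = t * ((c ^ 2 / σ ^ 2) / ((τ + s) * s * τ)) := by
      have : c ^ 2 / σ ^ 2 = (τ - s) * (τ + s) := by linarith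
      rw [this]; field_simp
    rw [e, abs_mul]
    have : |c ^ 2 / σ ^ 2 / ((τ + s) * s * τ)| ≤ 25 * c ^ 2 := by
      rw [abs_of_nonneg (by positivity), div_le_iff₀ (by positivity)]
      have h5 : 9/10 * (2/5) * (1/2) ≤ (τ + s) * s * τ := by
        have : 9/10 ≤ τ + s := by linarith
        gcongr
      nlinarith [sq_nonneg c]
    calc _ ≤ B * (25 * c ^ 2) := by gcongr
      _ = _ := by ring
  · rw [abs_div, abs_of_pos (show 0 < σ ^ 2 * s by positivity), div_le_iff₀ (by positivity)]
    have : 1/4 * (2/5) ≤ σ ^ 2 * s := by gcongr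
    nlinarith [abs_nonneg c]
  · have a1 : |s - 1| ≤ 3 * |τ - 1| + 4 * c ^ 2 := by
      refine (abs_sub_one_le_sq hs.le).trans ?_
      have : s ^ 2 - 1 = (τ - 1) * (τ + 1) - c ^ 2 / σ ^ 2 := by rw [hr]; ring
      rw [this]
      refine (abs_sub _ _).trans ?_
      rw [abs_mul, abs_of_pos (show 0 < τ + 1 by linarith), abs_of_nonneg hcσ0]
      nlinarith [abs_nonneg (τ - 1)]
    have a2 : |1 / s - 1| ≤ 5/2 * |s - 1| := by
      refine (abs_one_div_sub_le (by norm_num) hs25).trans (le_of_eq ?_)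
      ring
    have a3 : |phi (t / s) - phi t| ≤ B * (5/2 * |s - 1|) := by
      refine (phi_lip _ _).trans ?_
      have : t / s - t = t * (1 / s - 1) := by ring
      rw [this, abs_mul]
      gcongr
    have hq : 1/10 ≤ σ ^ 2 * s := by
      have : 1/4 * (2/5) ≤ σ ^ 2 * s := by gcongr
      linarith
    have a4 : |1 / (σ ^ 2 * s) - 1| ≤ 10 * (|s - 1| + 6 * |σ - 1|) := by
      refine (abs_one_div_sub_le (by norm_num) hq).trans ?_
      have : σ ^ 2 * s - 1 = (s - 1) + s * (σ + 1) * (σ - 1) := by ring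
      rw [this]
      have h6 : |s * (σ + 1) * (σ - 1)| ≤ 6 * |σ - 1| := by
        rw [abs_mul, abs_of_pos (show 0 < s * (σ + 1) by positivity)]
        have : s * (σ + 1) ≤ 2 * 3 := by gcongr; linarith
        gcongr; linarith
      have := abs_add_le (s - 1) (s * (σ + 1) * (σ - 1))
      linarith
    have a5 : |phi (t / s) / (σ ^ 2 * s) - phi t| ≤ 10 * (B * (5/2 * |s - 1|)) + 10 * (|s - 1| + 6 * |σ - 1|) := by
      have : phi (t / s) / (σ ^ 2 * s) - phi t = (phi (t / s) - phi t) * (1 / (σ ^ 2 * s))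
        + phi t * (1 / (σ ^ 2 * s) - 1) := by ring
      rw [this]
      refine (abs_add_le _ _).trans ?_
      rw [abs_mul, abs_mul]
      have h7 : |1 / (σ ^ 2 * s)| ≤ 10 := by
        rw [abs_of_pos (by positivity), div_le_iff₀ (by positivity)]; linarith
      have h8 : |phi t| ≤ 1 := by rw [abs_of_pos (phi_pos t)]; exact phi_le_one t
      have h9 : |phi (t / s) - phi t| * |1 / (σ ^ 2 * s)| ≤ (B * (5/2 * |s - 1|)) * 10 := by gcongr
      have h10 : |phi t| * |1 / (σ ^ 2 * s) - 1| ≤ 1 * (10 * (|s - 1| + 6 * |σ - 1|)) := by gcongr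
      linarith
    have b1 := abs_mul_le_sq c (τ - 1)
    have b2 := abs_mul_le_sq c (σ - 1)
    have b3 : |c| * c ^ 2 ≤ c ^ 2 := by nlinarith [sq_nonneg c]
    have a6 : |c| * |s - 1| ≤ 7 * (c ^ 2 + (σ - 1) ^ 2 + (τ - 1) ^ 2) := by
      have : |c| * |s - 1| ≤ |c| * (3 * |τ - 1| + 4 * c ^ 2) := by gcongr
      nlinarith [sq_nonneg (σ - 1), sq_nonneg (τ - 1), sq_nonneg c]
    calc |c| * |phi (t / s) / (σ ^ 2 * s) - phi t|
        ≤ |c| * (10 * (B * (5/2 * |s - 1|)) + 10 * (|s - 1| + 6 * |σ - 1|)) := by gcongr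
      _ = (25 * B + 10) * (|c| * |s - 1|) + 60 * (|c| * |σ - 1|) := by ring
      _ ≤ (25 * B + 10) * (7 * (c ^ 2 + (σ - 1) ^ 2 + (τ - 1) ^ 2)) + 60 * (c ^ 2 + (σ - 1) ^ 2 + (τ - 1) ^ 2) := by
          gcongr
          nlinarith [sq_nonneg (τ - 1)]
      _ = _ := by ring

lemma phi_scale (B σ t : ℝ) (hB : |t| ≤ B) (hσ : 0 < σ) :
    |σ * phi (t / σ) - phi t| ≤ (1 + B) * |σ - 1| := by
  have : σ * phi (t / σ) - phi t = (σ - 1) * phi t + σ * (phi (t / σ) - phi t) := by ring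
  rw [this]
  refine (abs_add_le _ _).trans ?_
  rw [abs_mul, abs_mul, abs_of_pos (phi_pos t), abs_of_pos hσ]
  have v1 := phi_lip (t / σ) t
  have v2 : t / σ - t = t * (1 - σ) / σ := by field_simp
  have v3 : σ * |phi (t / σ) - phi t| ≤ B * |σ - 1| := by
    calc _ ≤ σ * |t / σ - t| := by gcongr
      _ = |t| * |σ - 1| := by
        rw [v2, abs_div, abs_mul, abs_of_pos hσ, abs_sub_comm 1 σ]; field_simp
      _ ≤ _ := by gcongr
  have v4 := phi_le_one t
  have v5 : |σ - 1| * phi t ≤ |σ - 1| * 1 := by gcongr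
  linarith

set_option maxHeartbeats 1000000 in
/-- expansion of the one-dimensional integral -/
lemma core_J (B σ τ s c t : ℝ) (hB : |t| ≤ B) (h1 : 1/2 ≤ σ) (h2 : σ ≤ 2) (h3 : 1/2 ≤ τ)
    (h4 : τ ≤ 2) (hc : |c| ≤ 1/8) (hs : 0 < s) (hr : s ^ 2 = τ ^ 2 - c ^ 2 / σ ^ 2) :
    |(∫ w, (Set.Ici t).indicator (1 : ℝ → ℝ) w * Phib ((t - c / σ ^ 2 * w) / s)
        ∂(gaussianReal 0 (Real.toNNReal (σ ^ 2)))) - Phib (t / σ) * Phib (t / τ) - phi t ^ 2 * c|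
      ≤ (400 + 5 * (175 * B + 130) + 25 * B + (1 + 2 * B)) * (c ^ 2 + (σ - 1) ^ 2 + (τ - 1) ^ 2) := by
  obtain ⟨k1, k2, k3, k4⟩ := core_real B σ τ s c t hB h1 h2 h3 h4 hc hs hr
  have hσ : 0 < σ := by linarith
  have hB0 : 0 ≤ B := (abs_nonneg t).trans hB
  set D := c ^ 2 + (σ - 1) ^ 2 + (τ - 1) ^ 2 with hD
  have hcD : c ^ 2 ≤ D := by rw [hD]; nlinarith [sq_nonneg (σ - 1), sq_nonneg (τ - 1)]
  set N := gaussianReal 0 (Real.toNNReal (σ ^ 2)) with hN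
  set C1 := 175 * B + 130
  set e : ℝ → ℝ := fun w => Phib ((t - c / σ ^ 2 * w) / s) - Phib (t / s) - phi t * c * w with he
  have hPm : Measurable Phib := by
    have : LipschitzWith 1 Phib := LipschitzWith.of_dist_le_mul (fun x y => by
      simpa [Real.dist_eq] using Phib_lip x y)
    exact this.continuous.measurable
  have hem : Measurable e := by
    have : Measurable (fun w : ℝ => Phib ((t - c / σ ^ 2 * w) / s)) := hPm.comp (by fun_prop)
    fun_prop
  have hebd : ∀ w, |e w| ≤ 100 * D * w ^ 2 + C1 * D * (1 + w ^ 2) := fun w => by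
    set u := c / (σ ^ 2 * s) * w with hu
    have e1 : (t - c / σ ^ 2 * w) / s = t / s - u := by rw [hu]; field_simp
    have e2 : e w = (Phib (t / s - u) - Phib (t / s) - phi (t / s) * u)
        + c * (phi (t / s) / (σ ^ 2 * s) - phi t) * w := by
      rw [he]; simp only; rw [e1, hu]; ring
    rw [e2]
    refine (abs_add_le _ _).trans ?_
    have b1 := Phib_taylor (t / s) u
    have b2 : u ^ 2 ≤ 100 * D * w ^ 2 := by
      rw [hu, mul_pow]
      have : (c / (σ ^ 2 * s)) ^ 2 ≤ 100 * c ^ 2 := by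
        rw [← sq_abs, ← sq_abs c]
        calc _ ≤ (10 * |c|) ^ 2 := by gcongr
          _ = _ := by ring
      gcongr
      linarith
    have b3 : |c * (phi (t / s) / (σ ^ 2 * s) - phi t) * w| ≤ C1 * D * (1 + w ^ 2) := by
      rw [abs_mul, abs_mul]
      have : |w| ≤ 1 + w ^ 2 := by rw [← sq_abs]; nlinarith [sq_nonneg (|w| - 1), abs_nonneg w]
      gcongr
    linarith
  have hw2 : ∫ w, w ^ 2 ∂N = σ ^ 2 := by rw [hN, gaussian_second]; simp [sq_nonneg]
  have hi2 : Integrable (fun w : ℝ => w ^ 2) N := gaussian_integrable_pow _ 2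
  have hbi : Integrable (fun w => 100 * D * w ^ 2 + C1 * D * (1 + w ^ 2)) N :=
    (hi2.const_mul _).add (((integrable_const _).add hi2).const_mul _)
  have hbint : ∫ w, (100 * D * w ^ 2 + C1 * D * (1 + w ^ 2)) ∂N ≤ (400 + 5 * C1) * D := by
    have hi3 : Integrable (fun w : ℝ => C1 * D * (1 + w ^ 2)) N :=
      ((integrable_const _).add hi2).const_mul _
    rw [integral_add (hi2.const_mul _) hi3,
      integral_const_mul, integral_const_mul, integral_add (integrable_const _) hi2, hw2]
    simp only [integral_const, probReal_univ, smul_eq_mul, mul_one]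
    have : σ ^ 2 ≤ 4 := by nlinarith
    have hD0 : 0 ≤ D := by positivity
    have hC0 : 0 ≤ C1 * D := by positivity
    nlinarith
  have hei : Integrable (fun w => (Set.Ici t).indicator (1 : ℝ → ℝ) w * e w) N := by
    refine hbi.mono' ((ind_meas t).mul hem).aestronglyMeasurable (ae_of_all _ fun w => ?_)
    rw [Real.norm_eq_abs, abs_mul, abs_of_nonneg (ind_nonneg t w)]
    nlinarith [hebd w, ind_le t w, abs_nonneg (e w)]
  have heint : |∫ w, (Set.Ici t).indicator (1 : ℝ → ℝ) w * e w ∂N| ≤ (400 + 5 * C1) * D := by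
    refine (abs_integral_le_integral_abs).trans (le_trans ?_ hbint)
    refine integral_mono hei.abs hbi fun w => ?_
    simp only
    rw [abs_mul, abs_of_nonneg (ind_nonneg t w)]
    nlinarith [hebd w, ind_le t w, abs_nonneg (e w)]
  have hind : Integrable (fun w => (Set.Ici t).indicator (1 : ℝ → ℝ) w) N :=
    Integrable.of_bound (ind_meas t).aestronglyMeasurable 1 (ae_of_all _ fun w => by
      rw [Real.norm_eq_abs, abs_of_nonneg (ind_nonneg t w)]; exact ind_le t w)
  have hindw : Integrable (fun w => w * (Set.Ici t).indicator (1 : ℝ → ℝ) w) N := by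
    refine (gaussian_integrable_pow _ 1).mul_bdd (f := fun w => w ^ 1) (c := 1) (ind_meas t).aestronglyMeasurable
      (ae_of_all _ fun w => by
      rw [Real.norm_eq_abs, abs_of_nonneg (ind_nonneg t w)]; exact ind_le t w) |>.congr ?_
    exact ae_of_all _ fun w => by simp
  have hJ : ∫ w, (Set.Ici t).indicator (1 : ℝ → ℝ) w * Phib ((t - c / σ ^ 2 * w) / s) ∂N
      = Phib (t / s) * Phib (t / σ) + phi t * c * (σ * phi (t / σ))
        + ∫ w, (Set.Ici t).indicator (1 : ℝ → ℝ) w * e w ∂N := by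
    have hi4 : Integrable (fun w : ℝ => Phib (t / s) * (Set.Ici t).indicator (1 : ℝ → ℝ) w
        + phi t * c * (w * (Set.Ici t).indicator (1 : ℝ → ℝ) w)) N :=
      (hind.const_mul _).add (hindw.const_mul _)
    rw [← gaussian_first hσ t, ← gaussian_tail hσ t, ← integral_indicator_one measurableSet_Ici,
      ← integral_const_mul, ← integral_const_mul, ← integral_add (hind.const_mul _) (hindw.const_mul _),
      ← integral_add hi4 hei]
    refine integral_congr_ae (ae_of_all _ fun w => ?_)
    simp only [he]
    ring
  rw [hJ]
  set I := ∫ w, (Set.Ici t).indicator (1 : ℝ → ℝ) w * e w ∂N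
  have e3 : Phib (t / s) * Phib (t / σ) + phi t * c * (σ * phi (t / σ)) + I - Phib (t / σ) * Phib (t / τ)
      - phi t ^ 2 * c = I + Phib (t / σ) * (Phib (t / s) - Phib (t / τ))
        + phi t * (c * (σ * phi (t / σ) - phi t)) := by ring
  rw [e3]
  have t1 : |Phib (t / σ) * (Phib (t / s) - Phib (t / τ))| ≤ 25 * B * D := by
    rw [abs_mul, abs_of_nonneg (Phib_nonneg _)]
    have : Phib (t / σ) * |Phib (t / s) - Phib (t / τ)| ≤ 1 * (25 * B * c ^ 2) := by
      gcongr
      exact Phib_le_one _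
    have : 25 * B * c ^ 2 ≤ 25 * B * D := by gcongr
    linarith
  have t2 : |phi t * (c * (σ * phi (t / σ) - phi t))| ≤ (1 + 2 * B) * D := by
    have u1' := phi_scale B σ t hB hσ
    rw [abs_mul, abs_mul, abs_of_pos (phi_pos t)]
    calc phi t * (|c| * |σ * phi (t / σ) - phi t|) ≤ 1 * (|c| * ((1 + B) * |σ - 1|)) := by
          gcongr; exact phi_le_one t
      _ = (1 + B) * (|c| * |σ - 1|) := by ring
      _ ≤ (1 + 2 * B) * D := by
        have := abs_mul_le_sq c (σ - 1)
        have : |c| * |σ - 1| ≤ D := by rw [hD]; nlinarith [sq_nonneg (τ - 1)]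
        gcongr; linarith
  have := abs_add_three I (Phib (t / σ) * (Phib (t / s) - Phib (t / τ))) (phi t * (c * (σ * phi (t / σ) - phi t)))
  linarith


lemma ker_abs_le {d : ℕ} {p : ℝ} (hp0 : 0 ≤ p) (hp1 : p ≤ 1) (t : ℝ) (x y : Fin d → ℝ) :
    |kern p t x y| ≤ 1 := by
  unfold kern
  rw [abs_le]
  constructor <;> linarith [ind_le t (dotp x y), ind_nonneg t (dotp x y)]

lemma ker_comm {d : ℕ} (p t : ℝ) (x y : Fin d → ℝ) : kern p t x y = kern p t y x := by
  unfold kern; rw [dotp_comm]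

lemma ker_meas {d : ℕ} (p t : ℝ) :
    Measurable (fun xy : (Fin d → ℝ) × (Fin d → ℝ) => kern p t xy.1 xy.2) := by
  unfold kern
  exact ((ind_meas t).comp dotp_meas).sub_const p

lemma ker_meas_right {d : ℕ} (p t : ℝ) (x : Fin d → ℝ) : Measurable (fun y => kern p t x y) :=
  (ker_meas p t).comp (by fun_prop : Measurable (fun y : Fin d → ℝ => (x, y)))

lemma hk_abs_le {d : ℕ} (α : Fin d → ℝ) {p : ℝ} (hp0 : 0 ≤ p) (hp1 : p ≤ 1) (t : ℝ) (x y : Fin d → ℝ) :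
    |hk α p t x y| ≤ 1 := by
  unfold hk
  have := norm_integral_le_of_norm_le_const (μ := gaussPi d α) (f := fun z => kern p t x z * kern p t y z)
    (C := 1) (ae_of_all _ fun z => by
      rw [Real.norm_eq_abs, abs_mul]
      exact mul_le_one₀ (ker_abs_le hp0 hp1 t x z) (abs_nonneg _) (ker_abs_le hp0 hp1 t y z))
  simpa using this

lemma bil_self_nonneg {d : ℕ} (α : Fin d → ℝ) (hα : ∀ i, 0 ≤ α i) (x : Fin d → ℝ) : 0 ≤ bil α x x := by
  unfold bil
  refine Finset.sum_nonneg fun i _ => ?_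
  rw [mul_assoc]; exact mul_nonneg (hα i) (mul_self_nonneg _)

lemma hk_formula {d : ℕ} (α : Fin d → ℝ) (p t : ℝ) (x y : Fin d → ℝ) :
    hk α p t x y = (∫ z, (Set.Ici t).indicator (1 : ℝ → ℝ) (dotp x z) * (Set.Ici t).indicator (1 : ℝ → ℝ) (dotp y z) ∂(gaussPi d α))
      - p * (∫ z, (Set.Ici t).indicator (1 : ℝ → ℝ) (dotp x z) ∂(gaussPi d α))
      - p * (∫ z, (Set.Ici t).indicator (1 : ℝ → ℝ) (dotp y z) ∂(gaussPi d α)) + p ^ 2 := by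
  have hm : ∀ a : Fin d → ℝ, Measurable (fun z => (Set.Ici t).indicator (1 : ℝ → ℝ) (dotp a z)) :=
    fun a => (ind_meas t).comp (dotp_meas_right a)
  have hb : ∀ w, ‖(Set.Ici t).indicator (1 : ℝ → ℝ) w‖ ≤ 1 := fun w => by
    rw [Real.norm_eq_abs, abs_of_nonneg (ind_nonneg t w)]; exact ind_le t w
  have hi : ∀ a : Fin d → ℝ, Integrable (fun z => (Set.Ici t).indicator (1 : ℝ → ℝ) (dotp a z)) (gaussPi d α) :=
    fun a => Integrable.of_bound (hm a).aestronglyMeasurable 1 (ae_of_all _ fun z => hb _)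
  have hi2 : Integrable (fun z => (Set.Ici t).indicator (1 : ℝ → ℝ) (dotp x z) * (Set.Ici t).indicator (1 : ℝ → ℝ) (dotp y z)) (gaussPi d α) :=
    Integrable.of_bound ((hm x).mul (hm y)).aestronglyMeasurable 1 (ae_of_all _ fun z => by
      rw [norm_mul]; exact mul_le_one₀ (hb _) (norm_nonneg _) (hb _))
  have hc : ∫ z : Fin d → ℝ, p ^ 2 ∂(gaussPi d α) = p ^ 2 := by simp
  unfold hk
  conv_rhs => rw [← hc]
  rw [← integral_const_mul, ← integral_const_mul, ← integral_sub hi2 ((hi x).const_mul _)]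
  have hi3 : Integrable (fun z => (Set.Ici t).indicator (1 : ℝ → ℝ) (dotp x z) * (Set.Ici t).indicator (1 : ℝ → ℝ) (dotp y z)
    - p * (Set.Ici t).indicator (1 : ℝ → ℝ) (dotp x z)) (gaussPi d α) := hi2.sub ((hi x).const_mul _)
  rw [← integral_sub hi3 ((hi y).const_mul _)]
  have hi4 : Integrable (fun z => (Set.Ici t).indicator (1 : ℝ → ℝ) (dotp x z) * (Set.Ici t).indicator (1 : ℝ → ℝ) (dotp y z)
    - p * (Set.Ici t).indicator (1 : ℝ → ℝ) (dotp x z) - p * (Set.Ici t).indicator (1 : ℝ → ℝ) (dotp y z)) (gaussPi d α) :=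
    hi3.sub ((hi y).const_mul _)
  rw [← integral_add hi4 (integrable_const _)]
  refine integral_congr_ae (ae_of_all _ fun z => ?_)
  simp only [kern]; ring

/-- error constant -/
def CB (B : ℝ) : ℝ := 1100 + 1000 * B + 8 * B ^ 2

lemma tail_dev (B σ t p : ℝ) (hB : |t| ≤ B) (h1 : 1/2 ≤ σ) :
    |Phib (t / σ) - p| ≤ |Phib t - p| + 2 * B * |σ - 1| := by
  have h : |Phib (t / σ) - Phib t| ≤ 2 * B * |σ - 1| := by
    refine (Phib_lip _ _).trans ?_
    have : t / σ - t = t * (1 / σ - 1) := by ring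
    rw [this, abs_mul]
    have h2 := abs_one_div_sub_le (by norm_num) h1
    calc |t| * |1 / σ - 1| ≤ B * (|σ - 1| / (1/2)) := by
          have := (abs_nonneg t).trans hB
          gcongr
      _ = _ := by ring
  have : Phib (t / σ) - p = (Phib t - p) + (Phib (t / σ) - Phib t) := by ring
  rw [this]
  exact (abs_add_le _ _).trans (by linarith)

lemma prod_dev (B c a b δ : ℝ) :
    (|δ| + 2 * B * |a|) * (|δ| + 2 * B * |b|) ≤ (2 + 8 * B ^ 2) * (c ^ 2 + a ^ 2 + b ^ 2 + δ ^ 2) := by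
  have q1 : |δ| ^ 2 = δ ^ 2 := sq_abs _
  have q2 : |a| ^ 2 = a ^ 2 := sq_abs _
  have q3 : |b| ^ 2 = b ^ 2 := sq_abs _
  rw [← q1, ← q2, ← q3]
  generalize |δ| = u
  generalize |a| = v
  generalize |b| = w
  have h1 := sq_nonneg (u - 2 * B * v)
  have h2 := sq_nonneg (u - 2 * B * w)
  have h3 := sq_nonneg (2 * B * v - 2 * B * w)
  have h4 : 0 ≤ B ^ 2 * v ^ 2 := by positivity
  have h5 : 0 ≤ B ^ 2 * w ^ 2 := by positivity
  have h6 : 0 ≤ B ^ 2 * u ^ 2 := by positivity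
  have h7 : 0 ≤ B ^ 2 * c ^ 2 := by positivity
  have h8 := sq_nonneg u
  have h9 := sq_nonneg v
  have h10 := sq_nonneg w
  have h11 := sq_nonneg c
  ring_nf at *
  linarith

set_option maxHeartbeats 1000000 in
lemma hk_expand {d : ℕ} (α : Fin d → ℝ) (hα : ∀ i, 0 ≤ α i) {p : ℝ} (hp0 : 0 ≤ p) (hp1 : p ≤ 1)
    (B t : ℝ) (hB : |t| ≤ B) (x y : Fin d → ℝ) :
    |hk α p t x y - phi t ^ 2 * bil α x y| ≤
      CB B * (bil α x y ^ 2 + (bil α x x - 1) ^ 2 + (bil α y y - 1) ^ 2 + (Phib t - p) ^ 2) := by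
  have hB0 : 0 ≤ B := (abs_nonneg t).trans hB
  set c := bil α x y with hc
  set δ := Phib t - p with hδ
  set σ := √(bil α x x) with hσd
  set τ := √(bil α y y) with hτd
  have hσ2 : bil α x x = σ ^ 2 := (Real.sq_sqrt (bil_self_nonneg α hα x)).symm
  have hτ2 : bil α y y = τ ^ 2 := (Real.sq_sqrt (bil_self_nonneg α hα y)).symm
  have hσ0 : 0 ≤ σ := Real.sqrt_nonneg _
  have hτ0 : 0 ≤ τ := Real.sqrt_nonneg _
  rw [hσ2, hτ2]
  have hσ1 : (σ - 1) ^ 2 ≤ (σ ^ 2 - 1) ^ 2 := sq_le_sq.2 (abs_sub_one_le_sq hσ0)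
  have hτ1 : (τ - 1) ^ 2 ≤ (τ ^ 2 - 1) ^ 2 := sq_le_sq.2 (abs_sub_one_le_sq hτ0)
  have hCB : 1100 ≤ CB B := by unfold CB; nlinarith [sq_nonneg B]
  have hD : c ^ 2 + (σ - 1) ^ 2 + (τ - 1) ^ 2 + δ ^ 2 ≤ c ^ 2 + (σ ^ 2 - 1) ^ 2 + (τ ^ 2 - 1) ^ 2 + δ ^ 2 := by
    linarith
  refine le_trans ?_ (mul_le_mul_of_nonneg_left hD (by linarith))
  set D := c ^ 2 + (σ - 1) ^ 2 + (τ - 1) ^ 2 + δ ^ 2 with hDdef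
  have hD0 : 0 ≤ D := by positivity
  have p2 : phi t ^ 2 ≤ 1 := pow_le_one₀ (phi_pos t).le (phi_le_one t)
  have htriv : |hk α p t x y - phi t ^ 2 * c| ≤ 1 + |c| := by
    refine (abs_sub _ _).trans ?_
    have h1 := hk_abs_le α hp0 hp1 t x y
    rw [abs_mul, abs_of_nonneg (sq_nonneg (phi t))]
    nlinarith [abs_nonneg c]
  have hbad : 1/64 ≤ D → |hk α p t x y - phi t ^ 2 * c| ≤ CB B * D := fun h => by
    have h1 : |c| ≤ 1 + c ^ 2 := by rw [← sq_abs]; nlinarith [sq_nonneg (|c| - 1), abs_nonneg c]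
    have h2 : c ^ 2 ≤ D := by rw [hDdef]; nlinarith [sq_nonneg (σ - 1), sq_nonneg (τ - 1), sq_nonneg δ]
    nlinarith
  by_cases g1 : 1/2 ≤ σ
  swap
  · apply hbad; rw [hDdef]; nlinarith [sq_nonneg c, sq_nonneg (τ - 1), sq_nonneg δ]
  by_cases g2 : σ ≤ 2
  swap
  · apply hbad; rw [hDdef]; nlinarith [sq_nonneg c, sq_nonneg (τ - 1), sq_nonneg δ]
  by_cases g3 : 1/2 ≤ τ
  swap
  · apply hbad; rw [hDdef]; nlinarith [sq_nonneg c, sq_nonneg (σ - 1), sq_nonneg δ]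
  by_cases g4 : τ ≤ 2
  swap
  · apply hbad; rw [hDdef]; nlinarith [sq_nonneg c, sq_nonneg (σ - 1), sq_nonneg δ]
  by_cases g5 : |c| ≤ 1/8
  swap
  · apply hbad; rw [hDdef, ← sq_abs c]
    nlinarith [sq_nonneg (τ - 1), sq_nonneg (σ - 1), sq_nonneg δ]
  have hσp : 0 < σ := by linarith
  have hτp : 0 < τ := by linarith
  have hr0 : 0 < τ ^ 2 - c ^ 2 / σ ^ 2 := by
    have hσ2 : 1/4 ≤ σ ^ 2 := by nlinarith
    have hc2 : c ^ 2 ≤ 1/64 := by rw [← sq_abs]; nlinarith [abs_nonneg c]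
    have hcσ : c ^ 2 / σ ^ 2 ≤ 4 * c ^ 2 := by
      rw [div_le_iff₀ (by positivity)]; nlinarith [sq_nonneg c]
    nlinarith
  set s := √(τ ^ 2 - c ^ 2 / σ ^ 2) with hsdef
  have hs0 : 0 < s := Real.sqrt_pos.2 hr0
  have hs2 : s ^ 2 = τ ^ 2 - c ^ 2 / σ ^ 2 := Real.sq_sqrt hr0.le
  have hJ := core_J B σ τ s c t hB g1 g2 g3 g4 g5 hs0 hs2
  rw [hk_formula, dotp_joint α hα x y hσp hs0 hσ2 (by rw [hτ2]; exact hs2) t,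
    dotp_single α hα x hσp hσ2, dotp_single α hα y hτp hτ2]
  rw [← hc]
  set J := ∫ w, (Set.Ici t).indicator (1 : ℝ → ℝ) w * Phib ((t - c / σ ^ 2 * w) / s)
        ∂(gaussianReal 0 (Real.toNNReal (σ ^ 2)))
  have e : J - p * Phib (t / σ) - p * Phib (t / τ) + p ^ 2 - phi t ^ 2 * c
      = (J - Phib (t / σ) * Phib (t / τ) - phi t ^ 2 * c) + (Phib (t / σ) - p) * (Phib (t / τ) - p) := by ring
  rw [e]
  refine (abs_add_le _ _).trans ?_
  have d1 := tail_dev B σ t p hB g1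
  have d2 := tail_dev B τ t p hB g3
  rw [← hδ] at d1 d2
  have m1 : |(Phib (t / σ) - p) * (Phib (t / τ) - p)| ≤ (2 + 8 * B ^ 2) * D := by
    rw [abs_mul]
    have : |Phib (t / σ) - p| * |Phib (t / τ) - p| ≤ (|δ| + 2 * B * |σ - 1|) * (|δ| + 2 * B * |τ - 1|) := by
      gcongr
    refine this.trans ?_
    exact prod_dev B c (σ - 1) (τ - 1) δ
  have m2 : (400 + 5 * (175 * B + 130) + 25 * B + (1 + 2 * B)) * (c ^ 2 + (σ - 1) ^ 2 + (τ - 1) ^ 2)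
      ≤ (400 + 5 * (175 * B + 130) + 25 * B + (1 + 2 * B)) * D := by
    gcongr
    rw [hDdef]; nlinarith [sq_nonneg δ]
  have m3 : (400 + 5 * (175 * B + 130) + 25 * B + (1 + 2 * B)) * D + (2 + 8 * B ^ 2) * D ≤ CB B * D := by
    rw [← add_mul]
    gcongr
    unfold CB
    linarith
  linarith


/-- diagonal quadratic form -/
def quad {d : ℕ} (w x : Fin d → ℝ) : ℝ := ∑ i, w i * x i ^ 2

lemma quad_meas {d : ℕ} (w : Fin d → ℝ) : Measurable (quad w) := by unfold quad; fun_prop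

lemma quad_nonneg {d : ℕ} (w x : Fin d → ℝ) (hw : ∀ i, 0 ≤ w i) : 0 ≤ quad w x :=
  Finset.sum_nonneg fun i _ => mul_nonneg (hw i) (sq_nonneg _)

lemma quad_integrable {d : ℕ} (α w : Fin d → ℝ) : Integrable (quad w) (gaussPi d α) := by
  unfold quad
  exact integrable_finsetSum _ fun i _ => (gauss_coord_integrable α i 2).const_mul _

lemma quad_mean {d : ℕ} (α : Fin d → ℝ) (hα : ∀ i, 0 ≤ α i) (w : Fin d → ℝ) :
    ∫ x, quad w x ∂(gaussPi d α) = ∑ i, w i * α i := by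
  unfold quad
  rw [integral_finsetSum _ fun i _ => (gauss_coord_integrable α i 2).const_mul _]
  refine Finset.sum_congr rfl fun i _ => ?_
  rw [integral_const_mul, gauss_coord_integral α i (fun x => x ^ 2) (by fun_prop), gaussian_second]
  simp [hα i]

lemma sq_memLp (v : ℝ≥0) : MemLp (fun x : ℝ => x ^ 2) 2 (gaussianReal 0 v) := by
  rw [memLp_two_iff_integrable_sq (by fun_prop)]
  simpa [← pow_mul] using gaussian_integrable_pow v 4

lemma coord_sq_memLp {d : ℕ} (α : Fin d → ℝ) (i : Fin d) :
    MemLp (fun x : Fin d → ℝ => x i ^ 2) 2 (gaussPi d α) := by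
  rw [memLp_two_iff_integrable_sq (Measurable.aestronglyMeasurable (by fun_prop))]
  simpa [← pow_mul] using gauss_coord_integrable α i 4

lemma quad_memLp {d : ℕ} (α w : Fin d → ℝ) : MemLp (quad w) 2 (gaussPi d α) := by
  unfold quad
  exact memLp_finsetSum _ fun i _ => (coord_sq_memLp α i).const_mul _

lemma quad_variance {d : ℕ} (α : Fin d → ℝ) (hα : ∀ i, 0 ≤ α i) (w : Fin d → ℝ) :
    Var[quad w; gaussPi d α] ≤ kap * ∑ i, w i ^ 2 * α i ^ 2 := by
  have h := variance_sum_pi (μ := fun i => gaussianReal 0 (Real.toNNReal (α i)))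
    (X := fun i x => w i * x ^ 2) (fun i => (sq_memLp _).const_mul _)
  have e : quad w = ∑ i, fun ω : Fin d → ℝ => w i * (ω i) ^ 2 := by
    ext x; simp [quad]
  rw [e]
  unfold gaussPi
  rw [h, Finset.mul_sum]
  refine Finset.sum_le_sum fun i _ => ?_
  refine (variance_le_expectation_sq (by fun_prop)).trans ?_
  have e2 : ((fun x : ℝ => w i * x ^ 2) ^ 2) = fun x => w i ^ 2 * x ^ 4 := by
    ext x; simp only [Pi.pow_apply]; ring
  rw [e2, integral_const_mul, gaussian_fourth (hα i)]
  linarith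

lemma quad_dev {d : ℕ} (α : Fin d → ℝ) (hα : ∀ i, 0 ≤ α i) (w : Fin d → ℝ) :
    ∫ x, (quad w x - ∑ i, w i * α i) ^ 2 ∂(gaussPi d α) ≤ kap * ∑ i, w i ^ 2 * α i ^ 2 := by
  have h := quad_variance α hα w
  rwa [variance_eq_integral (quad_meas w).aemeasurable, quad_mean α hα] at h

lemma quad_dev_integrable {d : ℕ} (α w : Fin d → ℝ) (m : ℝ) :
    Integrable (fun x => (quad w x - m) ^ 2) (gaussPi d α) :=
  ((quad_memLp α w).sub (memLp_const m)).integrable_sq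

lemma quad_sq_int {d : ℕ} (α : Fin d → ℝ) (hα : ∀ i, 0 ≤ α i) (w : Fin d → ℝ) :
    ∫ x, quad w x ^ 2 ∂(gaussPi d α) ≤ (∑ i, w i * α i) ^ 2 + kap * ∑ i, w i ^ 2 * α i ^ 2 := by
  have h := quad_variance α hα w
  rw [variance_eq_sub (quad_memLp α w), quad_mean α hα] at h
  have : ∫ x, (quad w ^ 2) x ∂(gaussPi d α) = ∫ x, quad w x ^ 2 ∂(gaussPi d α) := rfl
  linarith

lemma bil_self {d : ℕ} (α x : Fin d → ℝ) : bil α x x = quad α x := by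
  unfold bil quad; refine Finset.sum_congr rfl fun i _ => by ring

lemma bil_eq_dotp {d : ℕ} (α x y : Fin d → ℝ) : bil α x y = dotp (fun i => α i * x i) y := rfl

lemma bil_meas {d : ℕ} (α : Fin d → ℝ) :
    Measurable (fun xy : (Fin d → ℝ) × (Fin d → ℝ) => bil α xy.1 xy.2) := by
  unfold bil; fun_prop

lemma bil_sq_integrable {d : ℕ} (α : Fin d → ℝ) :
    Integrable (fun xy : (Fin d → ℝ) × (Fin d → ℝ) => bil α xy.1 xy.2 ^ 2)
      ((gaussPi d α).prod (gaussPi d α)) := by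
  refine MemLp.integrable_sq (f := fun xy : (Fin d → ℝ) × (Fin d → ℝ) => bil α xy.1 xy.2) ?_
  unfold bil
  refine memLp_finsetSum _ fun i _ => ?_
  rw [memLp_two_iff_integrable_sq (by fun_prop)]
  have := ((gauss_coord_integrable α i 2).mul_prod (gauss_coord_integrable α i 2)).const_mul (α i ^ 2)
  refine this.congr (ae_of_all _ fun z => ?_)
  simp only; ring

lemma bil_integrable {d : ℕ} (α : Fin d → ℝ) :
    Integrable (fun xy : (Fin d → ℝ) × (Fin d → ℝ) => bil α xy.1 xy.2)
      ((gaussPi d α).prod (gaussPi d α)) := by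
  unfold bil
  refine integrable_finsetSum _ fun i _ => ?_
  have := ((gauss_coord_integrable α i 1).mul_prod (gauss_coord_integrable α i 1)).const_mul (α i)
  refine this.congr (ae_of_all _ fun z => ?_)
  simp only; ring

lemma bil_sq_int {d : ℕ} (α : Fin d → ℝ) (hα : ∀ i, 0 ≤ α i) :
    ∫ xy, bil α xy.1 xy.2 ^ 2 ∂((gaussPi d α).prod (gaussPi d α)) = ∑ i, α i ^ 4 := by
  rw [integral_prod _ (bil_sq_integrable α)]
  have : ∀ x, ∫ y, bil α x y ^ 2 ∂(gaussPi d α) = quad (fun i => α i ^ 3) x := fun x => by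
    simp_rw [bil_eq_dotp]
    rw [dotp_sq_integral α hα]
    unfold bil quad
    refine Finset.sum_congr rfl fun i _ => by ring
  simp_rw [this]
  rw [quad_mean α hα]
  refine Finset.sum_congr rfl fun i _ => by ring

lemma dotp_sq_integrable {d : ℕ} (α : Fin d → ℝ) :
    Integrable (fun xy : (Fin d → ℝ) × (Fin d → ℝ) => dotp xy.1 xy.2 ^ 2)
      ((gaussPi d α).prod (gaussPi d α)) := by
  refine MemLp.integrable_sq (f := fun xy : (Fin d → ℝ) × (Fin d → ℝ) => dotp xy.1 xy.2) ?_
  unfold dotp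
  refine memLp_finsetSum _ fun i _ => ?_
  rw [memLp_two_iff_integrable_sq (by fun_prop)]
  have := ((gauss_coord_integrable α i 2).mul_prod (gauss_coord_integrable α i 2))
  refine this.congr (ae_of_all _ fun z => ?_)
  simp only; ring

lemma dotp_sq_int {d : ℕ} (α : Fin d → ℝ) (hα : ∀ i, 0 ≤ α i) (h2 : ∑ i, α i ^ 2 = 1) :
    ∫ xy, dotp xy.1 xy.2 ^ 2 ∂((gaussPi d α).prod (gaussPi d α)) = 1 := by
  rw [integral_prod _ (dotp_sq_integrable α)]
  simp_rw [dotp_sq_integral α hα, bil_self]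
  rw [quad_mean α hα, ← h2]
  refine Finset.sum_congr rfl fun i _ => by ring

lemma ind_prod_integrable {d : ℕ} (α : Fin d → ℝ) (t : ℝ) :
    Integrable (fun xy : (Fin d → ℝ) × (Fin d → ℝ) => (Set.Ici t).indicator (1 : ℝ → ℝ) (dotp xy.1 xy.2))
      ((gaussPi d α).prod (gaussPi d α)) :=
  Integrable.of_bound ((ind_meas t).comp dotp_meas).aestronglyMeasurable 1 (ae_of_all _ fun z => by
    rw [Real.norm_eq_abs, abs_of_nonneg (ind_nonneg t _)]; exact ind_le t _)

lemma thr_int {d : ℕ} {α : Fin d → ℝ} {p t : ℝ} (hp : 0 ≤ p) (ht : IsThreshold d α p t) :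
    ∫ xy, (Set.Ici t).indicator (1 : ℝ → ℝ) (dotp xy.1 xy.2) ∂((gaussPi d α).prod (gaussPi d α)) = p := by
  have hm : MeasurableSet {xy : (Fin d → ℝ) × (Fin d → ℝ) | t ≤ dotp xy.1 xy.2} :=
    measurableSet_le measurable_const dotp_meas
  have e : (fun xy : (Fin d → ℝ) × (Fin d → ℝ) => (Set.Ici t).indicator (1 : ℝ → ℝ) (dotp xy.1 xy.2))
      = {xy : (Fin d → ℝ) × (Fin d → ℝ) | t ≤ dotp xy.1 xy.2}.indicator 1 := by
    ext xy; simp [Set.indicator]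
  rw [e, integral_indicator_one hm, measureReal_def, ht, ENNReal.toReal_ofReal hp]

/-- bound on the threshold -/
def Bp (p : ℝ) : ℝ := 1 / (p * (1 - p))

lemma thr_bound {d : ℕ} {α : Fin d → ℝ} (hα : ∀ i, 0 ≤ α i) (h2 : ∑ i, α i ^ 2 = 1)
    {p t : ℝ} (hp : p ∈ Set.Ioo (0 : ℝ) 1) (ht : IsThreshold d α p t) : |t| ≤ Bp p := by
  obtain ⟨h0, h1⟩ := hp
  have hI := thr_int h0.le ht
  have hq : 0 < 1 - p := by linarith
  have key : p * (1 - p) * t ^ 2 ≤ 1 := by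
    rcases le_total 0 t with h | h
    · have : ∫ xy, t ^ 2 * (Set.Ici t).indicator (1 : ℝ → ℝ) (dotp xy.1 xy.2) ∂((gaussPi d α).prod (gaussPi d α))
          ≤ ∫ xy, dotp xy.1 xy.2 ^ 2 ∂((gaussPi d α).prod (gaussPi d α)) := by
        refine integral_mono ((ind_prod_integrable α t).const_mul _) (dotp_sq_integrable α) fun xy => ?_
        simp only [Set.indicator, Set.mem_Ici]
        split_ifs with h3
        · simp only [Pi.one_apply, mul_one]; exact pow_le_pow_left₀ h h3 2
        · simp only [mul_zero]; positivity
      rw [integral_const_mul, hI, dotp_sq_int α hα h2] at this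
      have : 0 ≤ p * p * t ^ 2 := by positivity
      nlinarith
    · have : ∫ xy, t ^ 2 * (1 - (Set.Ici t).indicator (1 : ℝ → ℝ) (dotp xy.1 xy.2)) ∂((gaussPi d α).prod (gaussPi d α))
          ≤ ∫ xy, dotp xy.1 xy.2 ^ 2 ∂((gaussPi d α).prod (gaussPi d α)) := by
        refine integral_mono (((integrable_const 1).sub (ind_prod_integrable α t)).const_mul _) (dotp_sq_integrable α) fun xy => ?_
        simp only [Set.indicator, Set.mem_Ici]
        split_ifs with h3
        · simp only [Pi.one_apply, sub_self, mul_zero]; positivity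
        · simp only [sub_zero, mul_one]; push Not at h3; nlinarith
      rw [integral_const_mul, integral_sub (integrable_const 1) (ind_prod_integrable α t), hI,
        dotp_sq_int α hα h2] at this
      simp only [integral_const, probReal_univ, smul_eq_mul, mul_one] at this
      have : 0 ≤ (1 - p) * (1 - p) * t ^ 2 := by positivity
      nlinarith
  have hpq : 0 < p * (1 - p) := mul_pos h0 hq
  have hpq1 : p * (1 - p) ≤ 1 := by nlinarith
  refine abs_le_of_sq_le_sq ?_ (by unfold Bp; positivity)
  unfold Bp
  rw [div_pow, one_pow, le_div_iff₀ (by positivity)]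
  calc t ^ 2 * (p * (1 - p)) ^ 2 = (p * (1 - p) * t ^ 2) * (p * (1 - p)) := by ring
    _ ≤ 1 * 1 := by gcongr
    _ = 1 := by norm_num

lemma one_le_Bp {p : ℝ} (hp : p ∈ Set.Ioo (0 : ℝ) 1) : 1 ≤ Bp p := by
  obtain ⟨h0, h1⟩ := hp
  have hq : 0 < 1 - p := by linarith
  unfold Bp
  rw [le_div_iff₀ (mul_pos h0 hq)]; nlinarith


lemma tail_int_dev {d : ℕ} {α : Fin d → ℝ} (hα : ∀ i, 0 ≤ α i) {B t : ℝ} (hB : |t| ≤ B) (x : Fin d → ℝ) :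
    |(∫ z, (Set.Ici t).indicator (1 : ℝ → ℝ) (dotp x z) ∂(gaussPi d α)) - Phib t|
      ≤ (2 * B + 2) * |quad α x - 1| := by
  have hB0 : 0 ≤ B := (abs_nonneg t).trans hB
  set σ := √(bil α x x) with hσd
  have hσ2 : bil α x x = σ ^ 2 := (Real.sq_sqrt (bil_self_nonneg α hα x)).symm
  have hσ0 : 0 ≤ σ := Real.sqrt_nonneg _
  rw [← bil_self, hσ2]
  have hs := abs_sub_one_le_sq hσ0
  refine le_trans ?_ (mul_le_mul_of_nonneg_left hs (by positivity))
  by_cases g : 1/2 ≤ σ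
  · rw [dotp_single α hα x (by linarith) hσ2]
    have := tail_dev B σ t (Phib t) hB g
    simp only [sub_self, abs_zero, zero_add] at this
    linarith [abs_nonneg (σ - 1)]
  · have h1 : 1/2 ≤ |σ - 1| := by rw [abs_of_neg (by linarith)]; linarith
    have h2 : 0 ≤ ∫ z, (Set.Ici t).indicator (1 : ℝ → ℝ) (dotp x z) ∂(gaussPi d α) :=
      integral_nonneg fun z => ind_nonneg _ _
    have h3 : ∫ z, (Set.Ici t).indicator (1 : ℝ → ℝ) (dotp x z) ∂(gaussPi d α) ≤ 1 := by
      have := norm_integral_le_of_norm_le_const (μ := gaussPi d α)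
        (f := fun z => (Set.Ici t).indicator (1 : ℝ → ℝ) (dotp x z)) (C := 1) (ae_of_all _ fun z => by
          rw [Real.norm_eq_abs, abs_of_nonneg (ind_nonneg _ _)]; exact ind_le _ _)
      rw [Real.norm_eq_abs] at this
      simpa using (le_abs_self _).trans this
    have h4 := Phib_nonneg t
    have h5 := Phib_le_one t
    have : |(∫ z, (Set.Ici t).indicator (1 : ℝ → ℝ) (dotp x z) ∂(gaussPi d α)) - Phib t| ≤ 1 := by
      rw [abs_le]; constructor <;> linarith
    nlinarith

lemma quad_one_dev {d : ℕ} {α : Fin d → ℝ} (hα : ∀ i, 0 ≤ α i) (h2 : ∑ i, α i ^ 2 = 1) :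
    ∫ x, (quad α x - 1) ^ 2 ∂(gaussPi d α) ≤ kap * ∑ i, α i ^ 4 := by
  have h := quad_dev α hα α
  have e1 : ∑ i, α i * α i = 1 := by rw [← h2]; exact Finset.sum_congr rfl fun i _ => by ring
  have e2 : ∑ i, α i ^ 2 * α i ^ 2 = ∑ i, α i ^ 4 := Finset.sum_congr rfl fun i _ => by ring
  rwa [e1, e2] at h

lemma delta_bound {d : ℕ} {α : Fin d → ℝ} (hα : ∀ i, 0 ≤ α i) (h2 : ∑ i, α i ^ 2 = 1)
    {p t B : ℝ} (hp0 : 0 ≤ p) (ht : IsThreshold d α p t) (hB : |t| ≤ B) :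
    (Phib t - p) ^ 2 ≤ (2 * B + 2) ^ 2 * (kap * ∑ i, α i ^ 4) := by
  have hB0 : 0 ≤ B := (abs_nonneg t).trans hB
  have hI := thr_int hp0 ht
  rw [integral_prod _ (ind_prod_integrable α t)] at hI
  have hInt0 : Integrable (fun x => ∫ z, (Set.Ici t).indicator (1 : ℝ → ℝ) (dotp x z) ∂(gaussPi d α)) (gaussPi d α) :=
    (ind_prod_integrable α t).integral_prod_left
  have hi1 : Integrable (fun x => |quad α x - 1|) (gaussPi d α) :=
    ((quad_integrable α α).sub (integrable_const 1)).abs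
  have h1 : |p - Phib t| ≤ (2 * B + 2) * ∫ x, |quad α x - 1| ∂(gaussPi d α) := by
    have e : p - Phib t = ∫ x, ((∫ z, (Set.Ici t).indicator (1 : ℝ → ℝ) (dotp x z) ∂(gaussPi d α)) - Phib t) ∂(gaussPi d α) := by
      rw [integral_sub hInt0 (integrable_const _), hI]; simp
    rw [e, ← integral_const_mul]
    refine (abs_integral_le_integral_abs).trans ?_
    exact integral_mono (hInt0.sub (integrable_const _)).abs (hi1.const_mul _) fun x => tail_int_dev hα hB x
  have h3 : (∫ x, |quad α x - 1| ∂(gaussPi d α)) ^ 2 ≤ ∫ x, (quad α x - 1) ^ 2 ∂(gaussPi d α) := by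
    have hm : MemLp (fun x => |quad α x - 1|) 2 (gaussPi d α) := ((quad_memLp α α).sub (memLp_const 1)).abs
    have h := variance_nonneg (fun x => |quad α x - 1|) (gaussPi d α)
    rw [variance_eq_sub hm] at h
    have e : ∫ x, ((fun x => |quad α x - 1|) ^ 2) x ∂(gaussPi d α) = ∫ x, (quad α x - 1) ^ 2 ∂(gaussPi d α) := by
      simp
    linarith
  have h4 := quad_one_dev hα h2
  have e : (Phib t - p) ^ 2 = |p - Phib t| ^ 2 := by rw [sq_abs]; ring
  rw [e]
  calc |p - Phib t| ^ 2 ≤ ((2 * B + 2) * ∫ x, |quad α x - 1| ∂(gaussPi d α)) ^ 2 := by gcongr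
    _ = (2 * B + 2) ^ 2 * (∫ x, |quad α x - 1| ∂(gaussPi d α)) ^ 2 := by ring
    _ ≤ _ := by gcongr; exact h3.trans h4

/-- constant for the mean error -/
def C1 (B : ℝ) : ℝ := CB B * (1 + 2 * kap + (2 * B + 2) ^ 2 * kap)

lemma CB_pos {B : ℝ} (hB : 0 ≤ B) : 0 < CB B := by unfold CB; positivity

lemma C1_pos {B : ℝ} (hB : 0 ≤ B) : 0 < C1 B := by
  have := CB_pos hB
  have := kap_nonneg
  unfold C1; positivity

lemma kern_meas_comp {d : ℕ} {Ω : Type*} [MeasurableSpace Ω] (p t : ℝ) {f g : Ω → Fin d → ℝ}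
    (hf : Measurable f) (hg : Measurable g) : Measurable (fun w => kern p t (f w) (g w)) :=
  (ker_meas p t).comp (hf.prodMk hg)

lemma hk_meas {d : ℕ} (α : Fin d → ℝ) (p t : ℝ) :
    Measurable (fun xy : (Fin d → ℝ) × (Fin d → ℝ) => hk α p t xy.1 xy.2) := by
  have : Measurable (fun w : ((Fin d → ℝ) × (Fin d → ℝ)) × (Fin d → ℝ) => kern p t w.1.1 w.2 * kern p t w.1.2 w.2) :=
    (kern_meas_comp p t (measurable_fst.comp measurable_fst) measurable_snd).mul
      (kern_meas_comp p t (measurable_snd.comp measurable_fst) measurable_snd)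
  have h := (this.stronglyMeasurable.integral_prod_right' (ν := gaussPi d α)).measurable
  exact h

lemma hk_err {d : ℕ} {α : Fin d → ℝ} (hα : ∀ i, 0 ≤ α i) (h2 : ∑ i, α i ^ 2 = 1)
    {p t B : ℝ} (hp0 : 0 ≤ p) (hp1 : p ≤ 1) (ht : IsThreshold d α p t) (hB : |t| ≤ B) :
    Integrable (fun xy : (Fin d → ℝ) × (Fin d → ℝ) => hk α p t xy.1 xy.2 - phi t ^ 2 * bil α xy.1 xy.2)
      ((gaussPi d α).prod (gaussPi d α)) ∧
    ∫ xy, |hk α p t xy.1 xy.2 - phi t ^ 2 * bil α xy.1 xy.2| ∂((gaussPi d α).prod (gaussPi d α))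
      ≤ C1 B * ∑ i, α i ^ 4 := by
  have hB0 : 0 ≤ B := (abs_nonneg t).trans hB
  have hi0 : Integrable (fun xy : (Fin d → ℝ) × (Fin d → ℝ) => hk α p t xy.1 xy.2) ((gaussPi d α).prod (gaussPi d α)) :=
    Integrable.of_bound (hk_meas α p t).aestronglyMeasurable 1 (ae_of_all _ fun z => hk_abs_le α hp0 hp1 t _ _)
  have hi := hi0.sub ((bil_integrable α).const_mul (phi t ^ 2))
  refine ⟨hi, ?_⟩
  have j1 := bil_sq_integrable α
  have j2 : Integrable (fun xy : (Fin d → ℝ) × (Fin d → ℝ) => (quad α xy.1 - 1) ^ 2) ((gaussPi d α).prod (gaussPi d α)) :=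
    (quad_dev_integrable α α 1).comp_fst _
  have j3 : Integrable (fun xy : (Fin d → ℝ) × (Fin d → ℝ) => (quad α xy.2 - 1) ^ 2) ((gaussPi d α).prod (gaussPi d α)) :=
    (quad_dev_integrable α α 1).comp_snd _
  have e2 : ∫ xy, (quad α xy.1 - 1) ^ 2 ∂((gaussPi d α).prod (gaussPi d α)) = ∫ x, (quad α x - 1) ^ 2 ∂(gaussPi d α) := by
    rw [integral_fun_fst (f := fun x => (quad α x - 1) ^ 2)]; simp
  have e3 : ∫ xy, (quad α xy.2 - 1) ^ 2 ∂((gaussPi d α).prod (gaussPi d α)) = ∫ x, (quad α x - 1) ^ 2 ∂(gaussPi d α) := by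
    rw [integral_fun_snd (f := fun x => (quad α x - 1) ^ 2)]; simp
  have hle : ∫ xy, |hk α p t xy.1 xy.2 - phi t ^ 2 * bil α xy.1 xy.2| ∂((gaussPi d α).prod (gaussPi d α))
      ≤ ∫ xy, CB B * (bil α xy.1 xy.2 ^ 2 + (quad α xy.1 - 1) ^ 2 + (quad α xy.2 - 1) ^ 2 + (Phib t - p) ^ 2) ∂((gaussPi d α).prod (gaussPi d α)) := by
    refine integral_mono hi.abs ((((j1.add j2).add j3).add (integrable_const _)).const_mul _) fun xy => ?_
    have := hk_expand α hα hp0 hp1 B t hB xy.1 xy.2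
    rwa [bil_self, bil_self] at this
  have j12 : Integrable (fun xy : (Fin d → ℝ) × (Fin d → ℝ) => bil α xy.1 xy.2 ^ 2 + (quad α xy.1 - 1) ^ 2) ((gaussPi d α).prod (gaussPi d α)) := j1.add j2
  have j123 : Integrable (fun xy : (Fin d → ℝ) × (Fin d → ℝ) => bil α xy.1 xy.2 ^ 2 + (quad α xy.1 - 1) ^ 2 + (quad α xy.2 - 1) ^ 2) ((gaussPi d α).prod (gaussPi d α)) := j12.add j3
  rw [integral_const_mul, integral_add j123 (integrable_const _), integral_add j12 j3, integral_add j1 j2,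
    bil_sq_int α hα, e2, e3] at hle
  simp only [integral_const, probReal_univ, smul_eq_mul, one_mul] at hle
  refine hle.trans ?_
  have h3 := quad_one_dev hα h2
  have h4 := delta_bound hα h2 hp0 ht hB
  unfold C1
  rw [mul_assoc]
  refine mul_le_mul_of_nonneg_left ?_ (CB_pos hB0).le
  linarith

lemma hk_sq_bound {d : ℕ} {α : Fin d → ℝ} (hα : ∀ i, 0 ≤ α i) (h2 : ∑ i, α i ^ 2 = 1)
    {p t B : ℝ} (hp0 : 0 ≤ p) (hp1 : p ≤ 1) (ht : IsThreshold d α p t) (hB : |t| ≤ B) :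
    ∫ xy, hk α p t xy.1 xy.2 ^ 2 ∂((gaussPi d α).prod (gaussPi d α)) ≤ (1 + 2 * C1 B) * ∑ i, α i ^ 4 := by
  obtain ⟨hi, he⟩ := hk_err hα h2 hp0 hp1 ht hB
  have hi0 : Integrable (fun xy : (Fin d → ℝ) × (Fin d → ℝ) => hk α p t xy.1 xy.2 ^ 2) ((gaussPi d α).prod (gaussPi d α)) :=
    Integrable.of_bound ((hk_meas α p t).pow_const 2).aestronglyMeasurable 1 (ae_of_all _ fun z => by
      rw [norm_pow]; exact pow_le_one₀ (norm_nonneg _) (hk_abs_le α hp0 hp1 t _ _))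
  have : ∫ xy, hk α p t xy.1 xy.2 ^ 2 ∂((gaussPi d α).prod (gaussPi d α)) ≤
      ∫ xy, (bil α xy.1 xy.2 ^ 2 + 2 * |hk α p t xy.1 xy.2 - phi t ^ 2 * bil α xy.1 xy.2|) ∂((gaussPi d α).prod (gaussPi d α)) := by
    refine integral_mono hi0 ((bil_sq_integrable α).add (hi.abs.const_mul 2)) fun xy => ?_
    simp only
    have h1 := hk_abs_le α hp0 hp1 t xy.1 xy.2
    have p2 : phi t ^ 2 ≤ 1 := pow_le_one₀ (phi_pos t).le (phi_le_one t)
    have p0 := sq_nonneg (phi t)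
    generalize hk α p t xy.1 xy.2 = h at *
    generalize bil α xy.1 xy.2 = c at *
    generalize phi t ^ 2 = a at *
    have a1 : h * (h - a * c) ≤ |h - a * c| := by
      refine (le_abs_self _).trans ?_
      rw [abs_mul]; nlinarith [abs_nonneg (h - a * c)]
    have a2 : h * (a * c) ≤ h ^ 2 / 2 + c ^ 2 / 2 := by
      have : (a * c) ^ 2 ≤ c ^ 2 := by
        rw [mul_pow]; have : a ^ 2 ≤ 1 := pow_le_one₀ p0 p2
        nlinarith [sq_nonneg c]
      nlinarith [sq_nonneg (h - a * c)]
    nlinarith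
  rw [integral_add (bil_sq_integrable α) (hi.abs.const_mul 2), integral_const_mul, bil_sq_int α hα] at this
  linarith


lemma phi_mono {u v : ℝ} (h : |u| ≤ |v|) : phi v ≤ phi u := by
  unfold phi
  have : u ^ 2 ≤ v ^ 2 := sq_le_sq.2 h
  gcongr

lemma half_int {d : ℕ} {α : Fin d → ℝ} (hα : ∀ i, 0 ≤ α i) (p t : ℝ) (x b : Fin d → ℝ) {σ : ℝ} (hσ : 0 < σ)
    (hs : bil α x x = σ ^ 2) :
    ∫ y, kern p t x y * dotp b y ∂(gaussPi d α) = bil α x b / σ * phi (t / σ) := by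
  rw [← dotp_half α hα x b hσ hs t]
  have hd : Integrable (dotp b) (gaussPi d α) := (dotp_memLp α b).integrable (by norm_num)
  have hi : Integrable (fun z => dotp b z * (Set.Ici t).indicator (1 : ℝ → ℝ) (dotp x z)) (gaussPi d α) := by
    refine hd.mul_bdd (c := 1) ((ind_meas t).comp (dotp_meas_right x)).aestronglyMeasurable (ae_of_all _ fun z => ?_)
    rw [Real.norm_eq_abs, abs_of_nonneg (ind_nonneg t _)]; exact ind_le t _
  have e : (fun y => kern p t x y * dotp b y) = fun y => dotp b y * (Set.Ici t).indicator (1 : ℝ → ℝ) (dotp x y) - p * dotp b y := by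
    ext y; unfold kern; ring
  rw [e, integral_sub hi (hd.const_mul p), integral_const_mul, dotp_integral]
  ring

lemma half_int_nonneg {d : ℕ} {α : Fin d → ℝ} (hα : ∀ i, 0 ≤ α i) (p t : ℝ) (x b : Fin d → ℝ)
    (hb0 : bil α x x = 0 → b = 0) (hb : 0 ≤ bil α x b) :
    0 ≤ ∫ y, kern p t x y * dotp b y ∂(gaussPi d α) := by
  by_cases h : bil α x x = 0
  · rw [hb0 h]; simp [dotp]
  · have h0 : 0 < bil α x x := lt_of_le_of_ne (bil_self_nonneg α hα x) (Ne.symm h)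
    rw [half_int hα p t x b (Real.sqrt_pos.2 h0) (Real.sq_sqrt h0.le).symm]
    have := phi_pos (t / √(bil α x x))
    positivity

lemma zero_of_quad {d : ℕ} {α : Fin d → ℝ} (hα : ∀ i, 0 ≤ α i) (x : Fin d → ℝ) (h : bil α x x = 0) (i : Fin d) :
    α i * x i = 0 := by
  rw [bil_self] at h
  have := (Finset.sum_eq_zero_iff_of_nonneg (fun i _ => mul_nonneg (hα i) (sq_nonneg (x i)))).1 h i (Finset.mem_univ i)
  rcases mul_eq_zero.1 this with h | h
  · rw [h, zero_mul]
  · rw [pow_eq_zero_iff (by norm_num)] at h; rw [h, mul_zero]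

lemma kernbil_integrable {d : ℕ} (α : Fin d → ℝ) {p : ℝ} (hp0 : 0 ≤ p) (hp1 : p ≤ 1) (t : ℝ) :
    Integrable (fun xy : (Fin d → ℝ) × (Fin d → ℝ) => kern p t xy.1 xy.2 * bil α xy.1 xy.2)
      ((gaussPi d α).prod (gaussPi d α)) :=
  (bil_integrable α).bdd_mul (c := 1) (ker_meas p t).aestronglyMeasurable
    (ae_of_all _ fun z => ker_abs_le hp0 hp1 t _ _)

lemma inner_lower {d : ℕ} {α : Fin d → ℝ} (hα : ∀ i, 0 ≤ α i) {p t B : ℝ} (hB : |t| ≤ B) {a : ℝ} (ha : 0 < a)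
    (x : Fin d → ℝ) :
    phi (2 * B) / 2 * (quad (fun i => α i ^ 2) x - a * quad (fun i => α i ^ 2) x ^ 2 - 1 / a * (quad α x - 1) ^ 2)
      ≤ ∫ y, kern p t x y * bil α x y ∂(gaussPi d α) := by
  have hB0 : 0 ≤ B := (abs_nonneg t).trans hB
  simp_rw [bil_eq_dotp]
  have hL : bil α x (fun i => α i * x i) = quad (fun i => α i ^ 2) x := by
    unfold bil quad; exact Finset.sum_congr rfl fun i _ => by ring
  have hL0 : 0 ≤ quad (fun i => α i ^ 2) x := quad_nonneg _ _ fun i => sq_nonneg _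
  have hph := phi_pos (2 * B)
  by_cases hg : |quad α x - 1| ≤ 1/2
  · rw [abs_le] at hg
    have hQ : 0 < bil α x x := by rw [bil_self]; linarith
    rw [half_int hα p t x _ (Real.sqrt_pos.2 hQ) (Real.sq_sqrt hQ.le).symm, hL]
    set σ := √(bil α x x) with hσ
    have hs : σ ^ 2 = quad α x := by rw [hσ, Real.sq_sqrt hQ.le, bil_self]
    have hs0 : 0 < σ := Real.sqrt_pos.2 hQ
    have s1 : 1/2 ≤ σ := by nlinarith
    have s2 : σ ≤ 2 := by nlinarith
    have hp : phi (2 * B) ≤ phi (t / σ) := by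
      apply phi_mono
      rw [abs_div, abs_of_pos hs0, abs_of_nonneg (by positivity : 0 ≤ 2 * B), div_le_iff₀ hs0]
      nlinarith
    have h1 : quad (fun i => α i ^ 2) x / 2 ≤ quad (fun i => α i ^ 2) x / σ := by gcongr
    have h2 : quad (fun i => α i ^ 2) x / 2 * phi (2 * B) ≤ quad (fun i => α i ^ 2) x / σ * phi (t / σ) := by
      gcongr
    have h3 : 0 ≤ phi (2 * B) / 2 * (a * quad (fun i => α i ^ 2) x ^ 2 + 1 / a * (quad α x - 1) ^ 2) := by positivity
    linarith
  · have h1 : 0 ≤ ∫ y, kern p t x y * dotp (fun i => α i * x i) y ∂(gaussPi d α) :=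
      half_int_nonneg hα p t x _ (fun h => funext fun i => zero_of_quad hα x h i) (by rw [hL]; exact hL0)
    refine le_trans ?_ h1
    refine mul_nonpos_of_nonneg_of_nonpos (by positivity) ?_
    generalize quad (fun i => α i ^ 2) x = L at *
    push Not at hg
    rw [← sq_abs (quad α x - 1)]
    generalize |quad α x - 1| = u at *
    have h2 : 2 * L * u ≤ a * L ^ 2 + 1 / a * u ^ 2 := by
      have : 0 ≤ (1 / a) * (a * L - u) ^ 2 := by positivity
      have e : (1 / a) * (a * L - u) ^ 2 = a * L ^ 2 + 1 / a * u ^ 2 - 2 * L * u := by field_simp; ring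
      linarith
    nlinarith

lemma kernbil_lower {d : ℕ} {α : Fin d → ℝ} (hα : ∀ i, 0 ≤ α i) (h2 : ∑ i, α i ^ 2 = 1)
    {p t B : ℝ} (hp0 : 0 ≤ p) (hp1 : p ≤ 1) (hB : |t| ≤ B) (h3 : 0 < ∑ i, α i ^ 3) (h31 : ∑ i, α i ^ 3 ≤ 1) :
    phi (2 * B) / 2 * ((∑ i, α i ^ 3) / 2 - 2 * (kap + 1) * kap * ∑ i, α i ^ 4)
      ≤ ∫ xy, kern p t xy.1 xy.2 * bil α xy.1 xy.2 ∂((gaussPi d α).prod (gaussPi d α)) := by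
  rw [integral_prod _ (kernbil_integrable α hp0 hp1 t)]
  have hk0 := kap_nonneg
  set s3 := ∑ i, α i ^ 3 with hs3
  set s4 := ∑ i, α i ^ 4 with hs4
  have hs40 : 0 ≤ s4 := Finset.sum_nonneg fun i _ => by positivity
  set a : ℝ := 1 / (2 * (kap + 1) * s3) with ha
  have ha0 : 0 < a := by positivity
  have i1 := quad_integrable α (fun i => α i ^ 2)
  have i2 : Integrable (fun x => quad (fun i => α i ^ 2) x ^ 2) (gaussPi d α) := (quad_memLp α _).integrable_sq
  have i3 := quad_dev_integrable α α 1
  have i12 : Integrable (fun x => quad (fun i => α i ^ 2) x - a * quad (fun i => α i ^ 2) x ^ 2) (gaussPi d α) :=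
    i1.sub (i2.const_mul a)
  have h := integral_mono (((i12.sub (i3.const_mul (1 / a))).const_mul (phi (2 * B) / 2)))
    (kernbil_integrable α hp0 hp1 t).integral_prod_left (inner_lower hα hB ha0)
  refine le_trans ?_ h
  simp only [Pi.sub_apply]
  rw [integral_const_mul, integral_sub i12 (i3.const_mul _), integral_sub i1 (i2.const_mul _),
    integral_const_mul, integral_const_mul, quad_mean α hα]
  have e1 : ∑ i, α i ^ 2 * α i = s3 := Finset.sum_congr rfl fun i _ => by ring
  have hph := phi_pos (2 * B)
  refine mul_le_mul_of_nonneg_left ?_ (by positivity)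
  rw [e1]
  have b1 := quad_sq_int α hα (fun i => α i ^ 2)
  rw [e1] at b1
  have b2 : ∑ i, (α i ^ 2) ^ 2 * α i ^ 2 ≤ s3 ^ 2 := by
    have : ∑ i, (α i ^ 2) ^ 2 * α i ^ 2 = ∑ i, (α i ^ 3) ^ 2 := Finset.sum_congr rfl fun i _ => by ring
    rw [this]
    exact Finset.sum_sq_le_sq_sum_of_nonneg fun i _ => pow_nonneg (hα i) 3
  have b3 := quad_one_dev hα h2
  have c1 : a * ∫ x, quad (fun i => α i ^ 2) x ^ 2 ∂(gaussPi d α) ≤ s3 / 2 := by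
    have : ∫ x, quad (fun i => α i ^ 2) x ^ 2 ∂(gaussPi d α) ≤ (kap + 1) * s3 ^ 2 := by nlinarith
    calc _ ≤ a * ((kap + 1) * s3 ^ 2) := by gcongr
      _ = s3 / 2 := by rw [ha]; field_simp
  have c2 : 1 / a * ∫ x, (quad α x - 1) ^ 2 ∂(gaussPi d α) ≤ 2 * (kap + 1) * kap * s4 := by
    calc _ ≤ 1 / a * (kap * s4) := by gcongr
      _ = s3 * (2 * (kap + 1) * kap * s4) := by rw [ha]; field_simp
      _ ≤ 1 * (2 * (kap + 1) * kap * s4) := by gcongr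
      _ = _ := by ring
  linarith

/-- signed triangle mean -/
def mm {d : ℕ} (α : Fin d → ℝ) (p t : ℝ) : ℝ :=
  ∫ xy, kern p t xy.1 xy.2 * hk α p t xy.1 xy.2 ∂((gaussPi d α).prod (gaussPi d α))

lemma mm_lower {d : ℕ} {α : Fin d → ℝ} (hα : ∀ i, 0 ≤ α i) (h2 : ∑ i, α i ^ 2 = 1)
    {p t B : ℝ} (hp0 : 0 ≤ p) (hp1 : p ≤ 1) (ht : IsThreshold d α p t) (hB : |t| ≤ B)
    (h3 : 0 < ∑ i, α i ^ 3) (h31 : ∑ i, α i ^ 3 ≤ 1) :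
    phi B ^ 2 * (phi (2 * B) / 2 * ((∑ i, α i ^ 3) / 2)) - (phi (2 * B) / 2 * (2 * (kap + 1) * kap) + C1 B) * ∑ i, α i ^ 4 ≤ mm α p t := by
  obtain ⟨hi, he⟩ := hk_err hα h2 hp0 hp1 ht hB
  have hB0 : 0 ≤ B := (abs_nonneg t).trans hB
  have hlow := kernbil_lower hα h2 hp0 hp1 hB h3 h31
  have hkb := kernbil_integrable α hp0 hp1 t
  have hke : Integrable (fun xy : (Fin d → ℝ) × (Fin d → ℝ) => kern p t xy.1 xy.2 * (hk α p t xy.1 xy.2 - phi t ^ 2 * bil α xy.1 xy.2))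
      ((gaussPi d α).prod (gaussPi d α)) :=
    hi.bdd_mul (c := 1) (ker_meas p t).aestronglyMeasurable (ae_of_all _ fun z => ker_abs_le hp0 hp1 t _ _)
  have e : mm α p t = phi t ^ 2 * (∫ xy, kern p t xy.1 xy.2 * bil α xy.1 xy.2 ∂((gaussPi d α).prod (gaussPi d α)))
     + ∫ xy, kern p t xy.1 xy.2 * (hk α p t xy.1 xy.2 - phi t ^ 2 * bil α xy.1 xy.2) ∂((gaussPi d α).prod (gaussPi d α)) := by
    rw [← integral_const_mul, ← integral_add (hkb.const_mul _) hke]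
    unfold mm
    refine integral_congr_ae (ae_of_all _ fun z => ?_)
    simp only; ring
  have herr : |∫ xy, kern p t xy.1 xy.2 * (hk α p t xy.1 xy.2 - phi t ^ 2 * bil α xy.1 xy.2) ∂((gaussPi d α).prod (gaussPi d α))|
      ≤ C1 B * ∑ i, α i ^ 4 := by
    refine abs_integral_le_integral_abs.trans (le_trans (integral_mono hke.abs hi.abs fun z => ?_) he)
    simp only
    rw [abs_mul]
    exact mul_le_of_le_one_left (abs_nonneg _) (ker_abs_le hp0 hp1 t _ _)
  rw [e]
  have herr' := (abs_le.1 herr).1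
  have hph := phi_pos (2 * B)
  have hk0 := kap_nonneg
  have hs40 : 0 ≤ ∑ i, α i ^ 4 := Finset.sum_nonneg fun i _ => by positivity
  have p1 : phi B ^ 2 ≤ phi t ^ 2 := by
    have := phi_mono (u := t) (v := B) (by rw [abs_of_nonneg hB0]; exact hB)
    have := phi_pos B
    gcongr
  have p2 : phi t ^ 2 ≤ 1 := pow_le_one₀ (phi_pos t).le (phi_le_one t)
  have p0 := sq_nonneg (phi t)
  generalize ∫ xy, kern p t xy.1 xy.2 * bil α xy.1 xy.2 ∂((gaussPi d α).prod (gaussPi d α)) = K at *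
  generalize ∑ i, α i ^ 4 = s4 at *
  generalize ∑ i, α i ^ 3 = s3 at *
  generalize ∫ xy, kern p t xy.1 xy.2 * (hk α p t xy.1 xy.2 - phi t ^ 2 * bil α xy.1 xy.2) ∂((gaussPi d α).prod (gaussPi d α)) = E at *
  have q1 : phi B ^ 2 * (phi (2 * B) / 2 * (s3 / 2)) ≤ phi t ^ 2 * (phi (2 * B) / 2 * (s3 / 2)) := by gcongr
  have q2 : phi t ^ 2 * (phi (2 * B) / 2 * (2 * (kap + 1) * kap * s4)) ≤ 1 * (phi (2 * B) / 2 * (2 * (kap + 1) * kap * s4)) := by gcongr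
  have q3 := mul_le_mul_of_nonneg_left hlow p0
  have q4 : phi t ^ 2 * (phi (2 * B) / 2 * (s3 / 2 - 2 * (kap + 1) * kap * s4)) = phi t ^ 2 * (phi (2 * B) / 2 * (s3 / 2)) - phi t ^ 2 * (phi (2 * B) / 2 * (2 * (kap + 1) * kap * s4)) := by ring
  have q5 : 1 * (phi (2 * B) / 2 * (2 * (kap + 1) * kap * s4)) = (phi (2 * B) / 2 * (2 * (kap + 1) * kap)) * s4 := by ring
  linarith

/-- constants of the first regime, packaged -/
lemma regime_one {p : ℝ} (hp : p ∈ Set.Ioo (0 : ℝ) 1) :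
    ∃ ε > 0, ∃ c > 0, ∃ C > 0, ∀ (d : ℕ) (α : Fin d → ℝ) (t : ℝ), (∀ i, 0 ≤ α i) → ∑ i, α i ^ 2 = 1 →
      IsThreshold d α p t →
      (∫ xy, hk α p t xy.1 xy.2 ^ 2 ∂((gaussPi d α).prod (gaussPi d α)) ≤ C * ∑ i, α i ^ 4) ∧
      ((∀ i, α i ≤ ε) → c * ∑ i, α i ^ 3 ≤ mm α p t) := by
  have hB0 : 0 ≤ Bp p := zero_le_one.trans (one_le_Bp hp)
  set B := Bp p with hB
  have k0 := kap_nonneg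
  have c1p := C1_pos hB0
  have f1 := phi_pos B
  have f2 := phi_pos (2 * B)
  set c := phi B ^ 2 * (phi (2 * B) / 2) / 2 with hc
  set D := (phi (2 * B) / 2 * (2 * (kap + 1) * kap) + C1 B) with hD
  have hc0 : 0 < c := by positivity
  have hD0 : 0 < D := by positivity
  refine ⟨c / 2 / D, by positivity, c / 2, by positivity, 1 + 2 * C1 B, by positivity, ?_⟩
  intro d α t hα h2 ht
  have hBt := thr_bound hα h2 hp ht
  refine ⟨hk_sq_bound hα h2 hp.1.le hp.2.le ht hBt, fun hle => ?_⟩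
  have a1 : ∀ i, α i ≤ 1 := fun i => by
    have : α i ^ 2 ≤ 1 := by
      rw [← h2]; exact Finset.single_le_sum (f := fun i => α i ^ 2) (fun j _ => sq_nonneg _) (Finset.mem_univ i)
    nlinarith [hα i]
  have h31 : ∑ i, α i ^ 3 ≤ 1 := by
    rw [← h2]
    exact Finset.sum_le_sum fun i _ => pow_le_pow_of_le_one (hα i) (a1 i) (by norm_num)
  have h30 : 0 < ∑ i, α i ^ 3 := by
    rcases (Finset.sum_nonneg fun i (_ : i ∈ Finset.univ) => pow_nonneg (hα i) 3).lt_or_eq with h | h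
    · exact h
    · exfalso
      have h' := (Finset.sum_eq_zero_iff_of_nonneg (fun i (_ : i ∈ Finset.univ) => pow_nonneg (hα i) 3)).1 h.symm
      have : ∑ i, α i ^ 2 = 0 := Finset.sum_eq_zero fun i hi => by
        have := h' i hi
        rw [pow_eq_zero_iff (by norm_num)] at this; rw [this]; norm_num
      linarith
  have h4 : ∑ i, α i ^ 4 ≤ c / 2 / D * ∑ i, α i ^ 3 := by
    rw [Finset.mul_sum]
    refine Finset.sum_le_sum fun i _ => ?_
    have : α i ^ 4 = α i * α i ^ 3 := by ring
    rw [this]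
    exact mul_le_mul_of_nonneg_right (hle i) (pow_nonneg (hα i) 3)
  have hm := mm_lower hα h2 hp.1.le hp.2.le ht hBt h30 h31
  rw [← hB, ← hD] at hm
  have e1 : phi B ^ 2 * (phi (2 * B) / 2 * ((∑ i, α i ^ 3) / 2)) = c * ∑ i, α i ^ 3 := by rw [hc]; ring
  have e2 : D * ∑ i, α i ^ 4 ≤ c / 2 * ∑ i, α i ^ 3 := by
    calc _ ≤ D * (c / 2 / D * ∑ i, α i ^ 3) := by gcongr
      _ = _ := by field_simp
  linarith


lemma dotp_single_coord {d : ℕ} (i : Fin d) (c : ℝ) (y : Fin d → ℝ) : dotp (Pi.single i c) y = c * y i := by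
  unfold dotp
  rw [Finset.sum_eq_single i]
  · simp
  · intro j _ hj; simp [hj]
  · simp

lemma bil_single_coord {d : ℕ} (α x : Fin d → ℝ) (i : Fin d) (c : ℝ) :
    bil α x (Pi.single i c) = α i * x i * c := by
  unfold bil
  rw [Finset.sum_eq_single i]
  · simp
  · intro j _ hj; simp [hj]
  · simp

lemma inner_lower_two {d : ℕ} {α : Fin d → ℝ} (hα : ∀ i, 0 ≤ α i) {p t B ε a M : ℝ} (hB : |t| ≤ B)
    (ha : 0 < a) (hM : 1 ≤ M) (hε : 0 < ε) (i : Fin d) (hi : ε ≤ α i) (x : Fin d → ℝ) :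
    ε ^ 2 / 2 / M * phi (2 * B / ε) * (2 * a * (1 / α i * x i ^ 2) - a - a ^ 2 * (1 / α i ^ 2 * x i ^ 4) - 1 / M * quad α x)
      ≤ ∫ y, kern p t x y * (x i * y i) ∂(gaussPi d α) := by
  have hB0 : 0 ≤ B := (abs_nonneg t).trans hB
  have hai : 0 < α i := by linarith
  have hph := phi_pos (2 * B / ε)
  have hX2 : 1 / α i ^ 2 * x i ^ 4 = (1 / α i * x i ^ 2) ^ 2 := by ring
  rw [hX2]
  set X := 1 / α i * x i ^ 2 with hX
  have hX0 : 0 ≤ X := by positivity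
  have hxX : α i * x i * x i = α i ^ 2 * X := by rw [hX]; field_simp
  have hQ0 : 0 ≤ quad α x := quad_nonneg α x hα
  simp_rw [← dotp_single_coord]
  have hbil := bil_single_coord α x i (x i)
  have hpos : 0 ≤ ∫ y, kern p t x y * dotp (Pi.single i (x i)) y ∂(gaussPi d α) := by
    refine half_int_nonneg hα p t x _ (fun h => ?_) ?_
    · have := zero_of_quad hα x h i
      rcases mul_eq_zero.1 this with h | h
      · linarith
      · rw [h]; simp
    · rw [hbil, hxX]; positivity
  have hsq : 2 * a * X - a ^ 2 * X ^ 2 ≤ 1 := by nlinarith [sq_nonneg (a * X - 1)]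
  by_cases h1 : 1/2 ≤ X
  swap
  · refine le_trans (mul_nonpos_of_nonneg_of_nonpos (by positivity) ?_) hpos
    have : 0 ≤ a ^ 2 * X ^ 2 + 1 / M * quad α x := by positivity
    nlinarith
  by_cases hQM : quad α x ≤ M
  swap
  · refine le_trans (mul_nonpos_of_nonneg_of_nonpos (by positivity) ?_) hpos
    push Not at hQM
    have : 1 ≤ 1 / M * quad α x := by
      rw [one_div, ← div_eq_inv_mul, le_div_iff₀ (by linarith)]; linarith
    linarith
  have hQl : α i ^ 2 * X ≤ quad α x := by
    rw [← hxX]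
    have := Finset.single_le_sum (f := fun i => α i * x i ^ 2) (fun j _ => mul_nonneg (hα j) (sq_nonneg _)) (Finset.mem_univ i)
    unfold quad
    refine le_trans (le_of_eq ?_) this
    ring
  have hε2 : ε ^ 2 ≤ α i ^ 2 := by gcongr
  have hlow : ε ^ 2 / 2 ≤ α i ^ 2 * X := by
    have : ε ^ 2 * (1/2) ≤ α i ^ 2 * X := by gcongr
    linarith
  have hε0 : 0 < ε ^ 2 := by positivity
  have hQ : 0 < bil α x x := by rw [bil_self]; linarith
  rw [half_int hα p t x _ (Real.sqrt_pos.2 hQ) (Real.sq_sqrt hQ.le).symm, hbil, hxX]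
  set σ := √(bil α x x) with hσ
  have hs : σ ^ 2 = quad α x := by rw [hσ, Real.sq_sqrt hQ.le, bil_self]
  have hs0 : 0 < σ := Real.sqrt_pos.2 hQ
  have s1 : ε / 2 ≤ σ := by
    refine le_of_sq_le_sq ?_ hs0.le
    rw [hs, div_pow]; linarith
  have s2 : σ ≤ M := by
    refine le_of_sq_le_sq ?_ (by linarith)
    rw [hs]; nlinarith
  have hp : phi (2 * B / ε) ≤ phi (t / σ) := by
    apply phi_mono
    rw [abs_div, abs_of_pos hs0, abs_of_nonneg (by positivity : 0 ≤ 2 * B / ε), div_le_iff₀ hs0]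
    calc |t| ≤ B := hB
      _ = 2 * B / ε * (ε / 2) := by field_simp
      _ ≤ _ := by gcongr
  calc _ ≤ ε ^ 2 / 2 / M * phi (2 * B / ε) * 1 := by
        have : 0 ≤ 1 / M * quad α x := by positivity
        gcongr
        linarith
    _ = ε ^ 2 / 2 / M * phi (2 * B / ε) := by ring
    _ ≤ _ := by gcongr

lemma coord_prod_integrable {d : ℕ} (α : Fin d → ℝ) {p : ℝ} (hp0 : 0 ≤ p) (hp1 : p ≤ 1) (t : ℝ) (i : Fin d) :
    Integrable (fun xy : (Fin d → ℝ) × (Fin d → ℝ) => kern p t xy.1 xy.2 * (xy.1 i * xy.2 i))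
      ((gaussPi d α).prod (gaussPi d α)) := by
  have h1 : Integrable (fun x : Fin d → ℝ => x i) (gaussPi d α) := by simpa using gauss_coord_integrable α i 1
  exact (h1.mul_prod h1).bdd_mul (c := 1) (ker_meas p t).aestronglyMeasurable
    (ae_of_all _ fun _ => ker_abs_le hp0 hp1 t _ _)

lemma coord_sq_int {d : ℕ} {α : Fin d → ℝ} (hα : ∀ i, 0 ≤ α i) (i : Fin d) :
    ∫ x : Fin d → ℝ, x i ^ 2 ∂(gaussPi d α) = α i := by
  rw [gauss_coord_integral α i (fun x => x ^ 2) (by fun_prop), gaussian_second]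
  simp [hα i]

lemma coord_four_int {d : ℕ} {α : Fin d → ℝ} (hα : ∀ i, 0 ≤ α i) (i : Fin d) :
    ∫ x : Fin d → ℝ, x i ^ 4 ∂(gaussPi d α) = kap * α i ^ 2 := by
  rw [gauss_coord_integral α i (fun x => x ^ 4) (by fun_prop), gaussian_fourth (hα i)]

lemma coord_lower {d : ℕ} {α : Fin d → ℝ} (hα : ∀ i, 0 ≤ α i) (h2 : ∑ i, α i ^ 2 = 1)
    {p t B ε : ℝ} (hp0 : 0 ≤ p) (hp1 : p ≤ 1) (hB : |t| ≤ B)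
    (hε : 0 < ε) (i : Fin d) (hi : ε ≤ α i) :
    ε ^ 2 / 2 / (8 * (kap + 1)) * phi (2 * B / ε) * (1 / (2 * (kap + 1)) / 4) ≤
      ∫ xy, kern p t xy.1 xy.2 * (xy.1 i * xy.2 i) ∂((gaussPi d α).prod (gaussPi d α)) := by
  rw [integral_prod _ (coord_prod_integrable α hp0 hp1 t i)]
  have hk0 := kap_nonneg
  have hai : 0 < α i := by linarith
  set a : ℝ := 1 / (2 * (kap + 1)) with ha
  have ha0 : 0 < a := by positivity
  set M : ℝ := 8 * (kap + 1) with hM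
  have hM1 : 1 ≤ M := by linarith
  have i1 : Integrable (fun x : Fin d → ℝ => 2 * a * (1 / α i * x i ^ 2)) (gaussPi d α) :=
    ((gauss_coord_integrable α i 2).const_mul _).const_mul _
  have i2 : Integrable (fun x : Fin d → ℝ => a ^ 2 * (1 / α i ^ 2 * x i ^ 4)) (gaussPi d α) :=
    ((gauss_coord_integrable α i 4).const_mul _).const_mul _
  have i3 : Integrable (fun x : Fin d → ℝ => 1 / M * quad α x) (gaussPi d α) :=
    (quad_integrable α α).const_mul _
  have i12 : Integrable (fun x : Fin d → ℝ => 2 * a * (1 / α i * x i ^ 2) - a) (gaussPi d α) := i1.sub (integrable_const a)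
  have i123 : Integrable (fun x : Fin d → ℝ => 2 * a * (1 / α i * x i ^ 2) - a - a ^ 2 * (1 / α i ^ 2 * x i ^ 4)) (gaussPi d α) := i12.sub i2
  have h := integral_mono ((i123.sub i3).const_mul (ε ^ 2 / 2 / M * phi (2 * B / ε)))
    (coord_prod_integrable α hp0 hp1 t i).integral_prod_left
    (inner_lower_two hα hB ha0 hM1 hε i hi)
  refine le_trans ?_ h
  simp only [Pi.sub_apply]
  have e1 : ∑ i, α i * α i = 1 := by rw [← h2]; exact Finset.sum_congr rfl fun i _ => by ring
  rw [integral_const_mul, integral_sub i123 i3, integral_sub i12 i2, integral_sub i1 (integrable_const a),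
    integral_const_mul, integral_const_mul, integral_const_mul, integral_const_mul, integral_const_mul,
    coord_sq_int hα, coord_four_int hα, quad_mean α hα, e1]
  have hph := phi_pos (2 * B / ε)
  refine mul_le_mul_of_nonneg_left ?_ (by positivity)
  simp only [integral_const, probReal_univ, smul_eq_mul, one_mul, mul_one]
  have f1 : 1 / α i * α i = 1 := by field_simp
  have f2 : 1 / α i ^ 2 * (kap * α i ^ 2) = kap := by field_simp
  have f3 : 1 / M = a / 4 := by rw [hM, ha]; field_simp; norm_num
  have f4 : a ^ 2 * kap ≤ a / 2 := by
    have : a * (kap + 1) = 1 / 2 := by rw [ha]; field_simp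
    have : a * kap ≤ 1/2 := by nlinarith
    nlinarith
  rw [f1, f2, f3]
  linarith

/-- truncation -/
def clip (R u : ℝ) : ℝ := max (-R) (min R u)

lemma clip_meas (R : ℝ) : Measurable (clip R) := by unfold clip; fun_prop

lemma clip_abs_le {R : ℝ} (hR : 0 < R) (u : ℝ) : |clip R u| ≤ R := by
  unfold clip
  rw [abs_le]; constructor
  · exact le_max_left _ _
  · exact max_le (by linarith) (min_le_left _ _)

lemma clip_abs_le' {R : ℝ} (hR : 0 < R) (u : ℝ) : |clip R u| ≤ |u| := by
  unfold clip
  rcases le_total u (-R) with h | h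
  · rw [min_eq_right (by linarith), max_eq_left h, abs_neg, abs_of_pos hR, abs_of_neg (by linarith)]; linarith
  · rcases le_total u R with h' | h'
    · rw [min_eq_right h', max_eq_right h]
    · rw [min_eq_left h', max_eq_right (by linarith), abs_of_pos hR, abs_of_pos (by linarith)]; linarith

lemma clip_dev {R : ℝ} (hR : 0 < R) (u : ℝ) : |u - clip R u| ≤ u ^ 2 / R := by
  rw [le_div_iff₀ hR]
  unfold clip
  rcases le_total u (-R) with h | h
  · rw [min_eq_right (by linarith), max_eq_left h, abs_of_nonpos (by linarith)]; nlinarith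
  · rcases le_total u R with h' | h'
    · rw [min_eq_right h', max_eq_right h]; simp; positivity
    · rw [min_eq_left h', max_eq_right (by linarith), abs_of_nonneg (by linarith)]; nlinarith

lemma clip_prod_dev {R : ℝ} (hR : 0 < R) (u v : ℝ) :
    |u * v - clip R u * clip R v| ≤ 1 / R * (u ^ 2 * v ^ 2 + u ^ 2 / 2 + v ^ 2 / 2) := by
  have e : u * v - clip R u * clip R v = (u - clip R u) * v + clip R u * (v - clip R v) := by ring
  rw [e]
  refine (abs_add_le _ _).trans ?_
  rw [abs_mul, abs_mul]
  have h1 : |u - clip R u| * |v| ≤ u ^ 2 / R * ((1 + v ^ 2) / 2) := by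
    have := clip_dev hR u
    have h3 : |v| ≤ (1 + v ^ 2) / 2 := by rw [← sq_abs v]; nlinarith [sq_nonneg (|v| - 1)]
    gcongr
  have h2 : |clip R u| * |v - clip R v| ≤ ((1 + u ^ 2) / 2) * (v ^ 2 / R) := by
    have := clip_dev hR v
    have h3 : |u| ≤ (1 + u ^ 2) / 2 := by rw [← sq_abs u]; nlinarith [sq_nonneg (|u| - 1)]
    have := (clip_abs_le' hR u).trans h3
    gcongr
  refine (add_le_add h1 h2).trans (le_of_eq ?_)
  field_simp; ring

lemma regime_two {p : ℝ} (hp : p ∈ Set.Ioo (0 : ℝ) 1) {ε : ℝ} (hε : 0 < ε) :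
    ∃ c > 0, ∀ (d : ℕ) (α : Fin d → ℝ) (t : ℝ), (∀ i, 0 ≤ α i) → ∑ i, α i ^ 2 = 1 →
      IsThreshold d α p t → ∀ i, ε ≤ α i →
      ∃ f : (Fin d → ℝ) → ℝ, Measurable f ∧ (∀ x, |f x| ≤ 1) ∧
        c ≤ ∫ xy, kern p t xy.1 xy.2 * (f xy.1 * f xy.2) ∂((gaussPi d α).prod (gaussPi d α)) := by
  have hB0 : 0 ≤ Bp p := zero_le_one.trans (one_le_Bp hp)
  set B := Bp p with hB
  have k0 := kap_nonneg
  have f2 := phi_pos (2 * B / ε)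
  set c := ε ^ 2 / 2 / (8 * (kap + 1)) * phi (2 * B / ε) * (1 / (2 * (kap + 1)) / 4) with hc
  have hc0 : 0 < c := by positivity
  set R := 4 / c with hR
  have hR0 : 0 < R := by positivity
  refine ⟨c / 2 / R ^ 2, by positivity, ?_⟩
  intro d α t hα h2 ht i hi
  have hBt := thr_bound hα h2 hp ht
  have hlow := coord_lower hα h2 hp.1.le hp.2.le hBt hε i hi
  rw [← hB, ← hc] at hlow
  have a1 : α i ≤ 1 := by
    have : α i ^ 2 ≤ 1 := by
      rw [← h2]; exact Finset.single_le_sum (f := fun i => α i ^ 2) (fun j _ => sq_nonneg _) (Finset.mem_univ i)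
    nlinarith [hα i]
  have hcm : Measurable (fun x : Fin d → ℝ => clip R (x i)) := (clip_meas R).comp (measurable_pi_apply i)
  refine ⟨fun x => clip R (x i) / R, hcm.div_const R, fun x => ?_, ?_⟩
  · rw [abs_div, abs_of_pos hR0, div_le_one hR0]; exact clip_abs_le hR0 _
  have hcc : Integrable (fun xy : (Fin d → ℝ) × (Fin d → ℝ) => kern p t xy.1 xy.2 * (clip R (xy.1 i) * clip R (xy.2 i)))
      ((gaussPi d α).prod (gaussPi d α)) := by
    refine Integrable.of_bound ((ker_meas p t).mul ((hcm.comp measurable_fst).mul (hcm.comp measurable_snd))).aestronglyMeasurable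
      (1 * (R * R)) (ae_of_all _ fun z => ?_)
    rw [norm_mul, norm_mul]
    have b1 := ker_abs_le hp.1.le hp.2.le t z.1 z.2
    have b2 := clip_abs_le hR0 (z.1 i)
    have b3 := clip_abs_le hR0 (z.2 i)
    simp only [Real.norm_eq_abs]
    gcongr
  have hxy := coord_prod_integrable α hp.1.le hp.2.le t i
  have g2 := gauss_coord_integrable α i 2
  have i1 : Integrable (fun xy : (Fin d → ℝ) × (Fin d → ℝ) => xy.1 i ^ 2 * xy.2 i ^ 2) ((gaussPi d α).prod (gaussPi d α)) :=
    g2.mul_prod g2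
  have i2 : Integrable (fun xy : (Fin d → ℝ) × (Fin d → ℝ) => xy.1 i ^ 2 / 2) ((gaussPi d α).prod (gaussPi d α)) :=
    (g2.comp_fst _).div_const 2
  have i3 : Integrable (fun xy : (Fin d → ℝ) × (Fin d → ℝ) => xy.2 i ^ 2 / 2) ((gaussPi d α).prod (gaussPi d α)) :=
    (g2.comp_snd _).div_const 2
  have i12 : Integrable (fun xy : (Fin d → ℝ) × (Fin d → ℝ) => xy.1 i ^ 2 * xy.2 i ^ 2 + xy.1 i ^ 2 / 2) ((gaussPi d α).prod (gaussPi d α)) := i1.add i2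
  have hdiff : ∫ xy, kern p t xy.1 xy.2 * (xy.1 i * xy.2 i) ∂((gaussPi d α).prod (gaussPi d α))
      - ∫ xy, kern p t xy.1 xy.2 * (clip R (xy.1 i) * clip R (xy.2 i)) ∂((gaussPi d α).prod (gaussPi d α)) ≤ 1 / R * 2 := by
    rw [← integral_sub hxy hcc]
    have hle : ∫ xy, (kern p t xy.1 xy.2 * (xy.1 i * xy.2 i) - kern p t xy.1 xy.2 * (clip R (xy.1 i) * clip R (xy.2 i))) ∂((gaussPi d α).prod (gaussPi d α))
       ≤ ∫ xy, 1 / R * (xy.1 i ^ 2 * xy.2 i ^ 2 + xy.1 i ^ 2 / 2 + xy.2 i ^ 2 / 2) ∂((gaussPi d α).prod (gaussPi d α)) := by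
      refine integral_mono (hxy.sub hcc) ((i12.add i3).const_mul _) fun z => ?_
      simp only [Pi.add_apply]
      rw [← mul_sub]
      refine (le_abs_self _).trans ?_
      rw [abs_mul]
      exact (mul_le_of_le_one_left (abs_nonneg _) (ker_abs_le hp.1.le hp.2.le t _ _)).trans (clip_prod_dev hR0 _ _)
    refine hle.trans ?_
    have hs := coord_sq_int hα i
    have j1 : ∫ xy, xy.1 i ^ 2 * xy.2 i ^ 2 ∂((gaussPi d α).prod (gaussPi d α)) = α i * α i := by
      rw [integral_prod_mul (fun x : Fin d → ℝ => x i ^ 2) (fun x : Fin d → ℝ => x i ^ 2), hs]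
    have j2 : ∫ xy, xy.1 i ^ 2 / 2 ∂((gaussPi d α).prod (gaussPi d α)) = α i / 2 := by
      rw [integral_fun_fst (f := fun x : Fin d → ℝ => x i ^ 2 / 2), integral_div, hs]; simp
    have j3 : ∫ xy, xy.2 i ^ 2 / 2 ∂((gaussPi d α).prod (gaussPi d α)) = α i / 2 := by
      rw [integral_fun_snd (f := fun x : Fin d → ℝ => x i ^ 2 / 2), integral_div, hs]; simp
    rw [integral_const_mul, integral_add i12 i3, integral_add i1 i2, j1, j2, j3]
    refine mul_le_mul_of_nonneg_left ?_ (by positivity)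
    nlinarith [hα i]
  have e : (fun xy : (Fin d → ℝ) × (Fin d → ℝ) => kern p t xy.1 xy.2 * (clip R (xy.1 i) / R * (clip R (xy.2 i) / R)))
      = fun xy => 1 / R ^ 2 * (kern p t xy.1 xy.2 * (clip R (xy.1 i) * clip R (xy.2 i))) := by
    ext xy; field_simp
  simp only []
  rw [e, integral_const_mul]
  have : 1 / R * 2 = c / 2 := by rw [hR]; field_simp; norm_num
  have h3 : c / 2 ≤ ∫ xy, kern p t xy.1 xy.2 * (clip R (xy.1 i) * clip R (xy.2 i)) ∂((gaussPi d α).prod (gaussPi d α)) := by linarith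
  calc c / 2 / R ^ 2 = 1 / R ^ 2 * (c / 2) := by ring
    _ ≤ _ := by gcongr


lemma pi_comp_inj {S : Type*} [MeasurableSpace S] (μ : Measure S) [IsProbabilityMeasure μ] {ι κ : Type*}
    [Fintype ι] [Fintype κ] (e : κ → ι) (he : Function.Injective e) :
    MeasurePreserving (fun (X : ι → S) => fun k => X (e k)) (Measure.pi fun _ => μ) (Measure.pi fun _ => μ) := by
  refine ⟨by fun_prop, ?_⟩
  have h : iIndepFun (fun (i : ι) (z : ι → S) => z i) (Measure.pi fun _ => μ) :=
    iIndepFun_pi (X := fun _ x => x) (fun i => by fun_prop)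
  have h2 := h.precomp he
  have h3 := (iIndepFun_iff_map_fun_eq_pi_map (fun k => (measurable_pi_apply (e k)).aemeasurable)).1 h2
  refine h3.trans ?_
  congr 1
  ext1 k
  exact (measurePreserving_eval (fun _ : ι => μ) (e k)).map_eq

lemma pi_succ_int {S : Type*} [MeasurableSpace S] (μ : Measure S) [IsProbabilityMeasure μ] {m : ℕ}
    (F : (Fin (m + 1) → S) → ℝ) (hF : Measurable F) {C : ℝ} (hC : ∀ X, |F X| ≤ C) :
    ∫ X, F X ∂(Measure.pi fun _ => μ) = ∫ x, ∫ Y, F (Fin.cons x Y) ∂(Measure.pi fun _ => μ) ∂μ := by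
  have h := measurePreserving_piFinSuccAbove (fun _ : Fin (m + 1) => μ) 0
  rw [← h.symm.integral_comp' (g := F), integral_prod]
  · have key : ∀ (x : S) (Y : Fin m → S), (MeasurableEquiv.piFinSuccAbove (fun _ => S) 0).symm (x, Y)
        = (Fin.cons x Y : Fin (m + 1) → S) := fun x Y => Fin.insertNth_zero' x Y
    simp_rw [key]
  · exact Integrable.of_bound (hF.comp (MeasurableEquiv.measurable _)).aestronglyMeasurable C (ae_of_all _ fun z => hC _)

lemma cons_meas {S : Type*} [MeasurableSpace S] {m : ℕ} (x : S) :
    Measurable (fun Y : Fin m → S => (Fin.cons x Y : Fin (m + 1) → S)) := by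
  refine measurable_pi_lambda _ fun i => ?_
  refine Fin.cases ?_ (fun j => ?_) i
  · simp
  · simpa using measurable_pi_apply j

section
variable {S : Type*} [MeasurableSpace S] (μ : Measure S) [IsProbabilityMeasure μ]

lemma int1 (F : S → ℝ) (hF : Measurable (fun X : Fin 1 → S => F (X 0))) {C : ℝ} (hC : ∀ x, |F x| ≤ C) :
    ∫ X : Fin 1 → S, F (X 0) ∂(Measure.pi fun _ => μ) = ∫ x, F x ∂μ := by
  rw [pi_succ_int μ (fun X => F (X 0)) hF (fun _ => hC _)]
  simp

lemma int2 (F : S → S → ℝ) (hF : Measurable (fun X : Fin 2 → S => F (X 0) (X 1))) {C : ℝ} (hC : ∀ x y, |F x y| ≤ C) :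
    ∫ X : Fin 2 → S, F (X 0) (X 1) ∂(Measure.pi fun _ => μ) = ∫ x, ∫ y, F x y ∂μ ∂μ := by
  rw [pi_succ_int μ (fun X => F (X 0) (X 1)) hF (fun _ => hC _ _)]
  congr 1; ext1 x
  exact int1 μ (F x) (hF.comp (cons_meas x)) (hC x)

lemma int3 (F : S → S → S → ℝ) (hF : Measurable (fun X : Fin 3 → S => F (X 0) (X 1) (X 2))) {C : ℝ} (hC : ∀ x y z, |F x y z| ≤ C) :
    ∫ X : Fin 3 → S, F (X 0) (X 1) (X 2) ∂(Measure.pi fun _ => μ) = ∫ x, ∫ y, ∫ z, F x y z ∂μ ∂μ ∂μ := by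
  rw [pi_succ_int μ (fun X => F (X 0) (X 1) (X 2)) hF (fun _ => hC _ _ _)]
  congr 1; ext1 x
  exact int2 μ (F x) (hF.comp (cons_meas x)) (hC x)

lemma int4 (F : S → S → S → S → ℝ) (hF : Measurable (fun X : Fin 4 → S => F (X 0) (X 1) (X 2) (X 3))) {C : ℝ}
    (hC : ∀ x y z w, |F x y z w| ≤ C) :
    ∫ X : Fin 4 → S, F (X 0) (X 1) (X 2) (X 3) ∂(Measure.pi fun _ => μ) = ∫ x, ∫ y, ∫ z, ∫ w, F x y z w ∂μ ∂μ ∂μ ∂μ := by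
  rw [pi_succ_int μ (fun X => F (X 0) (X 1) (X 2) (X 3)) hF (fun _ => hC _ _ _ _)]
  congr 1; ext1 x
  exact int3 μ (F x) (hF.comp (cons_meas x)) (hC x)

lemma int5 (F : S → S → S → S → S → ℝ) (hF : Measurable (fun X : Fin 5 → S => F (X 0) (X 1) (X 2) (X 3) (X 4))) {C : ℝ}
    (hC : ∀ x y z w v, |F x y z w v| ≤ C) :
    ∫ X : Fin 5 → S, F (X 0) (X 1) (X 2) (X 3) (X 4) ∂(Measure.pi fun _ => μ)
      = ∫ x, ∫ y, ∫ z, ∫ w, ∫ v, F x y z w v ∂μ ∂μ ∂μ ∂μ ∂μ := by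
  rw [pi_succ_int μ (fun X => F (X 0) (X 1) (X 2) (X 3) (X 4)) hF (fun _ => hC _ _ _ _ _)]
  congr 1; ext1 x
  exact int4 μ (F x) (hF.comp (cons_meas x)) (hC x)

lemma int6 (F : S → S → S → S → S → S → ℝ)
    (hF : Measurable (fun X : Fin 6 → S => F (X 0) (X 1) (X 2) (X 3) (X 4) (X 5))) {C : ℝ}
    (hC : ∀ x y z w v u, |F x y z w v u| ≤ C) :
    ∫ X : Fin 6 → S, F (X 0) (X 1) (X 2) (X 3) (X 4) (X 5) ∂(Measure.pi fun _ => μ)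
      = ∫ x, ∫ y, ∫ z, ∫ w, ∫ v, ∫ u, F x y z w v u ∂μ ∂μ ∂μ ∂μ ∂μ ∂μ := by
  rw [pi_succ_int μ (fun X => F (X 0) (X 1) (X 2) (X 3) (X 4) (X 5)) hF (fun _ => hC _ _ _ _ _ _)]
  congr 1; ext1 x
  exact int5 μ (F x) (hF.comp (cons_meas x)) (hC x)
end


lemma pi_int_inj {S : Type*} [MeasurableSpace S] (μ : Measure S) [IsProbabilityMeasure μ] {ι κ : Type*}
    [Fintype ι] [Fintype κ] (e : κ → ι) (he : Function.Injective e) (F : (κ → S) → ℝ) (hF : Measurable F) :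
    ∫ X : ι → S, F (fun k => X (e k)) ∂(Measure.pi fun _ => μ) = ∫ Y, F Y ∂(Measure.pi fun _ => μ) := by
  have h := pi_comp_inj μ e he
  rw [← h.map_eq, integral_map h.measurable.aemeasurable hF.aestronglyMeasurable]

section
variable {S : Type*} [MeasurableSpace S] (μ : Measure S) [IsProbabilityMeasure μ]

/-- triangle product -/
def tri (K : S → S → ℝ) (x y z : S) : ℝ := K x y * (K x z * K y z)

/-- two-step kernel, abstract version -/
def hka (K : S → S → ℝ) (x y : S) : ℝ := ∫ z, K x z * K y z ∂μ

variable {K : S → S → ℝ}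

lemma K_comp (hKm : Measurable (Function.uncurry K)) {Ω : Type*} [MeasurableSpace Ω] {f g : Ω → S} (hf : Measurable f) (hg : Measurable g) :
    Measurable (fun w => K (f w) (g w)) := hKm.comp (hf.prodMk hg)

lemma tri_comp (hKm : Measurable (Function.uncurry K)) {Ω : Type*} [MeasurableSpace Ω] {f g h : Ω → S} (hf : Measurable f) (hg : Measurable g) (hh : Measurable h) :
    Measurable (fun w => tri K (f w) (g w) (h w)) :=
  (K_comp hKm hf hg).mul ((K_comp hKm hf hh).mul (K_comp hKm hg hh))

lemma tri_abs (hK1 : ∀ x y, |K x y| ≤ 1) (x y z : S) : |tri K x y z| ≤ 1 := by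
  unfold tri
  rw [abs_mul, abs_mul]
  exact mul_le_one₀ (hK1 _ _) (by positivity) (mul_le_one₀ (hK1 _ _) (abs_nonneg _) (hK1 _ _))

lemma tri_swap12 (hs : ∀ x y, K x y = K y x) (x y z : S) : tri K x y z = tri K y x z := by
  unfold tri; rw [hs x y]; ring

lemma tri_swap23 (hs : ∀ x y, K x y = K y x) (x y z : S) : tri K x y z = tri K x z y := by
  unfold tri; rw [hs z y]; ring

lemma tri_mul_abs (hK1 : ∀ x y, |K x y| ≤ 1) (x y z u v w : S) : |tri K x y z * tri K u v w| ≤ 1 := by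
  rw [abs_mul]; exact mul_le_one₀ (tri_abs hK1 _ _ _) (abs_nonneg _) (tri_abs hK1 _ _ _)

lemma hka_meas (hKm : Measurable (Function.uncurry K)) : Measurable (fun w : S × S => hka μ K w.1 w.2) := by
  have : Measurable (fun w : (S × S) × S => K w.1.1 w.2 * K w.1.2 w.2) :=
    (K_comp hKm (measurable_fst.comp measurable_fst) measurable_snd).mul
      (K_comp hKm (measurable_snd.comp measurable_fst) measurable_snd)
  exact (this.stronglyMeasurable.integral_prod_right' (ν := μ)).measurable

lemma hka_abs (hK1 : ∀ x y, |K x y| ≤ 1) (x y : S) : |hka μ K x y| ≤ 1 := by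
  unfold hka
  have := norm_integral_le_of_norm_le_const (μ := μ) (f := fun z => K x z * K y z)
    (C := 1) (ae_of_all _ fun z => by
      rw [Real.norm_eq_abs, abs_mul]
      exact mul_le_one₀ (hK1 x z) (abs_nonneg _) (hK1 y z))
  simpa using this

lemma tri_int_one (x y : S) : ∫ z, tri K x y z ∂μ = K x y * hka μ K x y := by
  unfold tri hka; rw [integral_const_mul]

variable {ι : Type*} [Fintype ι]

lemma E_mean (hKm : Measurable (Function.uncurry K)) (hK1 : ∀ x y, |K x y| ≤ 1) (v : Fin 3 → ι) (hv : Function.Injective v) :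
    ∫ X : ι → S, tri K (X (v 0)) (X (v 1)) (X (v 2)) ∂(Measure.pi fun _ => μ)
      = ∫ x, ∫ y, K x y * hka μ K x y ∂μ ∂μ := by
  have hm : Measurable (fun Y : Fin 3 → S => tri K (Y 0) (Y 1) (Y 2)) := tri_comp hKm (by fun_prop) (by fun_prop) (by fun_prop)
  rw [pi_int_inj μ v hv (fun Y => tri K (Y 0) (Y 1) (Y 2)) hm, int3 μ (tri K) hm (tri_abs hK1)]
  simp_rw [tri_int_one]

lemma E_none (hKm : Measurable (Function.uncurry K)) (hK1 : ∀ x y, |K x y| ≤ 1) (v : Fin 6 → ι) (hv : Function.Injective v) :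
    ∫ X : ι → S, tri K (X (v 0)) (X (v 1)) (X (v 2)) * tri K (X (v 3)) (X (v 4)) (X (v 5)) ∂(Measure.pi fun _ => μ)
      = (∫ x, ∫ y, K x y * hka μ K x y ∂μ ∂μ) ^ 2 := by
  have hm : Measurable (fun Y : Fin 6 → S => tri K (Y 0) (Y 1) (Y 2) * tri K (Y 3) (Y 4) (Y 5)) :=
    (tri_comp hKm (by fun_prop) (by fun_prop) (by fun_prop)).mul (tri_comp hKm (by fun_prop) (by fun_prop) (by fun_prop))
  rw [pi_int_inj μ v hv (fun Y => tri K (Y 0) (Y 1) (Y 2) * tri K (Y 3) (Y 4) (Y 5)) hm,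
    int6 μ (fun a b c d e f => tri K a b c * tri K d e f) hm (fun _ _ _ _ _ _ => tri_mul_abs hK1 _ _ _ _ _ _)]
  simp_rw [integral_const_mul, integral_mul_const, tri_int_one]
  ring

lemma E_one (hKm : Measurable (Function.uncurry K)) (hK1 : ∀ x y, |K x y| ≤ 1) (v : Fin 5 → ι) (hv : Function.Injective v) :
    ∫ X : ι → S, tri K (X (v 0)) (X (v 1)) (X (v 2)) * tri K (X (v 0)) (X (v 3)) (X (v 4)) ∂(Measure.pi fun _ => μ)
      ≤ ∫ x, ∫ y, hka μ K x y ^ 2 ∂μ ∂μ := by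
  have hm : Measurable (fun Y : Fin 5 → S => tri K (Y 0) (Y 1) (Y 2) * tri K (Y 0) (Y 3) (Y 4)) :=
    (tri_comp hKm (by fun_prop) (by fun_prop) (by fun_prop)).mul (tri_comp hKm (by fun_prop) (by fun_prop) (by fun_prop))
  rw [pi_int_inj μ v hv (fun Y => tri K (Y 0) (Y 1) (Y 2) * tri K (Y 0) (Y 3) (Y 4)) hm,
    int5 μ (fun a b c d e => tri K a b c * tri K a d e) hm (fun _ _ _ _ _ => tri_mul_abs hK1 _ _ _ _ _ _)]
  simp_rw [integral_const_mul, integral_mul_const, tri_int_one]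
  have hm2 : Measurable (fun w : S × S => K w.1 w.2 * hka μ K w.1 w.2) :=
    (K_comp hKm measurable_fst measurable_snd).mul (hka_meas μ hKm)
  have hab : ∀ x y, |K x y * hka μ K x y| ≤ 1 := fun x y => by
    rw [abs_mul]; exact mul_le_one₀ (hK1 _ _) (abs_nonneg _) (hka_abs μ hK1 _ _)
  have hfm : Measurable (fun x => ∫ y, K x y * hka μ K x y ∂μ) :=
    (hm2.stronglyMeasurable.integral_prod_right' (ν := μ)).measurable
  have hfa : ∀ x, |∫ y, K x y * hka μ K x y ∂μ| ≤ 1 := fun x => by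
    have := norm_integral_le_of_norm_le_const (μ := μ) (f := fun y => K x y * hka μ K x y) (C := 1)
      (ae_of_all _ fun y => hab x y)
    simpa using this
  have hq : Integrable (fun w : S × S => hka μ K w.1 w.2 ^ 2) (μ.prod μ) :=
    Integrable.of_bound ((hka_meas μ hKm).pow_const 2).aestronglyMeasurable 1 (ae_of_all _ fun w => by
      rw [norm_pow]; exact pow_le_one₀ (norm_nonneg _) (hka_abs μ hK1 _ _))
  refine integral_mono ?_ hq.integral_prod_left fun x => ?_
  · refine Integrable.of_bound (hfm.mul hfm).aestronglyMeasurable 1 (ae_of_all _ fun x => ?_)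
    rw [norm_mul]; exact mul_le_one₀ (hfa x) (norm_nonneg _) (hfa x)
  · have hm3 : Measurable (fun y => K x y * hka μ K x y) := hm2.comp (measurable_const.prodMk measurable_id)
    have hmem : MemLp (fun y => K x y * hka μ K x y) 2 μ :=
      MemLp.of_bound hm3.aestronglyMeasurable 1 (ae_of_all _ fun y => hab x y)
    have hv := variance_nonneg (fun y => K x y * hka μ K x y) μ
    rw [variance_eq_sub hmem] at hv
    have hle : ∫ y, ((fun y => K x y * hka μ K x y) ^ 2) y ∂μ ≤ ∫ y, hka μ K x y ^ 2 ∂μ := by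
      have hh : Measurable (fun y => hka μ K x y) := (hka_meas μ hKm).comp (measurable_const.prodMk measurable_id)
      refine integral_mono hmem.integrable_sq ?_ fun y => ?_
      · exact Integrable.of_bound (hh.pow_const 2).aestronglyMeasurable 1 (ae_of_all _ fun w => by
          rw [norm_pow]; exact pow_le_one₀ (norm_nonneg _) (hka_abs μ hK1 _ _))
      · simp only [Pi.pow_apply]
        rw [mul_pow]
        have : K x y ^ 2 ≤ 1 := by rw [← sq_abs]; exact pow_le_one₀ (abs_nonneg _) (hK1 _ _)
        exact mul_le_of_le_one_left (sq_nonneg _) this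
    simp only
    nlinarith

lemma E_two (hKm : Measurable (Function.uncurry K)) (hK1 : ∀ x y, |K x y| ≤ 1) (v : Fin 4 → ι) (hv : Function.Injective v) :
    ∫ X : ι → S, tri K (X (v 0)) (X (v 1)) (X (v 2)) * tri K (X (v 0)) (X (v 1)) (X (v 3)) ∂(Measure.pi fun _ => μ)
      ≤ ∫ x, ∫ y, hka μ K x y ^ 2 ∂μ ∂μ := by
  have hm : Measurable (fun Y : Fin 4 → S => tri K (Y 0) (Y 1) (Y 2) * tri K (Y 0) (Y 1) (Y 3)) :=
    (tri_comp hKm (by fun_prop) (by fun_prop) (by fun_prop)).mul (tri_comp hKm (by fun_prop) (by fun_prop) (by fun_prop))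
  rw [pi_int_inj μ v hv (fun Y => tri K (Y 0) (Y 1) (Y 2) * tri K (Y 0) (Y 1) (Y 3)) hm,
    int4 μ (fun a b c d => tri K a b c * tri K a b d) hm (fun _ _ _ _ => tri_mul_abs hK1 _ _ _ _ _ _)]
  simp_rw [integral_const_mul, integral_mul_const, tri_int_one]
  have hm2 : Measurable (fun w : S × S => K w.1 w.2 * hka μ K w.1 w.2) :=
    (K_comp hKm measurable_fst measurable_snd).mul (hka_meas μ hKm)
  have hab : ∀ x y, |K x y * hka μ K x y| ≤ 1 := fun x y => by
    rw [abs_mul]; exact mul_le_one₀ (hK1 _ _) (abs_nonneg _) (hka_abs μ hK1 _ _)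
  have hq : Integrable (fun w : S × S => hka μ K w.1 w.2 ^ 2) (μ.prod μ) :=
    Integrable.of_bound ((hka_meas μ hKm).pow_const 2).aestronglyMeasurable 1 (ae_of_all _ fun w => by
      rw [norm_pow]; exact pow_le_one₀ (norm_nonneg _) (hka_abs μ hK1 _ _))
  have hr : Integrable (fun w : S × S => (K w.1 w.2 * hka μ K w.1 w.2) * (K w.1 w.2 * hka μ K w.1 w.2)) (μ.prod μ) :=
    Integrable.of_bound (hm2.mul hm2).aestronglyMeasurable 1 (ae_of_all _ fun w => by
      rw [norm_mul]; exact mul_le_one₀ (hab _ _) (norm_nonneg _) (hab _ _))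
  have e1 := integral_prod _ hq
  have e2 := integral_prod _ hr
  simp only at e1 e2
  rw [← e1, ← e2]
  refine integral_mono hr hq fun w => ?_
  simp only
  have : K w.1 w.2 ^ 2 ≤ 1 := by rw [← sq_abs]; exact pow_le_one₀ (abs_nonneg _) (hK1 _ _)
  calc _ = K w.1 w.2 ^ 2 * hka μ K w.1 w.2 ^ 2 := by ring
    _ ≤ _ := mul_le_of_le_one_left (sq_nonneg _) this
end


lemma inj_of {ι : Type*} {N m : ℕ} {e : Fin 3 × Fin N → ι} (he : Function.Injective e) (w : Fin m → Fin 3 × Fin N)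
    (hw : Function.Injective w) : Function.Injective (fun l => e (w l)) := he.comp hw

section
variable {S : Type*} [MeasurableSpace S] (μ : Measure S) [IsProbabilityMeasure μ]
variable {ι : Type*} [Fintype ι]

/-- triangle statistic -/
def Tst (K : S → S → ℝ) {N : ℕ} (e : Fin 3 × Fin N → ι) (X : ι → S) : ℝ :=
  ∑ a : Fin N × Fin N × Fin N, tri K (X (e (0, a.1))) (X (e (1, a.2.1))) (X (e (2, a.2.2)))

variable {K : S → S → ℝ}

lemma triX_meas (hKm : Measurable (Function.uncurry K)) {N : ℕ} (e : Fin 3 × Fin N → ι) (a : Fin N × Fin N × Fin N) :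
    Measurable (fun X : ι → S => tri K (X (e (0, a.1))) (X (e (1, a.2.1))) (X (e (2, a.2.2)))) :=
  tri_comp hKm (measurable_pi_apply _) (measurable_pi_apply _) (measurable_pi_apply _)

lemma tri_pair_bound (hKm : Measurable (Function.uncurry K)) (hK1 : ∀ x y, |K x y| ≤ 1) (hs : ∀ x y, K x y = K y x) {N : ℕ} {e : Fin 3 × Fin N → ι} (he : Function.Injective e)
    (a b : Fin N × Fin N × Fin N) :
    ∫ X : ι → S, tri K (X (e (0, a.1))) (X (e (1, a.2.1))) (X (e (2, a.2.2))) *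
        tri K (X (e (0, b.1))) (X (e (1, b.2.1))) (X (e (2, b.2.2))) ∂(Measure.pi fun _ => μ)
      ≤ (∫ x, ∫ y, K x y * hka μ K x y ∂μ ∂μ) ^ 2
        + (∫ x, ∫ y, hka μ K x y ^ 2 ∂μ ∂μ) * ((if a.1 = b.1 then 1 else 0) + (if a.2.1 = b.2.1 then 1 else 0) + (if a.2.2 = b.2.2 then 1 else 0))
        + (if a = b then 1 else 0) := by
  obtain ⟨i, j, k⟩ := a
  obtain ⟨i', j', k'⟩ := b
  have hm2 : 0 ≤ (∫ x, ∫ y, K x y * hka μ K x y ∂μ ∂μ) ^ 2 := sq_nonneg _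
  have hq0 : 0 ≤ ∫ x, ∫ y, hka μ K x y ^ 2 ∂μ ∂μ := integral_nonneg fun x => integral_nonneg fun y => sq_nonneg _
  by_cases h1 : i = i' <;> by_cases h2 : j = j' <;> by_cases h3 : k = k'
  · subst h1 h2 h3
    simp only [if_true]
    have : ∫ X : ι → S, tri K (X (e (0, i))) (X (e (1, j))) (X (e (2, k))) *
        tri K (X (e (0, i))) (X (e (1, j))) (X (e (2, k))) ∂(Measure.pi fun _ => μ) ≤ 1 := by
      have := norm_integral_le_of_norm_le_const (μ := (Measure.pi fun _ : ι => μ)) (C := 1)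
        (f := fun X : ι → S => tri K (X (e (0, i))) (X (e (1, j))) (X (e (2, k))) *
        tri K (X (e (0, i))) (X (e (1, j))) (X (e (2, k)))) (ae_of_all _ fun X => tri_mul_abs hK1 _ _ _ _ _ _)
      rw [Real.norm_eq_abs] at this
      simpa using (le_abs_self _).trans this
    linarith
  · subst h1 h2
    have := E_two μ hKm hK1 (fun l => e (![(0, i), (1, j), (2, k), (2, k')] l)) (he.comp (by
      intro a b; fin_cases a <;> fin_cases b <;> simp [h3, Ne.symm h3]))
    simp only [Matrix.cons_val] at this
    simp only [if_true, h3, if_false, Prod.mk.injEq, and_false]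
    linarith
  · subst h1 h3
    have := E_two μ hKm hK1 (fun l => e (![(0, i), (2, k), (1, j), (1, j')] l)) (he.comp (by
      intro a b; fin_cases a <;> fin_cases b <;> simp [h2, Ne.symm h2]))
    simp only [Matrix.cons_val] at this
    simp only [tri_swap23 hs _ (_ : S) (_ : S)] at this ⊢
    simp only [if_true, h2, if_false, Prod.mk.injEq, and_false, false_and]
    linarith
  · subst h1
    have := E_one μ hKm hK1 (fun l => e (![(0, i), (1, j), (2, k), (1, j'), (2, k')] l)) (he.comp (by
      intro a b; fin_cases a <;> fin_cases b <;> simp [h2, Ne.symm h2, h3, Ne.symm h3]))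
    simp only [Matrix.cons_val] at this
    simp only [if_true, h2, h3, if_false, Prod.mk.injEq, and_false]
    linarith
  · subst h2 h3
    have := E_two μ hKm hK1 (fun l => e (![(1, j), (2, k), (0, i), (0, i')] l)) (he.comp (by
      intro a b; fin_cases a <;> fin_cases b <;> simp [h1, Ne.symm h1]))
    simp only [Matrix.cons_val] at this
    have hr : ∀ x y z : S, tri K x y z = tri K y z x := fun x y z => by rw [tri_swap12 hs, tri_swap23 hs]
    simp_rw [← hr] at this
    simp only [if_true, h1, if_false, Prod.mk.injEq, false_and]
    linarith
  · subst h2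
    have := E_one μ hKm hK1 (fun l => e (![(1, j), (0, i), (2, k), (0, i'), (2, k')] l)) (he.comp (by
      intro a b; fin_cases a <;> fin_cases b <;> simp [h1, Ne.symm h1, h3, Ne.symm h3]))
    simp only [Matrix.cons_val] at this
    have hr : ∀ (X : ι → S) (z : S) (i : Fin N), tri K (X (e (1, j))) (X (e (0, i))) z = tri K (X (e (0, i))) (X (e (1, j))) z := fun X z i => tri_swap12 hs _ _ _
    simp only [hr] at this
    simp only [if_true, h1, h3, if_false, Prod.mk.injEq, false_and]
    linarith
  · subst h3
    have := E_one μ hKm hK1 (fun l => e (![(2, k), (0, i), (1, j), (0, i'), (1, j')] l)) (he.comp (by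
      intro a b; fin_cases a <;> fin_cases b <;> simp [h1, Ne.symm h1, h2, Ne.symm h2]))
    simp only [Matrix.cons_val] at this
    have hr : ∀ (X : ι → S) (i j : Fin N), tri K (X (e (2, k))) (X (e (0, i))) (X (e (1, j))) = tri K (X (e (0, i))) (X (e (1, j))) (X (e (2, k))) := fun X i j => by
      rw [tri_swap12 hs, tri_swap23 hs]
    simp only [hr] at this
    simp only [if_true, h1, h2, if_false, Prod.mk.injEq, false_and]
    linarith
  · have := E_none μ hKm hK1 (fun l => e (![(0, i), (1, j), (2, k), (0, i'), (1, j'), (2, k')] l)) (he.comp (by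
      intro a b; fin_cases a <;> fin_cases b <;> simp [h1, Ne.symm h1, h2, Ne.symm h2, h3, Ne.symm h3]))
    simp only [Matrix.cons_val] at this
    simp only [h1, h2, h3, if_false, Prod.mk.injEq, false_and]
    linarith

lemma T_mean (hKm : Measurable (Function.uncurry K)) (hK1 : ∀ x y, |K x y| ≤ 1) {N : ℕ} {e : Fin 3 × Fin N → ι} (he : Function.Injective e) :
    ∫ X : ι → S, Tst K e X ∂(Measure.pi fun _ => μ) = (N : ℝ) ^ 3 * ∫ x, ∫ y, K x y * hka μ K x y ∂μ ∂μ := by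
  unfold Tst
  rw [integral_finsetSum _ fun a _ => Integrable.of_bound (triX_meas hKm e a).aestronglyMeasurable 1 (ae_of_all _ fun X => tri_abs hK1 _ _ _)]
  have : ∀ a : Fin N × Fin N × Fin N, ∫ X : ι → S, tri K (X (e (0, a.1))) (X (e (1, a.2.1))) (X (e (2, a.2.2))) ∂(Measure.pi fun _ => μ)
      = ∫ x, ∫ y, K x y * hka μ K x y ∂μ ∂μ := fun a => by
    have := E_mean μ hKm hK1 (fun l => e (![(0, a.1), (1, a.2.1), (2, a.2.2)] l)) (he.comp (by
      intro a b; fin_cases a <;> fin_cases b <;> simp))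
    simpa only [Matrix.cons_val] using this
  simp_rw [this]
  simp
  left; ring

lemma T_memLp (hKm : Measurable (Function.uncurry K)) (hK1 : ∀ x y, |K x y| ≤ 1) {N : ℕ} (e : Fin 3 × Fin N → ι) : MemLp (Tst K e) 2 (Measure.pi fun _ : ι => μ) := by
  unfold Tst
  exact memLp_finsetSum _ fun a _ => MemLp.of_bound (triX_meas hKm e a).aestronglyMeasurable 1 (ae_of_all _ fun X => tri_abs hK1 _ _ _)

lemma T_var (hKm : Measurable (Function.uncurry K)) (hK1 : ∀ x y, |K x y| ≤ 1) (hs : ∀ x y, K x y = K y x) {N : ℕ} {e : Fin 3 × Fin N → ι} (he : Function.Injective e) :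
    Var[Tst K e; Measure.pi fun _ : ι => μ] ≤ 3 * (N : ℝ) ^ 5 * (∫ x, ∫ y, hka μ K x y ^ 2 ∂μ ∂μ) + (N : ℝ) ^ 3 := by
  rw [variance_eq_sub (T_memLp μ hKm hK1 e), T_mean μ hKm hK1 he]
  have e1 : ∫ X, (Tst K e ^ 2) X ∂(Measure.pi fun _ : ι => μ) = ∑ a : Fin N × Fin N × Fin N, ∑ b : Fin N × Fin N × Fin N,
      ∫ X : ι → S, tri K (X (e (0, a.1))) (X (e (1, a.2.1))) (X (e (2, a.2.2))) *
        tri K (X (e (0, b.1))) (X (e (1, b.2.1))) (X (e (2, b.2.2))) ∂(Measure.pi fun _ => μ) := by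
    have hi : ∀ a b : Fin N × Fin N × Fin N, Integrable (fun X : ι → S => tri K (X (e (0, a.1))) (X (e (1, a.2.1))) (X (e (2, a.2.2))) *
        tri K (X (e (0, b.1))) (X (e (1, b.2.1))) (X (e (2, b.2.2)))) (Measure.pi fun _ => μ) := fun a b =>
      Integrable.of_bound ((triX_meas hKm e a).mul (triX_meas hKm e b)).aestronglyMeasurable 1 (ae_of_all _ fun X => tri_mul_abs hK1 _ _ _ _ _ _)
    simp only [Pi.pow_apply, Tst, sq, Finset.sum_mul_sum]
    rw [integral_finsetSum _ fun a _ => integrable_finsetSum _ fun b _ => hi a b]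
    refine Finset.sum_congr rfl fun a _ => ?_
    rw [integral_finsetSum _ fun b _ => hi a b]
  rw [e1]
  set m := ∫ x, ∫ y, K x y * hka μ K x y ∂μ ∂μ
  set q := ∫ x, ∫ y, hka μ K x y ^ 2 ∂μ ∂μ
  have e2 := Finset.sum_le_sum fun (a : Fin N × Fin N × Fin N) (_ : a ∈ Finset.univ) =>
    Finset.sum_le_sum fun (b : Fin N × Fin N × Fin N) (_ : b ∈ Finset.univ) => tri_pair_bound μ hKm hK1 hs he a b
  have e3 : ∑ a : Fin N × Fin N × Fin N, ∑ b : Fin N × Fin N × Fin N, (m ^ 2 + q * ((if a.1 = b.1 then 1 else 0)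
      + (if a.2.1 = b.2.1 then 1 else 0) + (if a.2.2 = b.2.2 then 1 else 0)) + (if a = b then 1 else 0))
      = (N : ℝ) ^ 6 * m ^ 2 + 3 * (N : ℝ) ^ 5 * q + (N : ℝ) ^ 3 := by
    have c1 : ∀ a : Fin N × Fin N × Fin N, ∑ b : Fin N × Fin N × Fin N, (if a.1 = b.1 then (1 : ℝ) else 0) = (N : ℝ) ^ 2 := fun a => by
      rw [Fintype.sum_prod_type, Finset.sum_comm]; simp only [Finset.sum_ite_eq]; simp [sq]
    have c2 : ∀ a : Fin N × Fin N × Fin N, ∑ b : Fin N × Fin N × Fin N, (if a.2.1 = b.2.1 then (1 : ℝ) else 0) = (N : ℝ) ^ 2 := fun a => by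
      have : ∑ y : Fin N × Fin N, (if a.2.1 = y.1 then (1 : ℝ) else 0) = (N : ℝ) := by
        rw [Fintype.sum_prod_type, Finset.sum_comm]; simp only [Finset.sum_ite_eq]; simp
      rw [Fintype.sum_prod_type]; simp only [this]; simp [sq]
    have c3 : ∀ a : Fin N × Fin N × Fin N, ∑ b : Fin N × Fin N × Fin N, (if a.2.2 = b.2.2 then (1 : ℝ) else 0) = (N : ℝ) ^ 2 := fun a => by
      simp_rw [Fintype.sum_prod_type]; simp [sq]
    simp_rw [Finset.sum_add_distrib, ← Finset.mul_sum, Finset.sum_add_distrib, c1, c2, c3]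
    simp
    ring
  have e4 := e2.trans_eq e3
  have e5 : ((N : ℝ) ^ 3 * m) ^ 2 = (N : ℝ) ^ 6 * m ^ 2 := by ring
  rw [e5]
  linarith

/-- bipartite statistic -/
def Ust (g : S → S → ℝ) {N : ℕ} (e : Fin 3 × Fin N → ι) (X : ι → S) : ℝ :=
  ∑ a : Fin N × Fin N, g (X (e (0, a.1))) (X (e (1, a.2)))

lemma U_memLp (hKm : Measurable (Function.uncurry K)) (hK1 : ∀ x y, |K x y| ≤ 1) {N : ℕ} (e : Fin 3 × Fin N → ι) : MemLp (Ust K e) 2 (Measure.pi fun _ : ι => μ) := by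
  unfold Ust
  exact memLp_finsetSum _ fun a _ => MemLp.of_bound
    (K_comp hKm (measurable_pi_apply _) (measurable_pi_apply _)).aestronglyMeasurable 1 (ae_of_all _ fun X => hK1 _ _)

lemma U_mean (hKm : Measurable (Function.uncurry K)) (hK1 : ∀ x y, |K x y| ≤ 1) {N : ℕ} {e : Fin 3 × Fin N → ι} (he : Function.Injective e) :
    ∫ X : ι → S, Ust K e X ∂(Measure.pi fun _ => μ) = (N : ℝ) ^ 2 * ∫ x, ∫ y, K x y ∂μ ∂μ := by
  unfold Ust
  rw [integral_finsetSum _ fun a _ => Integrable.of_bound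
    (K_comp hKm (measurable_pi_apply _) (measurable_pi_apply _)).aestronglyMeasurable 1 (ae_of_all _ fun X => hK1 _ _)]
  have : ∀ a : Fin N × Fin N, ∫ X : ι → S, K (X (e (0, a.1))) (X (e (1, a.2))) ∂(Measure.pi fun _ => μ)
      = ∫ x, ∫ y, K x y ∂μ ∂μ := fun a => by
    have hm : Measurable (fun Y : Fin 2 → S => K (Y 0) (Y 1)) := K_comp hKm (by fun_prop) (by fun_prop)
    have := pi_int_inj (ι := ι) μ (fun l => e (![(0, a.1), (1, a.2)] l)) (he.comp (by
      intro a b; fin_cases a <;> fin_cases b <;> simp)) (fun Y => K (Y 0) (Y 1)) hm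
    rw [int2 μ K hm hK1] at this
    simpa only [Matrix.cons_val] using this
  simp_rw [this]
  simp
  left; ring

lemma U_pair (hKm : Measurable (Function.uncurry K)) (hK1 : ∀ x y, |K x y| ≤ 1) {N : ℕ} {e : Fin 3 × Fin N → ι} (he : Function.Injective e) (a b : Fin N × Fin N) :
    ∫ X : ι → S, K (X (e (0, a.1))) (X (e (1, a.2))) * K (X (e (0, b.1))) (X (e (1, b.2))) ∂(Measure.pi fun _ => μ)
      ≤ (∫ x, ∫ y, K x y ∂μ ∂μ) ^ 2 + ((if a.1 = b.1 then 1 else 0) + (if a.2 = b.2 then 1 else 0)) := by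
  obtain ⟨i, j⟩ := a
  obtain ⟨i', j'⟩ := b
  have hmm : ∀ x y z w, |K x y * K z w| ≤ 1 := fun x y z w => by
    rw [abs_mul]; exact mul_le_one₀ (hK1 _ _) (abs_nonneg _) (hK1 _ _)
  have h0 : 0 ≤ (∫ x, ∫ y, K x y ∂μ ∂μ) ^ 2 := sq_nonneg _
  have hle : ∫ X : ι → S, K (X (e (0, i))) (X (e (1, j))) * K (X (e (0, i'))) (X (e (1, j'))) ∂(Measure.pi fun _ => μ) ≤ 1 := by
    have := norm_integral_le_of_norm_le_const (μ := (Measure.pi fun _ : ι => μ)) (C := 1)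
      (f := fun X : ι → S => K (X (e (0, i))) (X (e (1, j))) * K (X (e (0, i'))) (X (e (1, j')))) (ae_of_all _ fun X => hmm _ _ _ _)
    rw [Real.norm_eq_abs] at this
    simpa using (le_abs_self _).trans this
  by_cases h1 : i = i'
  · simp only [h1, if_true] at hle ⊢
    have : (0 : ℝ) ≤ if j = j' then 1 else 0 := by split_ifs <;> norm_num
    linarith
  by_cases h2 : j = j'
  · simp only [h1, h2, if_true, if_false] at hle ⊢
    linarith
  have hm : Measurable (fun Y : Fin 4 → S => K (Y 0) (Y 1) * K (Y 2) (Y 3)) :=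
    (K_comp hKm (by fun_prop) (by fun_prop)).mul (K_comp hKm (by fun_prop) (by fun_prop))
  have := pi_int_inj (ι := ι) μ (fun l => e (![(0, i), (1, j), (0, i'), (1, j')] l)) (he.comp (by
      intro a b; fin_cases a <;> fin_cases b <;> simp [h1, h2, Ne.symm h1, Ne.symm h2])) (fun Y => K (Y 0) (Y 1) * K (Y 2) (Y 3)) hm
  rw [int4 μ (fun a b c d => K a b * K c d) hm hmm] at this
  simp_rw [integral_const_mul, integral_mul_const] at this
  simp only [Matrix.cons_val] at this
  simp only [h1, h2, if_false]
  rw [this]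
  apply le_of_eq
  ring

lemma U_var (hKm : Measurable (Function.uncurry K)) (hK1 : ∀ x y, |K x y| ≤ 1) {N : ℕ} {e : Fin 3 × Fin N → ι} (he : Function.Injective e) :
    Var[Ust K e; Measure.pi fun _ : ι => μ] ≤ 2 * (N : ℝ) ^ 3 := by
  rw [variance_eq_sub (U_memLp μ hKm hK1 e), U_mean μ hKm hK1 he]
  have e1 : ∫ X, (Ust K e ^ 2) X ∂(Measure.pi fun _ : ι => μ) = ∑ a : Fin N × Fin N, ∑ b : Fin N × Fin N,
      ∫ X : ι → S, K (X (e (0, a.1))) (X (e (1, a.2))) * K (X (e (0, b.1))) (X (e (1, b.2))) ∂(Measure.pi fun _ => μ) := by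
    have hi : ∀ a b : Fin N × Fin N, Integrable (fun X : ι → S => K (X (e (0, a.1))) (X (e (1, a.2))) * K (X (e (0, b.1))) (X (e (1, b.2)))) (Measure.pi fun _ => μ) := fun a b =>
      Integrable.of_bound ((K_comp hKm (measurable_pi_apply _) (measurable_pi_apply _)).mul (K_comp hKm (measurable_pi_apply _) (measurable_pi_apply _))).aestronglyMeasurable 1 (ae_of_all _ fun X => by
        rw [norm_mul]; exact mul_le_one₀ (hK1 _ _) (norm_nonneg _) (hK1 _ _))
    simp only [Pi.pow_apply, Ust, sq, Finset.sum_mul_sum]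
    rw [integral_finsetSum _ fun a _ => integrable_finsetSum _ fun b _ => hi a b]
    refine Finset.sum_congr rfl fun a _ => ?_
    rw [integral_finsetSum _ fun b _ => hi a b]
  rw [e1]
  set m := ∫ x, ∫ y, K x y ∂μ ∂μ
  have e2 := Finset.sum_le_sum fun (a : Fin N × Fin N) (_ : a ∈ Finset.univ) =>
    Finset.sum_le_sum fun (b : Fin N × Fin N) (_ : b ∈ Finset.univ) => U_pair μ hKm hK1 he a b
  have e3 : ∑ a : Fin N × Fin N, ∑ b : Fin N × Fin N, (m ^ 2 + ((if a.1 = b.1 then 1 else 0)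
      + (if a.2 = b.2 then 1 else 0))) = (N : ℝ) ^ 4 * m ^ 2 + 2 * (N : ℝ) ^ 3 := by
    have c1 : ∀ a : Fin N × Fin N, ∑ b : Fin N × Fin N, (if a.1 = b.1 then (1 : ℝ) else 0) = (N : ℝ) := fun a => by
      rw [Fintype.sum_prod_type, Finset.sum_comm]; simp only [Finset.sum_ite_eq]; simp
    have c2 : ∀ a : Fin N × Fin N, ∑ b : Fin N × Fin N, (if a.2 = b.2 then (1 : ℝ) else 0) = (N : ℝ) := fun a => by
      simp_rw [Fintype.sum_prod_type]; simp
    simp_rw [Finset.sum_add_distrib, c1, c2]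
    simp
    ring
  have e4 := e2.trans_eq e3
  have e5 : ((N : ℝ) ^ 2 * m) ^ 2 = (N : ℝ) ^ 4 * m ^ 2 := by ring
  rw [e5]
  linarith
end


lemma prod_zero {κ : Type*} [Fintype κ] (ν : Measure ℝ) [IsProbabilityMeasure ν] {M : ℝ → ℝ} (hM0 : ∫ u, M u ∂ν = 0)
    {l : ℕ} (E : Fin l → κ) (l0 : Fin l) (h : ∀ i, i ≠ l0 → E i ≠ E l0) :
    ∫ x : κ → ℝ, ∏ i, M (x (E i)) ∂(Measure.pi fun _ => ν) = 0 := by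
  have h1 : ∀ x : κ → ℝ, ∏ i, M (x (E i)) = ∏ k, M (x k) ^ (Finset.univ.filter fun i => E i = k).card := fun x => by
    rw [← Finset.prod_fiberwise' Finset.univ E (fun k => M (x k))]
    simp
  simp_rw [h1]
  rw [integral_fintype_prod_eq_prod (μ := fun _ : κ => ν) (f := fun k u => M u ^ (Finset.univ.filter fun i => E i = k).card)]
  apply Finset.prod_eq_zero (Finset.mem_univ (E l0))
  have : (Finset.univ.filter fun i => E i = E l0) = {l0} := by
    ext i
    simp only [Finset.mem_filter, Finset.mem_univ, true_and, Finset.mem_singleton]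
    exact ⟨fun hi => by by_contra hc; exact h i hc hi, fun hi => by rw [hi]⟩
  rw [this]
  simpa using hM0

/-- triangle statistic of a matrix -/
def TA {ι : Type*} {N : ℕ} (e : Fin 3 × Fin N → ι) (A : ι → ι → ℝ) : ℝ :=
  ∑ a : Fin N × Fin N × Fin N, A (e (0, a.1)) (e (1, a.2.1)) * (A (e (0, a.1)) (e (2, a.2.2)) * A (e (1, a.2.1)) (e (2, a.2.2)))

/-- four-cycle statistic of a matrix -/
def WA {ι : Type*} {N : ℕ} (e : Fin 3 × Fin N → ι) (A : ι → ι → ℝ) : ℝ :=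
  ∑ b : Fin N × Fin N, (∑ i : Fin N, A (e (0, i)) (e (1, b.1)) * A (e (0, i)) (e (1, b.2))) ^ 2

lemma WA_lower {ι : Type*} {N : ℕ} (e : Fin 3 × Fin N → ι) (A : ι → ι → ℝ) (s : ι → ℝ) (hs : ∀ u, |s u| ≤ 1) :
    (∑ a : Fin N × Fin N, A (e (0, a.1)) (e (1, a.2)) * (s (e (0, a.1)) * s (e (1, a.2)))) ^ 4 ≤ (N : ℝ) ^ 4 * WA e A := by
  set U := ∑ a : Fin N × Fin N, A (e (0, a.1)) (e (1, a.2)) * (s (e (0, a.1)) * s (e (1, a.2)))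
  have hs2 : ∀ u, s u ^ 2 ≤ 1 := fun u => by rw [← sq_abs]; exact pow_le_one₀ (abs_nonneg _) (hs u)
  set r : Fin N → ℝ := fun i => ∑ j, A (e (0, i)) (e (1, j)) * s (e (1, j))
  set c : Fin N × Fin N → ℝ := fun b => ∑ i : Fin N, A (e (0, i)) (e (1, b.1)) * A (e (0, i)) (e (1, b.2))
  have h1 : U = ∑ i, s (e (0, i)) * r i := by
    simp only [U, r, Fintype.sum_prod_type, Finset.mul_sum]
    refine Finset.sum_congr rfl fun i _ => Finset.sum_congr rfl fun j _ => by ring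
  have h2 : U ^ 2 ≤ N * ∑ i, r i ^ 2 := by
    rw [h1]
    refine (Finset.sum_mul_sq_le_sq_mul_sq _ _ _).trans ?_
    apply mul_le_mul_of_nonneg_right _ (Finset.sum_nonneg fun i _ => sq_nonneg _)
    refine (Finset.sum_le_sum fun i _ => hs2 (e (0, i))).trans (by simp)
  have h3 : ∑ i, r i ^ 2 = ∑ b : Fin N × Fin N, (s (e (1, b.1)) * s (e (1, b.2))) * c b := by
    simp only [r, sq, Finset.sum_mul_sum]
    simp only [c, Fintype.sum_prod_type, Finset.mul_sum]
    rw [Finset.sum_comm]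
    refine Finset.sum_congr rfl fun j _ => ?_
    rw [Finset.sum_comm]
    refine Finset.sum_congr rfl fun j' _ => Finset.sum_congr rfl fun i _ => by ring
  have h4 : (∑ i, r i ^ 2) ^ 2 ≤ (N : ℝ) ^ 2 * WA e A := by
    rw [h3]
    refine (Finset.sum_mul_sq_le_sq_mul_sq _ _ _).trans ?_
    apply mul_le_mul_of_nonneg_right _ (Finset.sum_nonneg fun i _ => sq_nonneg _)
    refine (Finset.sum_le_sum (g := fun _ => (1 : ℝ)) fun b _ => ?_).trans (by simp [sq])
    rw [mul_pow]
    exact mul_le_one₀ (hs2 _) (sq_nonneg _) (hs2 _)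
  have hN : (0 : ℝ) ≤ N := Nat.cast_nonneg _
  calc U ^ 4 = (U ^ 2) ^ 2 := by ring
    _ ≤ (N * ∑ i, r i ^ 2) ^ 2 := pow_le_pow_left₀ (sq_nonneg _) h2 2
    _ = (N : ℝ) ^ 2 * (∑ i, r i ^ 2) ^ 2 := by ring
    _ ≤ (N : ℝ) ^ 2 * ((N : ℝ) ^ 2 * WA e A) := by gcongr
    _ = _ := by ring

section
variable {ι : Type*} [Fintype ι] (ν : Measure ℝ) [IsProbabilityMeasure ν] {M : ℝ → ℝ}

lemma int_prod_le (hM1 : ∀ u, |M u| ≤ 1) {κ : Type*} [Fintype κ] {l : ℕ} (E : Fin l → κ) :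
    ∫ x : κ → ℝ, ∏ i, M (x (E i)) ∂(Measure.pi fun _ => ν) ≤ 1 := by
  have := norm_integral_le_of_norm_le_const (μ := (Measure.pi fun _ : κ => ν)) (C := 1)
    (f := fun x : κ → ℝ => ∏ i, M (x (E i))) (ae_of_all _ fun x => by
      rw [norm_prod]; exact Finset.prod_le_one (fun _ _ => norm_nonneg _) fun i _ => hM1 _)
  rw [Real.norm_eq_abs] at this
  simpa using (le_abs_self _).trans this

lemma prod_integrable (hMm : Measurable M) (hM1 : ∀ u, |M u| ≤ 1) {κ : Type*} [Fintype κ] {l : ℕ} (E : Fin l → κ) :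
    Integrable (fun x : κ → ℝ => ∏ i, M (x (E i))) (Measure.pi fun _ => ν) :=
  Integrable.of_bound (Finset.measurable_prod _ fun i _ => hMm.comp (measurable_pi_apply _)).aestronglyMeasurable 1
    (ae_of_all _ fun x => by rw [norm_prod]; exact Finset.prod_le_one (fun _ _ => norm_nonneg _) fun i _ => hM1 _)

lemma TA_er (hMm : Measurable M) (hM1 : ∀ u, |M u| ≤ 1) (hM0 : ∫ u, M u ∂ν = 0)
    {N : ℕ} {e : Fin 3 × Fin N → ι} (he : Function.Injective e) :
    Integrable (fun x : Sym2 ι → ℝ => TA e (fun u v => M (x s(u, v))) ^ 2) (Measure.pi fun _ => ν) ∧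
    ∫ x : Sym2 ι → ℝ, TA e (fun u v => M (x s(u, v))) ^ 2 ∂(Measure.pi fun _ => ν) ≤ (N : ℝ) ^ 3 := by
  set E : (Fin N × Fin N × Fin N) → (Fin N × Fin N × Fin N) → Fin 6 → Sym2 ι := fun a b =>
    ![s(e (0, a.1), e (1, a.2.1)), s(e (0, a.1), e (2, a.2.2)), s(e (1, a.2.1), e (2, a.2.2)),
      s(e (0, b.1), e (1, b.2.1)), s(e (0, b.1), e (2, b.2.2)), s(e (1, b.2.1), e (2, b.2.2))] with hE
  have e1 : ∀ x : Sym2 ι → ℝ, TA e (fun u v => M (x s(u, v))) ^ 2 = ∑ a, ∑ b, ∏ l, M (x (E a b l)) := fun x => by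
    simp only [TA, sq, Finset.sum_mul_sum, hE, Fin.prod_univ_six, Matrix.cons_val]
    refine Finset.sum_congr rfl fun i _ => Finset.sum_congr rfl fun j _ => by ring
  simp_rw [e1]
  have hi := fun a b => prod_integrable ν hMm hM1 (E a b)
  refine ⟨integrable_finsetSum _ fun a _ => integrable_finsetSum _ fun b _ => hi a b, ?_⟩
  rw [integral_finsetSum _ fun a _ => integrable_finsetSum _ fun b _ => hi a b]
  have hb : ∀ a b, ∫ x : Sym2 ι → ℝ, ∏ l, M (x (E a b l)) ∂(Measure.pi fun _ => ν) ≤ if a = b then 1 else 0 := fun a b => by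
    split_ifs with hab
    · exact int_prod_le ν hM1 _
    · apply le_of_eq
      by_cases h12 : a.1 = b.1 ∧ a.2.1 = b.2.1
      · have h3 : a.2.2 ≠ b.2.2 := fun h => hab (Prod.ext h12.1 (Prod.ext h12.2 h))
        refine prod_zero ν hM0 _ 1 fun i hi => ?_
        fin_cases i <;> simp_all [Sym2.eq_iff, he.eq_iff] <;> tauto
      · refine prod_zero ν hM0 _ 0 fun i hi => ?_
        fin_cases i <;> simp_all [Sym2.eq_iff, he.eq_iff] <;> tauto
  calc _ ≤ ∑ a : Fin N × Fin N × Fin N, ∑ b : Fin N × Fin N × Fin N, (if a = b then (1 : ℝ) else 0) := by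
        refine Finset.sum_le_sum fun a _ => ?_
        rw [integral_finsetSum _ fun b _ => hi a b]
        exact Finset.sum_le_sum fun b _ => hb a b
    _ = (N : ℝ) ^ 3 := by simp; ring

lemma WA_er (hMm : Measurable M) (hM1 : ∀ u, |M u| ≤ 1) (hM0 : ∫ u, M u ∂ν = 0)
    {N : ℕ} {e : Fin 3 × Fin N → ι} (he : Function.Injective e) :
    Integrable (fun x : Sym2 ι → ℝ => WA e (fun u v => M (x s(u, v)))) (Measure.pi fun _ => ν) ∧
    ∫ x : Sym2 ι → ℝ, WA e (fun u v => M (x s(u, v))) ∂(Measure.pi fun _ => ν) ≤ 2 * (N : ℝ) ^ 3 := by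
  set E : (Fin N × Fin N) → (Fin N × Fin N) → Fin 4 → Sym2 ι := fun b a =>
    ![s(e (0, a.1), e (1, b.1)), s(e (0, a.1), e (1, b.2)), s(e (0, a.2), e (1, b.1)), s(e (0, a.2), e (1, b.2))] with hE
  have e1 : ∀ x : Sym2 ι → ℝ, WA e (fun u v => M (x s(u, v))) = ∑ b, ∑ a, ∏ l, M (x (E b a l)) := fun x => by
    simp only [WA, sq, Finset.sum_mul_sum, hE, Fin.prod_univ_four, Matrix.cons_val]
    refine Finset.sum_congr rfl fun b _ => ?_
    rw [Fintype.sum_prod_type]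
    refine Finset.sum_congr rfl fun i _ => Finset.sum_congr rfl fun j _ => by ring
  simp_rw [e1]
  have hi := fun a b => prod_integrable ν hMm hM1 (E a b)
  refine ⟨integrable_finsetSum _ fun a _ => integrable_finsetSum _ fun b _ => hi a b, ?_⟩
  rw [integral_finsetSum _ fun a _ => integrable_finsetSum _ fun b _ => hi a b]
  have hb : ∀ b a, ∫ x : Sym2 ι → ℝ, ∏ l, M (x (E b a l)) ∂(Measure.pi fun _ => ν) ≤
      (if b.1 = b.2 then 1 else 0) + (if a.1 = a.2 then 1 else 0) := fun b a => by
    have h0 : (0 : ℝ) ≤ if a.1 = a.2 then 1 else 0 := by split_ifs <;> norm_num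
    by_cases h1 : b.1 = b.2
    · have := int_prod_le ν hM1 (E b a)
      simp only [h1, if_true]
      linarith
    by_cases h2 : a.1 = a.2
    · have := int_prod_le ν hM1 (E b a)
      simp only [h1, h2, if_true, if_false]
      linarith
    · simp only [h1, h2, if_false]
      refine (prod_zero ν hM0 _ 0 fun i hi => ?_).trans_le (by norm_num)
      have h1' := Ne.symm h1
      have h2' := Ne.symm h2
      fin_cases i <;> simp_all [Sym2.eq_iff, he.eq_iff]
  calc _ ≤ ∑ b : Fin N × Fin N, ∑ a : Fin N × Fin N, ((if b.1 = b.2 then (1 : ℝ) else 0) + (if a.1 = a.2 then (1 : ℝ) else 0)) := by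
        refine Finset.sum_le_sum fun a _ => ?_
        rw [integral_finsetSum _ fun b _ => hi a b]
        exact Finset.sum_le_sum fun b _ => hb a b
    _ = 2 * (N : ℝ) ^ 3 := by
        have c1 : ∑ b : Fin N × Fin N, (if b.1 = b.2 then (1 : ℝ) else 0) = N := by
          rw [Fintype.sum_prod_type]; simp only [Finset.sum_ite_eq]; simp
        simp only [Finset.sum_add_distrib, c1, Finset.sum_const, ← Finset.smul_sum]
        simp; ring
end


/-- centred adjacency matrix -/
def Mg {n : ℕ} (p : ℝ) (G : SimpleGraph (Fin n)) (u v : Fin n) : ℝ := (if G.Adj u v then 1 else 0) - p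

/-- centred edge variable -/
def Mer (p u : ℝ) : ℝ := (if u ≤ p then 1 else 0) - p

lemma Mer_meas (p : ℝ) : Measurable (Mer p) := by
  unfold Mer
  exact (Measurable.ite measurableSet_Iic measurable_const measurable_const).sub measurable_const

lemma Mer_abs {p : ℝ} (h0 : 0 ≤ p) (h1 : p ≤ 1) (u : ℝ) : |Mer p u| ≤ 1 := by
  unfold Mer
  split_ifs <;> rw [abs_le] <;> constructor <;> linarith

instance unif_prob : IsProbabilityMeasure ((volume : Measure ℝ).restrict (Set.Icc (0 : ℝ) 1)) := ⟨by simp⟩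

lemma Mer_int {p : ℝ} (h0 : 0 ≤ p) (h1 : p ≤ 1) : ∫ u, Mer p u ∂((volume : Measure ℝ).restrict (Set.Icc (0 : ℝ) 1)) = 0 := by
  unfold Mer
  have hm : Measurable (fun u : ℝ => if u ≤ p then (1 : ℝ) else 0) := Measurable.ite measurableSet_Iic measurable_const measurable_const
  rw [integral_sub (Integrable.of_bound hm.aestronglyMeasurable 1 (ae_of_all _ fun u => by split_ifs <;> simp)) (integrable_const _)]
  have : (fun u : ℝ => if u ≤ p then (1 : ℝ) else 0) = (Set.Iic p).indicator 1 := by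
    ext u; simp [Set.indicator_apply]
  rw [this, integral_indicator_one measurableSet_Iic]
  have h2 : Set.Iic p ∩ Set.Icc 0 1 = Set.Icc 0 p := by
    ext u; simp only [Set.mem_inter_iff, Set.mem_Iic, Set.mem_Icc]
    constructor
    · rintro ⟨a, b, c⟩; exact ⟨b, a⟩
    · rintro ⟨a, b⟩; exact ⟨b, a, b.trans h1⟩
  simp [Measure.real, Measure.restrict_apply measurableSet_Iic, h2, h0]

lemma graph_meas {Ω : Type*} [MeasurableSpace Ω] {n : ℕ} {f : Ω → SimpleGraph (Fin n)}
    (h : ∀ i j, MeasurableSet {ω | (f ω).Adj i j}) : Measurable f := by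
  refine measurable_to_countable' fun G => ?_
  have : f ⁻¹' {G} = ⋂ i, ⋂ j, {ω | (f ω).Adj i j ↔ G.Adj i j} := by
    ext ω
    simp only [Set.mem_preimage, Set.mem_singleton_iff, Set.mem_iInter, Set.mem_setOf_eq]
    exact ⟨fun h i j => by rw [h], fun h => by ext i j; exact h i j⟩
  rw [this]
  refine MeasurableSet.iInter fun i => MeasurableSet.iInter fun j => ?_
  by_cases hG : G.Adj i j
  · simpa only [hG, iff_true] using h i j
  · simp only [hG, iff_false]
    exact (h i j).compl

lemma er_meas (n : ℕ) (p : ℝ) :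
    Measurable (fun x : Sym2 (Fin n) → ℝ => SimpleGraph.fromRel fun i j => x s(i, j) ≤ p) := by
  refine graph_meas fun i j => ?_
  simp only [SimpleGraph.fromRel_adj]
  have h1 : ∀ k : Sym2 (Fin n), MeasurableSet {x : Sym2 (Fin n) → ℝ | x k ≤ p} := fun k =>
    measurableSet_le (measurable_pi_apply k) measurable_const
  by_cases hij : i = j
  · simp [hij]
  · simp only [ne_eq, hij, not_false_eq_true, true_and]
    exact (h1 _).union (h1 _)

lemma geo_meas (n d : ℕ) (t : ℝ) :
    Measurable (fun X : Fin n → Fin d → ℝ => SimpleGraph.fromRel fun i j => t ≤ dotp (X i) (X j)) := by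
  refine graph_meas fun i j => ?_
  simp only [SimpleGraph.fromRel_adj]
  have h1 : ∀ i j, MeasurableSet {X : Fin n → Fin d → ℝ | t ≤ dotp (X i) (X j)} := fun i j =>
    measurableSet_le measurable_const (by unfold dotp; fun_prop)
  by_cases hij : i = j
  · simp [hij]
  · simp only [ne_eq, hij, not_false_eq_true, true_and]
    exact (h1 _ _).union (h1 _ _)

instance er_prob (n : ℕ) (p : ℝ) : IsProbabilityMeasure (erGraph n p) :=
  Measure.isProbabilityMeasure_map (er_meas n p).aemeasurable

instance sample_prob (n d : ℕ) (α : Fin d → ℝ) : IsProbabilityMeasure (sampleMeasure n d α) := by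
  unfold sampleMeasure; infer_instance

instance geo_prob (n d : ℕ) (α : Fin d → ℝ) (t : ℝ) : IsProbabilityMeasure (geomGraph n d α t) :=
  Measure.isProbabilityMeasure_map (geo_meas n d t).aemeasurable

lemma Mg_er {n : ℕ} (p : ℝ) (x : Sym2 (Fin n) → ℝ) {u v : Fin n} (h : u ≠ v) :
    Mg p (SimpleGraph.fromRel fun i j => x s(i, j) ≤ p) u v = Mer p (x s(u, v)) := by
  simp only [Mg, Mer, SimpleGraph.fromRel_adj, Sym2.eq_swap (a := v) (b := u), or_self, ne_eq, h, not_false_eq_true, true_and]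

lemma Mg_geo {n d : ℕ} (p t : ℝ) (X : Fin n → Fin d → ℝ) {u v : Fin n} (h : u ≠ v) :
    Mg p (SimpleGraph.fromRel fun i j => t ≤ dotp (X i) (X j)) u v = kern p t (X u) (X v) := by
  simp only [Mg, kern, SimpleGraph.fromRel_adj, dotp_comm (X v) (X u), or_self, ne_eq, h, not_false_eq_true, true_and,
    Set.indicator_apply, Set.mem_Ici, Pi.one_apply]

lemma TA_congr {ι : Type*} {N : ℕ} {e : Fin 3 × Fin N → ι} (he : Function.Injective e) {A B : ι → ι → ℝ}
    (h : ∀ u v, u ≠ v → A u v = B u v) : TA e A = TA e B := by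
  unfold TA
  refine Finset.sum_congr rfl fun a _ => ?_
  rw [h (e (0, a.1)) (e (1, a.2.1)) (he.ne (by simp)), h (e (0, a.1)) (e (2, a.2.2)) (he.ne (by simp)),
    h (e (1, a.2.1)) (e (2, a.2.2)) (he.ne (by simp))]

lemma WA_congr {ι : Type*} {N : ℕ} {e : Fin 3 × Fin N → ι} (he : Function.Injective e) {A B : ι → ι → ℝ}
    (h : ∀ u v, u ≠ v → A u v = B u v) : WA e A = WA e B := by
  unfold WA
  refine Finset.sum_congr rfl fun b _ => ?_
  congr 1
  refine Finset.sum_congr rfl fun i _ => ?_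
  rw [h (e (0, i)) (e (1, b.1)) (he.ne (by simp)), h (e (0, i)) (e (1, b.2)) (he.ne (by simp))]

lemma tv_term_le {Ω : Type*} [MeasurableSpace Ω] (μ ν : Measure Ω) [IsProbabilityMeasure μ] [IsProbabilityMeasure ν] (s : Set Ω) :
    |(μ s).toReal - (ν s).toReal| ≤ 1 := by
  have h1 : (μ s).toReal ≤ 1 := measureReal_le_one
  have h2 : (ν s).toReal ≤ 1 := measureReal_le_one
  have h3 : 0 ≤ (μ s).toReal := ENNReal.toReal_nonneg
  have h4 : 0 ≤ (ν s).toReal := ENNReal.toReal_nonneg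
  rw [abs_le]; constructor <;> linarith

lemma tv_le_one {Ω : Type*} [MeasurableSpace Ω] (μ ν : Measure Ω) [IsProbabilityMeasure μ] [IsProbabilityMeasure ν] :
    tvDist μ ν ≤ 1 := by
  unfold tvDist
  have : Nonempty {s : Set Ω // MeasurableSet s} := ⟨⟨∅, MeasurableSet.empty⟩⟩
  exact ciSup_le fun s => tv_term_le μ ν s.1

lemma tv_ge {Ω : Type*} [MeasurableSpace Ω] (μ ν : Measure Ω) [IsProbabilityMeasure μ] [IsProbabilityMeasure ν]
    {s : Set Ω} (hs : MeasurableSet s) {a b : ℝ} (ha : μ.real s ≤ a) (hb : ν.real sᶜ ≤ b) : 1 - (a + b) ≤ tvDist μ ν := by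
  have h := le_ciSup (f := fun s : {s : Set Ω // MeasurableSet s} => |(μ s.1).toReal - (ν s.1).toReal|)
    ⟨1, by rintro _ ⟨s, rfl⟩; exact tv_term_le μ ν s.1⟩ ⟨s, hs⟩
  have h2 : ν.real sᶜ = 1 - ν.real s := by rw [measureReal_compl hs]; simp
  unfold tvDist
  refine le_trans ?_ h
  have h3 := neg_abs_le (μ.real s - ν.real s)
  simp only [Measure.real] at *
  linarith

lemma cheb {Ω : Type*} [MeasurableSpace Ω] {μ : Measure Ω} [IsProbabilityMeasure μ] {X : Ω → ℝ} (hX : MemLp X 2 μ)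
    {c V : ℝ} (hc : 0 < c) (hE : 2 * c ≤ ∫ x, X x ∂μ) (hV : Var[X; μ] ≤ V) {s : Set Ω} (hs : ∀ x ∈ s, X x < c) :
    μ.real s ≤ V / c ^ 2 := by
  have h := meas_ge_le_variance_div_sq hX hc
  have h1 : μ s ≤ ENNReal.ofReal (V / c ^ 2) := by
    refine (measure_mono fun x hx => ?_).trans (h.trans (ENNReal.ofReal_le_ofReal (by gcongr)))
    have := hs x hx
    simp only [Set.mem_setOf_eq]
    rw [abs_sub_comm]
    exact le_trans (by linarith) (le_abs_self _)
  have hV0 : 0 ≤ V / c ^ 2 := div_nonneg ((variance_nonneg _ _).trans hV) (sq_nonneg _)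
  exact ENNReal.toReal_le_of_le_ofReal hV0 h1

lemma markov {Ω : Type*} [MeasurableSpace Ω] {μ : Measure Ω} [IsProbabilityMeasure μ] {X : Ω → ℝ} (hX : Integrable X μ)
    (h0 : ∀ x, 0 ≤ X x) {c V : ℝ} (hc : 0 < c) (hE : ∫ x, X x ∂μ ≤ V) {s : Set Ω} (hs : ∀ x ∈ s, c ≤ X x) :
    μ.real s ≤ V / c := by
  have h := mul_meas_ge_le_integral_of_nonneg (ae_of_all _ h0) hX c
  have h1 : μ.real s ≤ μ.real {x | c ≤ X x} := measureReal_mono (fun x hx => hs x hx)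
  rw [le_div_iff₀ hc]
  calc μ.real s * c ≤ μ.real {x | c ≤ X x} * c := by gcongr
    _ = c * μ.real {x | c ≤ X x} := mul_comm _ _
    _ ≤ V := h.trans hE

lemma er_real {n : ℕ} {p : ℝ} (s : Set (SimpleGraph (Fin n))) :
    (erGraph n p).real s = (Measure.pi fun _ : Sym2 (Fin n) => volume.restrict (Set.Icc (0 : ℝ) 1)).real
      {x | (SimpleGraph.fromRel fun i j => x s(i, j) ≤ p) ∈ s} := by
  unfold erGraph
  rw [map_measureReal_apply (er_meas n p) trivial]; rfl

lemma geo_real {n d : ℕ} {α : Fin d → ℝ} {t : ℝ} (s : Set (SimpleGraph (Fin n))) :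
    (geomGraph n d α t).real s = (Measure.pi fun _ : Fin n => gaussPi d α).real
      {X | (SimpleGraph.fromRel fun i j => t ≤ dotp (X i) (X j)) ∈ s} := by
  unfold geomGraph
  rw [map_measureReal_apply (geo_meas n d t) trivial]; rfl

lemma tv_one {n N d : ℕ} (hN : 0 < N) {e : Fin 3 × Fin N → Fin n} (he : Function.Injective e) {p : ℝ} (h0 : 0 ≤ p) (h1 : p ≤ 1)
    {α : Fin d → ℝ} {t m q : ℝ} (hm : 0 < m) (hmm : m ≤ mm α p t)
    (hq : ∫ xy, hk α p t xy.1 xy.2 ^ 2 ∂((gaussPi d α).prod (gaussPi d α)) ≤ q) :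
    1 - ((N : ℝ) ^ 3 / ((N : ℝ) ^ 3 * m / 2) ^ 2 + (3 * (N : ℝ) ^ 5 * q + (N : ℝ) ^ 3) / ((N : ℝ) ^ 3 * m / 2) ^ 2) ≤
      tvDist (erGraph n p) (geomGraph n d α t) := by
  have hN' : (0 : ℝ) < N := by exact_mod_cast hN
  have hc : 0 < (N : ℝ) ^ 3 * m / 2 := by positivity
  have hKm : Measurable (Function.uncurry (kern p t : (Fin d → ℝ) → (Fin d → ℝ) → ℝ)) := ker_meas p t
  have hK1 : ∀ x y : Fin d → ℝ, |kern p t x y| ≤ 1 := fun x y => ker_abs_le h0 h1 t x y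
  refine tv_ge _ _ (s := {G | (N : ℝ) ^ 3 * m / 2 ≤ TA e (Mg p G)}) trivial ?_ ?_
  · rw [er_real]
    obtain ⟨hi, hE⟩ := TA_er (ι := Fin n) _ (Mer_meas p) (Mer_abs h0 h1) (Mer_int h0 h1) he
    refine markov hi (fun x => sq_nonneg _) (by positivity) hE fun x hx => ?_
    simp only [Set.mem_setOf_eq] at hx
    rw [TA_congr he (fun u v h => Mg_er p x h)] at hx
    exact pow_le_pow_left₀ hc.le hx 2
  · rw [geo_real]
    have hmean := T_mean (ι := Fin n) (gaussPi d α) hKm hK1 he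
    have hvar := T_var (ι := Fin n) (gaussPi d α) hKm hK1 (ker_comm p t) he
    have hM : mm α p t = ∫ x, ∫ y, kern p t x y * hka (gaussPi d α) (kern p t) x y ∂(gaussPi d α) ∂(gaussPi d α) := by
      unfold mm
      exact integral_prod (fun xy : (Fin d → ℝ) × (Fin d → ℝ) => kern p t xy.1 xy.2 * hk α p t xy.1 xy.2)
        (Integrable.of_bound ((ker_meas p t).mul (hk_meas α p t)).aestronglyMeasurable 1 (ae_of_all _ fun x => by
        rw [norm_mul]; exact mul_le_one₀ (hK1 _ _) (norm_nonneg _) (hk_abs_le α h0 h1 t _ _)))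
    have hQ : ∫ xy, hk α p t xy.1 xy.2 ^ 2 ∂((gaussPi d α).prod (gaussPi d α)) =
        ∫ x, ∫ y, hka (gaussPi d α) (kern p t) x y ^ 2 ∂(gaussPi d α) ∂(gaussPi d α) := by
      rw [integral_prod _ (Integrable.of_bound ((hk_meas α p t).pow_const 2).aestronglyMeasurable 1 (ae_of_all _ fun x => by
        rw [norm_pow]; exact pow_le_one₀ (norm_nonneg _) (hk_abs_le α h0 h1 t _ _)))]
      rfl
    rw [← hM] at hmean
    rw [← hQ] at hvar
    refine cheb (T_memLp (ι := Fin n) (gaussPi d α) hKm hK1 e) hc ?_ (hvar.trans (by gcongr)) fun X hX => ?_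
    · rw [hmean]
      have : (N : ℝ) ^ 3 * m ≤ (N : ℝ) ^ 3 * mm α p t := by gcongr
      linarith
    · simp only [Set.mem_compl_iff, Set.mem_setOf_eq, not_le] at hX
      rw [TA_congr he (fun u v h => Mg_geo p t X h)] at hX
      exact hX

lemma tv_two {n N d : ℕ} (hN : 0 < N) {e : Fin 3 × Fin N → Fin n} (he : Function.Injective e) {p : ℝ} (h0 : 0 ≤ p) (h1 : p ≤ 1)
    {α : Fin d → ℝ} {t β : ℝ} (hβ : 0 < β) {f : (Fin d → ℝ) → ℝ} (hf : Measurable f) (hf1 : ∀ x, |f x| ≤ 1)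
    (hb : β ≤ ∫ xy, kern p t xy.1 xy.2 * (f xy.1 * f xy.2) ∂((gaussPi d α).prod (gaussPi d α))) :
    1 - (2 * (N : ℝ) ^ 3 / ((β / 2) ^ 4 * (N : ℝ) ^ 4) + 2 * (N : ℝ) ^ 3 / ((N : ℝ) ^ 2 * β / 2) ^ 2) ≤
      tvDist (erGraph n p) (geomGraph n d α t) := by
  have hN' : (0 : ℝ) < N := by exact_mod_cast hN
  have hc : 0 < (N : ℝ) ^ 2 * β / 2 := by positivity
  set K : (Fin d → ℝ) → (Fin d → ℝ) → ℝ := fun x y => kern p t x y * (f x * f y) with hK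
  have hKm : Measurable (Function.uncurry K) :=
    (ker_meas p t).mul ((hf.comp measurable_fst).mul (hf.comp measurable_snd))
  have hK1 : ∀ x y : Fin d → ℝ, |K x y| ≤ 1 := fun x y => by
    rw [hK, abs_mul, abs_mul]
    exact mul_le_one₀ (ker_abs_le h0 h1 t x y) (by positivity) (mul_le_one₀ (hf1 _) (abs_nonneg _) (hf1 _))
  refine tv_ge _ _ (s := {G | (β / 2) ^ 4 * (N : ℝ) ^ 4 ≤ WA e (Mg p G)}) trivial ?_ ?_
  · rw [er_real]
    obtain ⟨hi, hE⟩ := WA_er (ι := Fin n) _ (Mer_meas p) (Mer_abs h0 h1) (Mer_int h0 h1) he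
    refine markov hi (fun x => Finset.sum_nonneg fun b _ => sq_nonneg _) (by positivity) hE fun x hx => ?_
    simp only [Set.mem_setOf_eq] at hx
    rwa [WA_congr he (fun u v h => Mg_er p x h)] at hx
  · rw [geo_real]
    have hmean := U_mean (ι := Fin n) (gaussPi d α) hKm hK1 he
    have hvar := U_var (ι := Fin n) (gaussPi d α) hKm hK1 he
    have hM : ∫ xy, kern p t xy.1 xy.2 * (f xy.1 * f xy.2) ∂((gaussPi d α).prod (gaussPi d α)) =
        ∫ x, ∫ y, K x y ∂(gaussPi d α) ∂(gaussPi d α) := by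
      exact integral_prod (Function.uncurry K) (Integrable.of_bound hKm.aestronglyMeasurable 1 (ae_of_all _ fun x => hK1 _ _))
    rw [← hM] at hmean
    refine cheb (U_memLp (ι := Fin n) (gaussPi d α) hKm hK1 e) hc ?_ hvar fun X hX => ?_
    · rw [hmean]
      have := mul_le_mul_of_nonneg_left hb (sq_nonneg (N : ℝ))
      linarith
    · simp only [Set.mem_compl_iff, Set.mem_setOf_eq, not_le] at hX
      rw [WA_congr he (fun u v h => Mg_geo p t X h)] at hX
      have hl := WA_lower e (fun u v => kern p t (X u) (X v)) (fun u => f (X u)) (fun u => hf1 _)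
      by_contra hcon
      push Not at hcon
      have h4 : ((N : ℝ) ^ 2 * β / 2) ^ 4 ≤ (Ust K e X) ^ 4 := pow_le_pow_left₀ hc.le hcon 4
      have h5 : (Ust K e X) ^ 4 ≤ (N : ℝ) ^ 4 * WA e (fun u v => kern p t (X u) (X v)) := hl
      have h6 := mul_lt_mul_of_pos_left hX (pow_pos hN' 4)
      have h7 : ((N : ℝ) ^ 2 * β / 2) ^ 4 = (N : ℝ) ^ 4 * ((β / 2) ^ 4 * (N : ℝ) ^ 4) := by ring
      linarith

lemma gauss_scale {d : ℕ} {α : Fin d → ℝ} (r : ℝ) :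
    (gaussPi d fun i => r ^ 2 * α i) = Measure.map (fun x i => r * x i) (gaussPi d α) := by
  unfold gaussPi
  rw [Measure.pi_map_pi (f := fun _ x => r * x) (fun i => by fun_prop)]
  congr 1
  ext1 i
  rw [gaussianReal_map_const_mul, mul_zero]
  congr 1
  rw [Real.toNNReal_mul (sq_nonneg _)]
  congr 1
  ext; simp [sq_nonneg]

lemma dotp_scale {d : ℕ} (r : ℝ) (x y : Fin d → ℝ) : dotp (fun i => r * x i) (fun i => r * y i) = r ^ 2 * dotp x y := by
  unfold dotp; rw [Finset.mul_sum]; refine Finset.sum_congr rfl fun i _ => by ring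

lemma thr_scale {d : ℕ} {α : Fin d → ℝ} {p t r : ℝ} (hr : 0 < r) (h : IsThreshold d α p t) :
    IsThreshold d (fun i => r ^ 2 * α i) p (r ^ 2 * t) := by
  unfold IsThreshold at *
  have hm : Measurable (fun (x : Fin d → ℝ) i => r * x i) := by fun_prop
  rw [gauss_scale, Measure.map_prod_map _ _ hm hm, Measure.map_apply (hm.prodMap hm) (measurableSet_le measurable_const dotp_meas), ← h]
  congr 1
  ext xy
  simp only [Set.mem_preimage, Set.mem_setOf_eq, Prod.map_fst, Prod.map_snd, dotp_scale]
  exact mul_le_mul_iff_right₀ (by positivity)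

lemma geo_scale {n d : ℕ} {α : Fin d → ℝ} {t r : ℝ} (hr : 0 < r) :
    geomGraph n d (fun i => r ^ 2 * α i) (r ^ 2 * t) = geomGraph n d α t := by
  unfold geomGraph sampleMeasure
  have hm : Measurable (fun (x : Fin d → ℝ) i => r * x i) := by fun_prop
  have : IsProbabilityMeasure (Measure.map (fun (x : Fin d → ℝ) i => r * x i) (gaussPi d α)) :=
    Measure.isProbabilityMeasure_map hm.aemeasurable
  have : (Measure.pi fun _ : Fin n => gaussPi d fun i => r ^ 2 * α i) =
      Measure.map (fun X k i => r * X k i) (Measure.pi fun _ : Fin n => gaussPi d α) := by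
    rw [gauss_scale]
    rw [Measure.pi_map_pi (f := fun _ (x : Fin d → ℝ) i => r * x i) (fun i => hm.aemeasurable)]
  rw [this, Measure.map_map (geo_meas n d _) (by fun_prop)]
  congr 1
  ext X
  simp only [Function.comp_apply, dotp_scale, SimpleGraph.fromRel_adj]
  have hr2 : 0 < r ^ 2 := by positivity
  simp only [mul_le_mul_iff_right₀ hr2]


lemma s4_le {d : ℕ} {α : Fin d → ℝ} (hα : ∀ i, 0 ≤ α i) : (∑ i, α i ^ 4) ^ 3 ≤ (∑ i, α i ^ 3) ^ 4 := by
  have h3 : 0 ≤ ∑ i, α i ^ 3 := Finset.sum_nonneg fun i _ => pow_nonneg (hα i) 3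
  rcases isEmpty_or_nonempty (Fin d) with he | he
  · simp
  obtain ⟨i0, hi0⟩ := Finite.exists_max α
  have h4 : ∑ i, α i ^ 4 ≤ α i0 * ∑ i, α i ^ 3 := by
    rw [Finset.mul_sum]
    refine Finset.sum_le_sum fun i _ => ?_
    have := mul_le_mul_of_nonneg_right (hi0 i) (pow_nonneg (hα i) 3)
    calc α i ^ 4 = α i * α i ^ 3 := by ring
      _ ≤ _ := this
  have h5 : α i0 ^ 3 ≤ ∑ i, α i ^ 3 := Finset.single_le_sum (f := fun i => α i ^ 3) (fun i _ => pow_nonneg (hα i) 3) (Finset.mem_univ i0)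
  have h40 : 0 ≤ ∑ i, α i ^ 4 := Finset.sum_nonneg fun i _ => pow_nonneg (hα i) 4
  calc (∑ i, α i ^ 4) ^ 3 ≤ (α i0 * ∑ i, α i ^ 3) ^ 3 := pow_le_pow_left₀ h40 h4 3
    _ = α i0 ^ 3 * (∑ i, α i ^ 3) ^ 3 := by ring
    _ ≤ (∑ i, α i ^ 3) * (∑ i, α i ^ 3) ^ 3 := by gcongr
    _ = _ := by ring

lemma s_pos {d : ℕ} {α : Fin d → ℝ} (hα : ∀ i, 0 ≤ α i) (h : ∃ i, α i ≠ 0) (k : ℕ) : 0 < ∑ i, α i ^ k := by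
  obtain ⟨i, hi⟩ := h
  exact Finset.sum_pos' (fun i _ => pow_nonneg (hα i) k) ⟨i, Finset.mem_univ i, pow_pos (lt_of_le_of_ne (hα i) (Ne.symm hi)) k⟩

lemma main_bound {p : ℝ} (hp : p ∈ Set.Ioo (0 : ℝ) 1) : ∃ C > 0, ∀ (n N d : ℕ) (α : Fin d → ℝ) (t z : ℝ), 0 < N → 3 * N ≤ n →
    (∀ i, 0 ≤ α i) → ∑ i, α i ^ 2 = 1 → IsThreshold d α p t → 0 ≤ z → 1 / ((N : ℝ) ^ 3 * (∑ i, α i ^ 3) ^ 2) ≤ z ^ 3 →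
    1 - C * (1 / N + z ^ 3 + z) ≤ tvDist (erGraph n p) (geomGraph n d α t) := by
  obtain ⟨ε, hε, c, hc, C, hC, H1⟩ := regime_one hp
  obtain ⟨β, hβ, H2⟩ := regime_two hp hε
  refine ⟨4 / c ^ 2 * (2 + 3 * C) + (32 / β ^ 4 + 8 / β ^ 2), by positivity, ?_⟩
  intro n N d α t z hN hn hα h2 ht hz hx
  have hN' : (0 : ℝ) < N := by exact_mod_cast hN
  obtain ⟨e⟩ : Nonempty (Fin 3 × Fin N ↪ Fin n) := Function.Embedding.nonempty_of_card_le (by simpa using hn)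
  have hne : ∃ i, α i ≠ 0 := by
    by_contra hcon
    push Not at hcon
    simp [hcon] at h2
  have h3 := s_pos hα hne 3
  set s3 := ∑ i, α i ^ 3
  have h4 := s_pos hα hne 4
  have h43 : (∑ i, α i ^ 4) ^ 3 ≤ s3 ^ 4 := s4_le hα
  set s4 := ∑ i, α i ^ 4
  obtain ⟨hq, hm⟩ := H1 d α t hα h2 ht
  by_cases hall : ∀ i, α i ≤ ε
  · have hy : s4 / (N * s3 ^ 2) ≤ z := by
      have hy0 : 0 ≤ s4 / (N * s3 ^ 2) := by positivity
      refine le_of_pow_le_pow_left₀ (n := 3) (by norm_num) hz (le_trans ?_ hx)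
      rw [div_pow, div_le_div_iff₀ (by positivity) (by positivity)]
      calc s4 ^ 3 * ((N : ℝ) ^ 3 * s3 ^ 2) ≤ s3 ^ 4 * ((N : ℝ) ^ 3 * s3 ^ 2) := by gcongr
        _ = 1 * (N * s3 ^ 2) ^ 3 := by ring
    have h := tv_one hN e.injective hp.1.le hp.2.le (by positivity : 0 < c * s3) (hm hall) hq
    refine le_trans ?_ h
    have e1 : (N : ℝ) ^ 3 / ((N : ℝ) ^ 3 * (c * s3) / 2) ^ 2 + (3 * (N : ℝ) ^ 5 * (C * s4) + (N : ℝ) ^ 3) / ((N : ℝ) ^ 3 * (c * s3) / 2) ^ 2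
        = 4 / c ^ 2 * (2 * (1 / ((N : ℝ) ^ 3 * s3 ^ 2)) + 3 * C * (s4 / (N * s3 ^ 2))) := by
      field_simp; ring
    rw [e1]
    have e2 : 4 / c ^ 2 * (2 * (1 / ((N : ℝ) ^ 3 * s3 ^ 2)) + 3 * C * (s4 / (N * s3 ^ 2))) ≤ 4 / c ^ 2 * (2 * z ^ 3 + 3 * C * z) := by
      gcongr
    have e3 : 4 / c ^ 2 * (2 * z ^ 3 + 3 * C * z) ≤ 4 / c ^ 2 * (2 + 3 * C) * (1 / N + z ^ 3 + z) := by
      rw [mul_assoc (4 / c ^ 2) (2 + 3 * C)]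
      apply mul_le_mul_of_nonneg_left _ (by positivity)
      have a1 : 0 ≤ 2 * z := by positivity
      have a2 : 0 ≤ 3 * C * z ^ 3 := by positivity
      have a3 : 0 ≤ (2 + 3 * C) * (1 / (N : ℝ)) := by positivity
      linear_combination a1 + a2 + a3
    have e4 : 0 ≤ (32 / β ^ 4 + 8 / β ^ 2) * (1 / N + z ^ 3 + z) := by positivity
    rw [add_mul]
    linarith
  · push Not at hall
    obtain ⟨i, hi⟩ := hall
    obtain ⟨f, hf, hf1, hb⟩ := H2 d α t hα h2 ht i hi.le
    have h := tv_two hN e.injective hp.1.le hp.2.le hβ hf hf1 hb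
    refine le_trans ?_ h
    have e1 : 2 * (N : ℝ) ^ 3 / ((β / 2) ^ 4 * (N : ℝ) ^ 4) + 2 * (N : ℝ) ^ 3 / ((N : ℝ) ^ 2 * β / 2) ^ 2
        = (32 / β ^ 4 + 8 / β ^ 2) * (1 / N) := by
      field_simp; ring
    rw [e1]
    have e2 : (32 / β ^ 4 + 8 / β ^ 2) * (1 / (N : ℝ)) ≤ (32 / β ^ 4 + 8 / β ^ 2) * (1 / N + z ^ 3 + z) := by
      apply mul_le_mul_of_nonneg_left _ (by positivity)
      have : 0 ≤ z ^ 3 := by positivity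
      linarith
    have e3 : 0 ≤ 4 / c ^ 2 * (2 + 3 * C) * (1 / N + z ^ 3 + z) := by positivity
    rw [add_mul]
    linarith

lemma thr_ne {p : ℝ} (hp : p ∈ Set.Ioo (0 : ℝ) 1) {d : ℕ} {α : Fin d → ℝ} {t : ℝ} (ht : IsThreshold d α p t) : ∃ i, α i ≠ 0 := by
  by_contra hcon
  push Not at hcon
  have h0 : gaussPi d α = Measure.dirac 0 := by
    have := gauss_scale (α := α) 0
    have h1 : (fun i => (0 : ℝ) ^ 2 * α i) = α := by ext i; simp [hcon i]
    rw [h1] at this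
    rw [this]
    have h2 : (fun (x : Fin d → ℝ) i => (0 : ℝ) * x i) = fun _ => 0 := by ext x i; simp
    rw [h2, Measure.map_const]; simp
  unfold IsThreshold at ht
  rw [h0, Measure.dirac_prod_dirac, Measure.dirac_apply' _ (measurableSet_le measurable_const dotp_meas)] at ht
  rw [Set.indicator_apply] at ht
  split_ifs at ht
  · simp only [Pi.one_apply] at ht
    have := hp.2
    have h3 : ENNReal.ofReal p < 1 := by rw [ENNReal.ofReal_lt_one]; exact this
    rw [← ht] at h3
    exact lt_irrefl _ h3
  · have := ENNReal.ofReal_pos.2 hp.1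
    rw [← ht] at this
    exact lt_irrefl _ this

lemma main_bound2 {p : ℝ} (hp : p ∈ Set.Ioo (0 : ℝ) 1) : ∃ C > 0, ∀ (n d : ℕ) (α : Fin d → ℝ) (t : ℝ), 3 ≤ n →
    (∀ i, 0 ≤ α i) → IsThreshold d α p t →
    1 - C * (6 / n + 216 * ((nrm 2 α / nrm 3 α) ^ 6 / (n : ℝ) ^ 3) + 6 * ((nrm 2 α / nrm 3 α) ^ 6 / (n : ℝ) ^ 3) ^ ((1 : ℝ) / 3)) ≤
      tvDist (erGraph n p) (geomGraph n d α t) := by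
  obtain ⟨C, hC, H⟩ := main_bound hp
  refine ⟨C, hC, fun n d α t hn hα ht => ?_⟩
  have hne := thr_ne hp ht
  have h2 := s_pos hα hne 2
  have h3 := s_pos hα hne 3
  have hn2 : nrm 2 α ^ 6 = (∑ i, α i ^ 2) ^ 3 := by
    unfold nrm
    rw [← Real.rpow_natCast, ← Real.rpow_mul h2.le, ← Real.rpow_natCast]
    norm_num
  have hn3 : nrm 3 α ^ 6 = (∑ i, α i ^ 3) ^ 2 := by
    unfold nrm
    rw [← Real.rpow_natCast, ← Real.rpow_mul h3.le, ← Real.rpow_natCast]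
    norm_num
  rw [div_pow, hn2, hn3]
  set S2 := ∑ i, α i ^ 2
  set S3 := ∑ i, α i ^ 3
  set r := √(1 / √S2) with hr
  have hs : 0 < √S2 := Real.sqrt_pos.2 h2
  have hr0 : 0 < r := Real.sqrt_pos.2 (by positivity)
  have hr2 : r ^ 2 = 1 / √S2 := Real.sq_sqrt (by positivity)
  have hr4 : r ^ 4 * S2 = 1 := by
    have : r ^ 4 = 1 / S2 := by
      calc r ^ 4 = (r ^ 2) ^ 2 := by ring
        _ = 1 / S2 := by rw [hr2, div_pow, Real.sq_sqrt h2.le, one_pow]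
    rw [this]; field_simp
  have hs2 : ∑ i, (r ^ 2 * α i) ^ 2 = 1 := by
    simp_rw [mul_pow]; rw [← Finset.mul_sum, ← hr4]; ring
  have hs3 : (∑ i, (r ^ 2 * α i) ^ 3) = r ^ 6 * S3 := by
    simp_rw [mul_pow]; rw [← Finset.mul_sum]; ring
  set N := n / 3
  have hN : 0 < N := by omega
  have hN' : (0 : ℝ) < N := by exact_mod_cast hN
  have hn0 : (0 : ℝ) < n := by exact_mod_cast (by omega : 0 < n)
  have hnN : (n : ℝ) ≤ 6 * N := by exact_mod_cast (by omega : n ≤ 6 * N)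
  set ρ := S2 ^ 3 / S3 ^ 2 / (n : ℝ) ^ 3 with hρ
  have hρ0 : 0 ≤ ρ := by positivity
  have hz3 : (6 * ρ ^ ((1 : ℝ) / 3)) ^ 3 = 216 * ρ := by
    rw [mul_pow, ← Real.rpow_natCast (ρ ^ ((1 : ℝ) / 3)), ← Real.rpow_mul hρ0]
    norm_num
  have h := H n N d (fun i => r ^ 2 * α i) (r ^ 2 * t) (6 * ρ ^ ((1 : ℝ) / 3)) hN (by omega)
    (fun i => mul_nonneg (sq_nonneg _) (hα i)) hs2 (thr_scale hr0 ht) (by positivity) (by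
      rw [hz3, hs3]
      have e1 : (r ^ 6 * S3) ^ 2 = S3 ^ 2 / S2 ^ 3 := by
        rw [eq_div_iff (by positivity)]
        calc (r ^ 6 * S3) ^ 2 * S2 ^ 3 = (r ^ 4 * S2) ^ 3 * S3 ^ 2 := by ring
          _ = S3 ^ 2 := by rw [hr4]; ring
      rw [e1, hρ]
      have e2 : 216 * (S2 ^ 3 / S3 ^ 2 / (n : ℝ) ^ 3) = 1 / (((n : ℝ) / 6) ^ 3 * (S3 ^ 2 / S2 ^ 3)) := by
        field_simp; norm_num
      rw [e2]
      have e3 : (n : ℝ) / 6 ≤ N := by linarith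
      gcongr)
  rw [geo_scale hr0, hz3] at h
  refine le_trans ?_ h
  have : 1 / (N : ℝ) ≤ 6 / n := by
    rw [div_le_div_iff₀ hN' hn0]; linarith
  gcongr

/-- Theorem 2(a). If `(‖α‖₂/‖α‖₃)⁶ / n³ → 0`, then
`TV(G(n,p), G(n,p,α)) → 1`. -/
theorem tv_tendsto_one (p : ℝ) (hp : p ∈ Set.Ioo (0 : ℝ) 1)
    (d : ℕ → ℕ) (α : (n : ℕ) → Fin (d n) → ℝ)
    (hα : ∀ n i, 0 ≤ α n i)
    (t : ℕ → ℝ) (ht : ∀ n, IsThreshold (d n) (α n) p (t n))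
    (hlim : Tendsto (fun n => (nrm 2 (α n) / nrm 3 (α n)) ^ 6 / (n : ℝ) ^ 3)
      atTop (nhds 0)) :
    Tendsto (fun n => tvDist (erGraph n p) (geomGraph n (d n) (α n) (t n)))
      atTop (nhds 1) := by
  obtain ⟨C, hC, H⟩ := main_bound2 hp
  have h1 : Tendsto (fun n : ℕ => (6 : ℝ) / n) atTop (nhds 0) := tendsto_const_div_atTop_nhds_zero_nat 6
  have h3 := hlim.rpow_const (p := (1 : ℝ) / 3) (Or.inr (by norm_num))
  rw [Real.zero_rpow (by norm_num)] at h3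
  have h4 := (((h1.add (hlim.const_mul 216)).add (h3.const_mul 6)).const_mul C).const_sub 1
  simp only [mul_zero, add_zero, sub_zero] at h4
  refine tendsto_of_tendsto_of_tendsto_of_le_of_le' h4 tendsto_const_nhds ?_ (Eventually.of_forall fun n => tv_le_one _ _)
  filter_upwards [eventually_ge_atTop 3] with n hn
  exact H n (d n) (α n) (t n) hn (hα n) (ht n)


end
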